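/- Let G be a group that is not virtually cyclic. Then G is acylindrically hyperbolic if and only if there exist a completely Hausdorff topological space M with at least 3 points, an action of G on M by homeomorphisms satisfying condition (C), and an element g ∈ G having north–south dynamics on M. -/

import Mathlib

/-! From an acylindrical action on a hyperbolic space `S` to dynamics: `M` is the Gromov boundary of
`S`, topologized by the uniformity of large Gromov products. If `g` carries two distinct boundary
points close to `u` and two others close to `v`, then the inverse of `g` carries points far out on
the way to `u` and to `v` near one fixed geodesic. By acylindricity there are finitely many such
`g`, which is condition (C). A non-elementary action contains a loxodromic element, and such an
element has north–south dynamics on the boundary.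

From dynamics to an acylindrical action: let `g` have north–south dynamics with fixed points `x` and
`y`. Condition (C) provides a neighbourhood `P` of `x` and a power `t` of `g` such that no two
translates of the wall with sides `P` and `(t • P)ᶜ` cross, and two pairs of distinct points are
separated by finitely many of these walls. The pair `{x, y}` plays the role of the axis of `t`, and
the axes are its translates. The number of walls along an axis `Y` that separate the axis `X` from
the axis `Z`, up to an additive constant, is a projection distance `d Y X Z` in the sense of
Bestvina, Bromberg and Fujiwara: it satisfies the triangle inequality, the Behrstock inequality and
a finiteness condition. The key estimate behind this is that an axis following another one for a
long time coincides with it.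

Such projection distances can be replaced by ones for which the Behrstock inequality holds in an
exact form: `d Y X Z` becomes the supremum of its values over axes indistinguishable from `X` and
`Z` as seen from `Y`. Then the graph joining `X` to `Z` when no axis sees a large distance between
them has the bottleneck property that a geodesic passes near every axis seen between its endpoints;
hence it is hyperbolic and the action on it is acylindrical, the common stabilizer of two distinct
axes being boundedly finite. As the group is not virtually cyclic, there are two distinct axes, and
high powers of `t` and of a conjugate of `t` rotate about them; their product translates along a
chain of axes, so that the limit set has at least three points. -/

/-- A geodesic segment from `u` to `v`: the image of an isometric embedding of
`[0, dist u v]` sending the endpoints to `u` and `v`. -/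
def IsGeodesicSegment {S : Type*} [MetricSpace S] (Γ : Set S) (u v : S) : Prop :=
  ∃ γ : ℝ → S, γ 0 = u ∧ γ (dist u v) = v ∧
    (∀ s ∈ Set.Icc (0 : ℝ) (dist u v), ∀ t ∈ Set.Icc (0 : ℝ) (dist u v),
      dist (γ s) (γ t) = |s - t|) ∧
    Γ = γ '' Set.Icc (0 : ℝ) (dist u v)

/-- A geodesic metric space: every pair of points is joined by a geodesic segment. -/
def GeodesicSpace (S : Type*) [MetricSpace S] : Prop :=
  ∀ u v : S, ∃ Γ : Set S, IsGeodesicSegment Γ u v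

/-- `δ`-hyperbolicity: every geodesic triangle is `δ`-slim. -/
def DeltaHyperbolic (S : Type*) [MetricSpace S] (δ : ℝ) : Prop :=
  ∀ x y z : S, ∀ Γ₁ Γ₂ Γ₃ : Set S,
    IsGeodesicSegment Γ₁ x y → IsGeodesicSegment Γ₂ y z → IsGeodesicSegment Γ₃ z x →
    ∀ p ∈ Γ₁, Metric.infDist p (Γ₂ ∪ Γ₃) ≤ δ

/-- A (left) action of a group `G` on a set `M`, given as a plain function. -/
def IsAction {G M : Type*} [Group G] (act : G → M → M) : Prop :=
  (∀ x : M, act 1 x = x) ∧ ∀ (g h : G) (x : M), act (g * h) x = act g (act h x)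

/-- An action by homeomorphisms on a topological space. -/
def IsActionByHomeos {G M : Type*} [Group G] [TopologicalSpace M] (act : G → M → M) : Prop :=
  IsAction act ∧ ∀ g : G, Continuous (act g)

/-- An action by isometries on a metric space. -/
def IsIsometricAction {G S : Type*} [Group G] [MetricSpace S] (act : G → S → S) : Prop :=
  IsAction act ∧ ∀ g : G, Isometry (act g)

theorem IsAction.injective {G M : Type*} [Group G] {act : G → M → M}
    (h : IsAction act) (g : G) : Function.Injective (act g) := by
  intro a b hab
  have h2 := congrArg (act g⁻¹) hab
  rw [← h.2 g⁻¹ g a, ← h.2 g⁻¹ g b, inv_mul_cancel, h.1, h.1] at h2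
  exact h2

/-- The Gromov product of `x` and `y` with respect to the basepoint `e`. -/
noncomputable def gprod {S : Type*} [MetricSpace S] (e x y : S) : ℝ :=
  (dist x e + dist y e - dist x y) / 2

/-- A sequence converges to infinity if its pairwise Gromov products tend to infinity. -/
def ConvToInfty {S : Type*} [MetricSpace S] (e : S) (s : ℕ → S) : Prop :=
  Filter.Tendsto (fun p : ℕ × ℕ => gprod e (s p.1) (s p.2)) Filter.atTop Filter.atTop

/-- The type of sequences in `S` converging to infinity. -/
def BSeq (S : Type*) [MetricSpace S] (e : S) := {s : ℕ → S // ConvToInfty e s}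

/-- Two sequences converging to infinity are equivalent if their mutual Gromov
products tend to infinity. -/
def bequiv {S : Type*} [MetricSpace S] (e : S) (s t : BSeq S e) : Prop :=
  Filter.Tendsto (fun n => gprod e (s.1 n) (t.1 n)) Filter.atTop Filter.atTop

/-- The Gromov boundary of `S` with respect to the basepoint `e`. -/
def GBoundary (S : Type*) [MetricSpace S] (e : S) := Quot (bequiv (S := S) e)

/-- A sequence in `S` tends to the boundary point `x`. -/
def TendstoBd {S : Type*} [MetricSpace S] (e : S) (s : ℕ → S) (x : GBoundary S e) : Prop :=
  ∃ h : ConvToInfty e s, Quot.mk _ (⟨s, h⟩ : BSeq S e) = x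

/-- The induced map on pairs. -/
def pairMap {M : Type*} (f : M → M) (p : M × M) : M × M := (f p.1, f p.2)

/-- Condition (C) for an action on a topological space. -/
def ConditionC {G M : Type*} [TopologicalSpace M] (act : G → M → M) : Prop :=
  ∀ u v : M × M, u.1 = u.2 → v.1 = v.2 → u ≠ v →
    ∃ U V : Set (M × M), IsOpen U ∧ IsOpen V ∧ u ∈ U ∧ v ∈ V ∧
      ∀ a b : M × M, a.1 ≠ a.2 → b.1 ≠ b.2 → a ≠ b →
        ∃ A B : Set (M × M), IsOpen A ∧ IsOpen B ∧ a ∈ A ∧ b ∈ B ∧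
          {g : G | (pairMap (act g) '' A ∩ U).Nonempty ∧
            (pairMap (act g) '' B ∩ V).Nonempty}.Finite

/-- Condition (C₁) for a pair of open sets `U, V`. -/
def CondC1 {G M : Type*} [TopologicalSpace M] (act : G → M → M) (U V : Set M) : Prop :=
  ∀ p q : M, p ≠ q →
    ∃ A B : Set M, IsOpen A ∧ IsOpen B ∧ p ∈ A ∧ q ∈ B ∧
      {g : G | (act g '' A ∩ U).Nonempty ∧ (act g '' A ∩ V).Nonempty ∧
        (act g '' B ∩ U).Nonempty ∧ (act g '' B ∩ V).Nonempty}.Finite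

/-- Condition (C₂) for a pair of open sets `U, V`. -/
def CondC2 {G M : Type*} [TopologicalSpace M] (act : G → M → M) (U V : Set M) : Prop :=
  ∀ p q r : M, p ≠ q → q ≠ r → p ≠ r →
    ∃ A B C : Set M, IsOpen A ∧ IsOpen B ∧ IsOpen C ∧ p ∈ A ∧ q ∈ B ∧ r ∈ C ∧
      {g : G | (act g '' A ∩ U).Nonempty ∧ (act g '' B ∩ V).Nonempty ∧
        (act g '' C ∩ U).Nonempty ∧ (act g '' C ∩ V).Nonempty}.Finite

/-- Condition (C₃) for a pair of open sets `U, V`. -/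
def CondC3 {G M : Type*} [TopologicalSpace M] (act : G → M → M) (U V : Set M) : Prop :=
  ∀ p q r s : M, p ≠ q → p ≠ r → p ≠ s → q ≠ r → q ≠ s → r ≠ s →
    ∃ A B C D : Set M, IsOpen A ∧ IsOpen B ∧ IsOpen C ∧ IsOpen D ∧
      p ∈ A ∧ q ∈ B ∧ r ∈ C ∧ s ∈ D ∧
      {g : G | (act g '' A ∩ U).Nonempty ∧ (act g '' B ∩ U).Nonempty ∧
        (act g '' C ∩ V).Nonempty ∧ (act g '' D ∩ V).Nonempty}.Finite

/-- Two points `x, y` satisfy (C₁): some open sets `U ∋ x`, `V ∋ y` satisfy (C₁). -/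
def PairC1 {G M : Type*} [TopologicalSpace M] (act : G → M → M) (x y : M) : Prop :=
  ∃ U V : Set M, IsOpen U ∧ IsOpen V ∧ x ∈ U ∧ y ∈ V ∧ CondC1 (G := G) act U V

/-- Two points `x, y` satisfy (C₂). -/
def PairC2 {G M : Type*} [TopologicalSpace M] (act : G → M → M) (x y : M) : Prop :=
  ∃ U V : Set M, IsOpen U ∧ IsOpen V ∧ x ∈ U ∧ y ∈ V ∧ CondC2 (G := G) act U V

/-- Two points `x, y` satisfy (C₃). -/
def PairC3 {G M : Type*} [TopologicalSpace M] (act : G → M → M) (x y : M) : Prop :=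
  ∃ U V : Set M, IsOpen U ∧ IsOpen V ∧ x ∈ U ∧ y ∈ V ∧ CondC3 (G := G) act U V

/-- `g` has north–south dynamics on `M` with fixed points `x ≠ y`. -/
def NorthSouthAt {G M : Type*} [Group G] [TopologicalSpace M] (act : G → M → M)
    (g : G) (x y : M) : Prop :=
  x ≠ y ∧ (∀ z : M, act g z = z ↔ z = x ∨ z = y) ∧
  ∀ U V : Set M, IsOpen U → IsOpen V → x ∈ U → y ∈ V →
    ∃ N : ℕ, ∀ n : ℕ, N < n → act (g ^ n) '' Uᶜ ⊆ V

/-- `g` has north–south dynamics on `M`. -/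
def NorthSouth {G M : Type*} [Group G] [TopologicalSpace M] (act : G → M → M) (g : G) : Prop :=
  ∃ x y : M, NorthSouthAt act g x y

/-- A completely Hausdorff space: distinct points are separated by open sets with
disjoint closures. -/
def CompletelyHausdorff (M : Type*) [TopologicalSpace M] : Prop :=
  ∀ u v : M, u ≠ v → ∃ U V : Set M, IsOpen U ∧ IsOpen V ∧ u ∈ U ∧ v ∈ V ∧
    closure U ∩ closure V = ∅

/-- An acylindrical action on a metric space. -/
def AcylindricalAction {G S : Type*} [Group G] [MetricSpace S] (act : G → S → S) : Prop :=
  ∀ ε : ℝ, 0 < ε → ∃ (R : ℝ) (N : ℕ), 0 < R ∧ 0 < N ∧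
    ∀ x y : S, R ≤ dist x y →
      {g : G | dist x (act g x) ≤ ε ∧ dist y (act g y) ≤ ε}.Finite ∧
      {g : G | dist x (act g x) ≤ ε ∧ dist y (act g y) ≤ ε}.ncard ≤ N

/-- The limit set of the action of `G` on the boundary of `S`. -/
def limitSet {G S : Type*} [Group G] [MetricSpace S] (act : G → S → S) (e : S) :
    Set (GBoundary S e) :=
  {x | ∃ (s : S) (gs : ℕ → G), TendstoBd e (fun n => act (gs n) s) x}

/-- The action is non-elementary: the limit set has at least 3 points. -/
def NonelemAction {G S : Type*} [Group G] [MetricSpace S] (act : G → S → S) (e : S) : Prop :=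
  ∃ x y z : GBoundary S e, x ∈ limitSet act e ∧ y ∈ limitSet act e ∧ z ∈ limitSet act e ∧
    x ≠ y ∧ y ≠ z ∧ x ≠ z

/-- A group is acylindrically hyperbolic if it admits a non-elementary acylindrical
isometric action on a geodesic Gromov hyperbolic space. -/
def AcylindricallyHyperbolic (G : Type*) [Group G] : Prop :=
  ∃ (S : Type) (_i : MetricSpace S) (act : G → S → S) (δ : ℝ),
    0 ≤ δ ∧ GeodesicSpace S ∧ DeltaHyperbolic S δ ∧ IsIsometricAction act ∧
    AcylindricalAction act ∧ ∃ e : S, NonelemAction act e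

/-- A group is virtually cyclic if it has a cyclic subgroup of finite index. -/
def VirtuallyCyclic (G : Type*) [Group G] : Prop :=
  ∃ H : Subgroup G, IsCyclic H ∧ H.index ≠ 0

/-! ### Gromov products and the four-point condition -/

section Hyperbolic

variable {S : Type*} [MetricSpace S]

/-- The four-point form of hyperbolicity, with additive constant `D`. -/
def FourPointHyperbolic (S : Type*) [MetricSpace S] (D : ℝ) : Prop :=
  ∀ w x y z : S, min (gprod w x y) (gprod w y z) - D ≤ gprod w x z

theorem gprod_comm (e x y : S) : gprod e x y = gprod e y x := by
  unfold gprod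
  rw [dist_comm x y, add_comm]

theorem gprod_nonneg (e x y : S) : 0 ≤ gprod e x y := by
  unfold gprod
  linarith [dist_triangle_right x y e]

theorem gprod_le_dist_left (e x y : S) : gprod e x y ≤ dist x e := by
  unfold gprod
  linarith [dist_triangle_left y e x]

theorem gprod_le_dist_right (e x y : S) : gprod e x y ≤ dist y e :=
  gprod_comm e y x ▸ gprod_le_dist_left e y x

theorem gprod_self (e x : S) : gprod e x x = dist x e := by
  simp [gprod]

theorem gprod_sub_dist_le_gprod (e x y y' : S) : gprod e x y - dist y y' ≤ gprod e x y' := by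
  unfold gprod
  linarith [dist_triangle y y' e, dist_triangle x y y']

theorem gprod_sub_dist_le_gprod_base (e e' x y : S) : gprod e x y - dist e e' ≤ gprod e' x y := by
  unfold gprod
  linarith [dist_triangle_right x e e', dist_triangle_right y e e']

theorem gprod_smul {G : Type*} [SMul G S] [IsIsometricSMul G S] (g : G) (e x y : S) :
    gprod (g • e) (g • x) (g • y) = gprod e x y := by
  simp only [gprod, dist_smul]

namespace FourPointHyperbolic

variable {D : ℝ}

theorem sub_le_gprod (h : FourPointHyperbolic S D) {w x y z : S} {r : ℝ} (hxy : r ≤ gprod w x y)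
    (hyz : r ≤ gprod w y z) : r - D ≤ gprod w x z :=
  (sub_le_sub_right (le_min hxy hyz) D).trans (h w x y z)

theorem gprod_le_or_gprod_le (h : FourPointHyperbolic S D) {w x z : S} {r : ℝ}
    (hxz : gprod w x z ≤ r) (y : S) : gprod w x y ≤ r + D ∨ gprod w y z ≤ r + D :=
  min_le_iff.1 (by linarith [h w x y z])

theorem nonneg (h : FourPointHyperbolic S D) (e : S) : 0 ≤ D := by
  simpa [gprod_self] using h e e e e

end FourPointHyperbolic

namespace IsGeodesicSegment

variable {Γ : Set S} {u v p : S}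

theorem dist_add_dist (h : IsGeodesicSegment Γ u v) (hp : p ∈ Γ) :
    dist u p + dist p v = dist u v := by
  obtain ⟨γ, h0, h1, hγ, rfl⟩ := h
  obtain ⟨t, ht, rfl⟩ := hp
  have hut := hγ 0 ⟨le_rfl, dist_nonneg⟩ t ht
  have htv := hγ t ht _ ⟨dist_nonneg, le_rfl⟩
  rw [h0] at hut
  rw [h1] at htv
  rw [hut, htv, abs_of_nonpos (by linarith [ht.1]), abs_of_nonpos (by linarith [ht.2])]
  ring

theorem exists_mem_dist_eq (h : IsGeodesicSegment Γ u v) {t : ℝ} (h0 : 0 ≤ t)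
    (h1 : t ≤ dist u v) : ∃ p ∈ Γ, dist u p = t ∧ dist p v = dist u v - t := by
  obtain ⟨γ, hγ0, -, hγ, hΓ⟩ := id h
  have hp : γ t ∈ Γ := hΓ ▸ ⟨t, ⟨h0, h1⟩, rfl⟩
  have hut := hγ 0 ⟨le_rfl, dist_nonneg⟩ t ⟨h0, h1⟩
  rw [hγ0, zero_sub, abs_neg, abs_of_nonneg h0] at hut
  exact ⟨γ t, hp, hut, by linarith [h.dist_add_dist hp]⟩

theorem dist_eq_abs_sub (h : IsGeodesicSegment Γ u v) {q : S} (hp : p ∈ Γ) (hq : q ∈ Γ) :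
    dist p q = |dist u p - dist u q| := by
  obtain ⟨γ, h0, -, hγ, rfl⟩ := h
  obtain ⟨s, hs, rfl⟩ := hp
  obtain ⟨t, ht, rfl⟩ := hq
  have hu : ∀ r ∈ Set.Icc 0 (dist u v), dist u (γ r) = r := fun r hr => by
    rw [← h0, hγ 0 ⟨le_rfl, dist_nonneg⟩ r hr, zero_sub, abs_neg, abs_of_nonneg hr.1]
  rw [hγ s hs t ht, hu s hs, hu t ht]

theorem symm (h : IsGeodesicSegment Γ u v) : IsGeodesicSegment Γ v u := by
  obtain ⟨γ, h0, h1, hγ, rfl⟩ := h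
  have hreflect : (fun t => dist u v - t) '' Set.Icc 0 (dist u v) = Set.Icc 0 (dist u v) := by
    simp
  rw [← hreflect, Set.image_image]
  refine ⟨fun t => γ (dist u v - t), by simpa using h1, by simpa [dist_comm v u] using h0, ?_,
    by rw [dist_comm v u]⟩
  intro s hs t ht
  rw [dist_comm v u] at hs ht
  rw [hγ _ ⟨by linarith [hs.2], by linarith [hs.1]⟩ _ ⟨by linarith [ht.2], by linarith [ht.1]⟩,
    sub_sub_sub_cancel_left, abs_sub_comm]

theorem left_mem (h : IsGeodesicSegment Γ u v) : u ∈ Γ := by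
  obtain ⟨γ, h0, -, -, rfl⟩ := h
  exact ⟨0, ⟨le_rfl, dist_nonneg⟩, h0⟩

theorem right_mem (h : IsGeodesicSegment Γ u v) : v ∈ Γ :=
  h.symm.left_mem

theorem exists_continuousOn (h : IsGeodesicSegment Γ u v) :
    ∃ γ : ℝ → S, ContinuousOn γ (Set.Icc 0 (dist u v)) ∧ Γ = γ '' Set.Icc 0 (dist u v) := by
  obtain ⟨γ, -, -, hγ, hΓ⟩ := h
  refine ⟨γ, Metric.continuousOn_iff.2 fun s hs ε hε => ⟨ε, hε, fun t ht hts => ?_⟩, hΓ⟩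
  rwa [hγ t ht s hs]

theorem isCompact (h : IsGeodesicSegment Γ u v) : IsCompact Γ := by
  obtain ⟨γ, hγ, rfl⟩ := h.exists_continuousOn
  exact isCompact_Icc.image_of_continuousOn hγ

theorem isPreconnected (h : IsGeodesicSegment Γ u v) : IsPreconnected Γ := by
  obtain ⟨γ, hγ, rfl⟩ := h.exists_continuousOn
  exact isPreconnected_Icc.image _ hγ

theorem exists_dist_le_of_infDist_le (h : IsGeodesicSegment Γ u v) {r : ℝ}
    (hp : Metric.infDist p Γ ≤ r) : ∃ q ∈ Γ, dist p q ≤ r := by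
  obtain ⟨q, hq, hpq⟩ := h.isCompact.exists_infDist_eq_dist ⟨u, h.left_mem⟩ p
  exact ⟨q, hq, hpq ▸ hp⟩

theorem gprod_le_dist (h : IsGeodesicSegment Γ u v) (hp : p ∈ Γ) (w : S) :
    gprod w u v ≤ dist w p := by
  unfold gprod
  linarith [h.dist_add_dist hp, dist_triangle_right u w p, dist_triangle_right v w p,
    dist_comm v p]

end IsGeodesicSegment

theorem GeodesicSpace.exists_dist_eq (hg : GeodesicSpace S) {u v : S} {t : ℝ} (h0 : 0 ≤ t)
    (h1 : t ≤ dist u v) : ∃ p, dist u p = t ∧ dist p v = dist u v - t := by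
  obtain ⟨Γ, hΓ⟩ := hg u v
  obtain ⟨p, -, hp⟩ := hΓ.exists_mem_dist_eq h0 h1
  exact ⟨p, hp⟩

namespace DeltaHyperbolic

variable {δ : ℝ} {x y z : S} {Γ Γ₁ Γ₂ Γ₃ : Set S}

theorem exists_dist_le (h : DeltaHyperbolic S δ) (h₁ : IsGeodesicSegment Γ₁ x y)
    (h₂ : IsGeodesicSegment Γ₂ y z) (h₃ : IsGeodesicSegment Γ₃ z x) {p : S} (hp : p ∈ Γ₁) :
    (∃ q ∈ Γ₂, dist p q ≤ δ) ∨ ∃ q ∈ Γ₃, dist p q ≤ δ := by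
  obtain ⟨q, hq, hpq⟩ := (h₂.isCompact.union h₃.isCompact).exists_infDist_eq_dist
    ⟨y, Or.inl h₂.left_mem⟩ p
  have hle : dist p q ≤ δ := hpq ▸ h x y z Γ₁ Γ₂ Γ₃ h₁ h₂ h₃ p hp
  exact hq.imp (⟨q, ·, hle⟩) (⟨q, ·, hle⟩)

theorem exists_mem_near_both_sides (h : DeltaHyperbolic S δ) (h0 : 0 ≤ δ)
    (h₁ : IsGeodesicSegment Γ₁ x y) (h₂ : IsGeodesicSegment Γ₂ y z)
    (h₃ : IsGeodesicSegment Γ₃ z x) :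
    ∃ p ∈ Γ₁, (∃ q ∈ Γ₂, dist p q ≤ δ) ∧ ∃ q ∈ Γ₃, dist p q ≤ δ := by
  -- The closed `δ`-neighbourhoods of `Γ₂` and of `Γ₃` cover the connected set `Γ₁`.
  obtain ⟨p, hp, hp₂, hp₃⟩ := isPreconnected_closed_iff.1 h₁.isPreconnected
    {p | Metric.infDist p Γ₂ ≤ δ} {p | Metric.infDist p Γ₃ ≤ δ}
    (isClosed_le (Metric.continuous_infDist_pt _) continuous_const)
    (isClosed_le (Metric.continuous_infDist_pt _) continuous_const)
    (fun p hp => (h.exists_dist_le h₁ h₂ h₃ hp).imp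
      (fun ⟨_, hq, hpq⟩ => (Metric.infDist_le_dist_of_mem hq).trans hpq)
      (fun ⟨_, hq, hpq⟩ => (Metric.infDist_le_dist_of_mem hq).trans hpq))
    ⟨y, h₁.right_mem, (Metric.infDist_zero_of_mem h₂.left_mem).trans_le h0⟩
    ⟨x, h₁.left_mem, (Metric.infDist_zero_of_mem h₃.right_mem).trans_le h0⟩
  exact ⟨p, hp, h₂.exists_dist_le_of_infDist_le hp₂, h₃.exists_dist_le_of_infDist_le hp₃⟩

theorem exists_mem_dist_le_gprod (h : DeltaHyperbolic S δ) (h0 : 0 ≤ δ) (hg : GeodesicSpace S)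
    (hΓ : IsGeodesicSegment Γ y z) (w : S) : ∃ p ∈ Γ, dist w p ≤ gprod w y z + 2 * δ := by
  obtain ⟨A, hA⟩ := hg z w
  obtain ⟨B, hB⟩ := hg w y
  obtain ⟨p, hp, ⟨a, ha, hpa⟩, b, hb, hpb⟩ := h.exists_mem_near_both_sides h0 hΓ hA hB
  refine ⟨p, hp, ?_⟩
  unfold gprod
  linarith [hA.dist_add_dist ha, hB.dist_add_dist hb, hΓ.dist_add_dist hp,
    dist_triangle_right p z a, dist_triangle w a p, dist_triangle w b p, dist_triangle_right y p b,
    dist_comm w a, dist_comm p a, dist_comm p b, dist_comm b y, dist_comm w y]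

theorem fourPointHyperbolic (h : DeltaHyperbolic S δ) (h0 : 0 ≤ δ) (hg : GeodesicSpace S) :
    FourPointHyperbolic S (3 * δ) := by
  intro w x y z
  obtain ⟨A, hA⟩ := hg x z
  obtain ⟨B, hB⟩ := hg z y
  obtain ⟨C, hC⟩ := hg y x
  obtain ⟨p, hp, hwp⟩ := h.exists_mem_dist_le_gprod h0 hg hA w
  rcases h.exists_dist_le hA hB hC hp with ⟨q, hq, hpq⟩ | ⟨q, hq, hpq⟩
  · linarith [hB.gprod_le_dist hq w, dist_triangle w p q, gprod_comm w z y,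
      min_le_right (gprod w x y) (gprod w y z)]
  · linarith [hC.gprod_le_dist hq w, dist_triangle w p q, gprod_comm w y x,
      min_le_left (gprod w x y) (gprod w y z)]

end DeltaHyperbolic

end Hyperbolic

/-! ### The Gromov boundary -/

section Boundary

open scoped Uniformity Topology

universe u

variable {S : Type u} [MetricSpace S] {D R R' : ℝ} {e : S} {a b c : ℕ → S}

/-- Two sequences are `R`-close, as seen from `e`, if their mutual Gromov products are eventually
at least `R`. These relations are the basic entourages of the boundary. -/
def EventuallyClose (e : S) (R : ℝ) (a b : ℕ → S) : Prop :=
  ∃ N, ∀ i, N ≤ i → ∀ j, N ≤ j → R ≤ gprod e (a i) (b j)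

namespace EventuallyClose

theorem mono (h : EventuallyClose e R a b) (hR : R' ≤ R) : EventuallyClose e R' a b :=
  h.imp fun _ hN i hi j hj => hR.trans (hN i hi j hj)

theorem symm (h : EventuallyClose e R a b) : EventuallyClose e R b a :=
  h.imp fun _ hN i hi j hj => gprod_comm e (a j) (b i) ▸ hN j hj i hi

theorem trans (hD : FourPointHyperbolic S D) (h : EventuallyClose e R a b)
    (h' : EventuallyClose e R b c) : EventuallyClose e (R - D) a c := by
  obtain ⟨N, hN⟩ := h
  obtain ⟨N', hN'⟩ := h'
  exact ⟨max N N', fun i hi j hj => hD.sub_le_gprod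
    (hN i (le_of_max_le_left hi) _ (le_max_left N N'))
    (hN' _ (le_max_right N N') j (le_of_max_le_right hj))⟩

theorem smul {G : Type*} [SMul G S] [IsIsometricSMul G S] (g : G)
    (h : EventuallyClose e R a b) : EventuallyClose e (R - dist e (g • e)) (g • a) (g • b) := by
  obtain ⟨N, hN⟩ := h
  refine ⟨N, fun i hi j hj => ?_⟩
  have hbase := gprod_sub_dist_le_gprod_base (g • e) e (g • a i) (g • b j)
  rw [gprod_smul, dist_comm] at hbase
  exact (sub_le_sub_right (hN i hi j hj) _).trans hbase

end EventuallyClose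

theorem convToInfty_iff_forall_eventuallyClose :
    ConvToInfty e a ↔ ∀ R, EventuallyClose e R a a := by
  refine Filter.tendsto_atTop.trans (forall_congr' fun R => Filter.eventually_atTop.trans ?_)
  exact ⟨fun ⟨⟨n, m⟩, h⟩ => ⟨max n m, fun i hi j hj =>
      h (i, j) ⟨le_of_max_le_left hi, le_of_max_le_right hj⟩⟩,
    fun ⟨N, h⟩ => ⟨(N, N), fun p hp => h p.1 hp.1 p.2 hp.2⟩⟩

theorem EventuallyClose.refl (a : BSeq S e) (R : ℝ) : EventuallyClose e R a.1 a.1 :=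
  convToInfty_iff_forall_eventuallyClose.1 a.2 R

theorem bequiv_of_forall_eventuallyClose {a b : BSeq S e}
    (h : ∀ R, EventuallyClose e R a.1 b.1) : bequiv e a b :=
  Filter.tendsto_atTop.2 fun R => Filter.eventually_atTop.2 <|
    (h R).imp fun _ hN i hi => hN i hi i hi

/-- The sequences converging to infinity in a hyperbolic space, as a type that carries the
uniformity of `EventuallyClose`; the constant of hyperbolicity is part of the type because the
uniformity axioms depend on it. -/
def BoundarySeq (_ : FourPointHyperbolic S D) (e : S) : Type u := BSeq S e

namespace BoundarySeq

variable {hD : FourPointHyperbolic S D}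

/-- The basis of the uniformity of `BoundarySeq` given by the relations `EventuallyClose`. -/
def entourageBasis (hD : FourPointHyperbolic S D) (e : S) :
    FilterBasis (BoundarySeq hD e × BoundarySeq hD e) where
  sets := Set.range fun R : ℝ => {p | EventuallyClose e R p.1.1 p.2.1}
  nonempty := ⟨_, 0, rfl⟩
  inter_sets := by
    rintro _ _ ⟨R, rfl⟩ ⟨R', rfl⟩
    exact ⟨_, ⟨max R R', rfl⟩, fun p hp => ⟨hp.mono (le_max_left _ _), hp.mono (le_max_right _ _)⟩⟩

instance : UniformSpace (BoundarySeq hD e) :=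
  UniformSpace.ofCore <| UniformSpace.Core.mkOfBasis (entourageBasis hD e)
    (by rintro _ ⟨R, rfl⟩ a; exact .refl a R)
    (by rintro _ ⟨R, rfl⟩; exact ⟨_, ⟨R, rfl⟩, fun p hp => hp.symm⟩)
    (by
      rintro _ ⟨R, rfl⟩
      refine ⟨_, ⟨R + D, rfl⟩, ?_⟩
      rintro ⟨a, c⟩ ⟨b, hab, hbc⟩
      exact (EventuallyClose.trans hD hab hbc).mono (by simp))

theorem hasBasis_uniformity : (𝓤 (BoundarySeq hD e)).HasBasis (fun _ : ℝ => True)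
    fun R => {p | EventuallyClose e R p.1.1 p.2.1} :=
  ⟨fun _ => ⟨by rintro ⟨_, ⟨R, rfl⟩, h⟩; exact ⟨R, trivial, h⟩,
    fun ⟨R, _, h⟩ => ⟨_, ⟨R, rfl⟩, h⟩⟩⟩

variable {G : Type*} [Group G] [MulAction G S] [IsIsometricSMul G S]

instance : MulAction G (BoundarySeq hD e) where
  smul g a := ⟨g • a.1, convToInfty_iff_forall_eventuallyClose.2 fun R =>
    ((EventuallyClose.refl a (R + dist e (g • e))).smul g).mono (by simp)⟩
  one_smul a := Subtype.ext (one_smul G a.1)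
  mul_smul g h a := Subtype.ext (mul_smul g h a.1)

instance : ContinuousConstSMul G (BoundarySeq hD e) where
  continuous_const_smul g := by
    refine UniformContinuous.continuous <|
      (hasBasis_uniformity.uniformContinuous_iff hasBasis_uniformity).2 fun R _ =>
        ⟨R + dist e (g • e), trivial, fun a b hab => ?_⟩
    exact (EventuallyClose.smul g hab).mono (by simp)

end BoundarySeq

/-- The Gromov boundary with its topology, as the separation quotient of `BoundarySeq`. -/
abbrev TopologicalBoundary (hD : FourPointHyperbolic S D) (e : S) : Type u :=
  SeparationQuotient (BoundarySeq hD e)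

namespace TopologicalBoundary

variable {hD : FourPointHyperbolic S D} {a b : BoundarySeq hD e}

theorem mk_eq_mk_iff :
    (SeparationQuotient.mk a : TopologicalBoundary hD e) = SeparationQuotient.mk b ↔
      ∀ R, EventuallyClose e R a.1 b.1 := by
  rw [SeparationQuotient.mk_eq_mk, BoundarySeq.hasBasis_uniformity.inseparable_iff_uniformity]
  simp

theorem mem_nhds_mk_iff {U : Set (TopologicalBoundary hD e)} :
    U ∈ 𝓝 (.mk a) ↔ ∃ R, ∀ b, EventuallyClose e R a.1 b.1 → .mk b ∈ U := by
  rw [← SeparationQuotient.map_mk_nhds, Filter.mem_map,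
    (nhds_basis_uniformity' BoundarySeq.hasBasis_uniformity).mem_iff]
  simp only [true_and]
  rfl

theorem exists_isOpen_forall_eventuallyClose (a : BoundarySeq hD e) (R : ℝ) :
    ∃ O : Set (TopologicalBoundary hD e), IsOpen O ∧ .mk a ∈ O ∧
      ∀ b, .mk b ∈ O → EventuallyClose e R a.1 b.1 := by
  have hmem : SeparationQuotient.mk '' {b | EventuallyClose e (R + D) a.1 b.1} ∈
      𝓝 (SeparationQuotient.mk a : TopologicalBoundary hD e) :=
    mem_nhds_mk_iff.2 ⟨R + D, fun b hb => ⟨b, hb, rfl⟩⟩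
  obtain ⟨O, hO, hopen, ha⟩ := mem_nhds_iff.1 hmem
  refine ⟨O, hopen, ha, fun b hb => ?_⟩
  obtain ⟨b', hb', hbb'⟩ := hO hb
  exact (EventuallyClose.trans hD hb' (mk_eq_mk_iff.1 hbb' _)).mono (by simp)

end TopologicalBoundary

theorem completelyHausdorff_of_t25Space (M : Type*) [TopologicalSpace M] [T25Space M] :
    CompletelyHausdorff M := fun _ _ huv =>
  let ⟨U, hu, hU, V, hv, hV, hUV⟩ := exists_open_nhds_disjoint_closure huv
  ⟨U, V, hU, hV, hu, hv, hUV.inter_eq⟩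

theorem exists_three_points_of_nonelemAction {G : Type*} [Group G] {act : G → S → S}
    (hD : FourPointHyperbolic S D) (hne : NonelemAction act e) :
    ∃ ξ η ζ : TopologicalBoundary hD e, ξ ≠ η ∧ η ≠ ζ ∧ ξ ≠ ζ := by
  obtain ⟨x, y, z, -, -, -, hxy, hyz, hxz⟩ := hne
  obtain ⟨a, rfl⟩ := Quot.exists_rep x
  obtain ⟨b, rfl⟩ := Quot.exists_rep y
  obtain ⟨c, rfl⟩ := Quot.exists_rep z
  have mk_ne_mk : ∀ {a b : BSeq S e}, Quot.mk (bequiv e) a ≠ Quot.mk (bequiv e) b →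
      (.mk a : TopologicalBoundary hD e) ≠ .mk b := fun hab h =>
    hab (Quot.sound (bequiv_of_forall_eventuallyClose (TopologicalBoundary.mk_eq_mk_iff.1 h)))
  exact ⟨.mk a, .mk b, .mk c, mk_ne_mk hxy, mk_ne_mk hyz, mk_ne_mk hxz⟩

end Boundary

/-! ### Condition (C) on the boundary -/

section BoundaryConditionC

open scoped Topology
open Filter

variable {S : Type*} [MetricSpace S] {D : ℝ}

namespace FourPointHyperbolic

variable {e e' w w' x x' z z' p q r s P W : S} {c C R κ t : ℝ}

theorem gprod_le_of_le_gprod (hD : FourPointHyperbolic S D) (h : gprod w x z ≤ c)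
    (hx : t ≤ gprod w x x') (hz : t ≤ gprod w z z') (ht : c + 2 * D < t) :
    gprod w x' z' ≤ c + 2 * D := by
  have hnn := hD.nonneg w
  by_contra! hcon
  have h₁ : min t (gprod w x' z') - D ≤ gprod w x z' :=
    hD.sub_le_gprod ((min_le_left _ _).trans hx) (min_le_right _ _)
  have h₂ : min t (gprod w x' z') - D - D ≤ gprod w x z :=
    hD.sub_le_gprod h₁ (by rw [gprod_comm w z' z]; linarith [min_le_left t (gprod w x' z')])
  linarith [lt_min ht hcon]

theorem dist_le_of_gprod_le (hD : FourPointHyperbolic S D) (h : gprod w P W ≤ c)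
    (h' : gprod w' P W ≤ c) : dist w w' ≤ |dist w P - dist w' P| + 2 * c + 2 * D := by
  have hw : min (dist w P) (dist w' P) - c ≤ gprod P w W := by
    unfold gprod at h ⊢
    linarith [dist_comm P w, dist_comm W w, dist_comm P W, min_le_left (dist w P) (dist w' P)]
  have hw' : min (dist w P) (dist w' P) - c ≤ gprod P W w' := by
    unfold gprod at h' ⊢
    linarith [dist_comm P w', dist_comm P W, min_le_right (dist w P) (dist w' P)]
  have hww' := hD.sub_le_gprod hw hw'
  unfold gprod at hww'
  linarith [max_sub_min_eq_abs (dist w' P) (dist w P), min_add_max (dist w' P) (dist w P),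
    min_comm (dist w P) (dist w' P)]

-- One of `p`, `q` and one of `r`, `s` lie behind `e` as seen from `e'`.
theorem dist_le_of_forall_gprod_le (hD : FourPointHyperbolic S D) (hpq : gprod e p q ≤ c)
    (hrs : gprod e r s ≤ c)
    (h : ∀ x ∈ ({p, q} : Set S), ∀ z ∈ ({r, s} : Set S), gprod e' x z ≤ C) :
    dist e e' ≤ C + 2 * (c + D) := by
  have choose_one : ∀ {p q}, gprod e p q ≤ c → ∃ x ∈ ({p, q} : Set S), gprod e x e' ≤ c + D := by
    intro p q hpq
    rcases hD.gprod_le_or_gprod_le hpq e' with h | h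
    · exact ⟨p, .inl rfl, h⟩
    · exact ⟨q, .inr rfl, gprod_comm e e' q ▸ h⟩
  obtain ⟨x, hx, hxe⟩ := choose_one hpq
  obtain ⟨z, hz, hze⟩ := choose_one hrs
  have hxz := h x hx z hz
  unfold gprod at hxz hxe hze
  linarith [dist_comm e e', dist_triangle_right x z e]

end FourPointHyperbolic

theorem gprod_le_of_dist_sub_le_gprod {e w x z : S} {C κ : ℝ} (h : gprod e x z ≤ C)
    (hw : dist w e - κ ≤ gprod e w x) : gprod w x z ≤ C + κ := by
  unfold gprod at *
  linarith [dist_comm w x, dist_triangle_right z w e]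

section Sequences

variable {e w P W : S} {a b a' b' u v p q r s : ℕ → S} {c C L R : ℝ}

theorem EventuallyClose.eventually (h : EventuallyClose e R a b) :
    ∀ᶠ i in atTop, ∀ᶠ j in atTop, R ≤ gprod e (a i) (b j) :=
  let ⟨N, hN⟩ := h
  eventually_atTop.2 ⟨N, fun i hi => eventually_atTop.2 ⟨N, hN i hi⟩⟩

theorem EventuallyClose.eventually_diag (h : EventuallyClose e R a b) :
    ∀ᶠ k in atTop, R ≤ gprod e (a k) (b k) :=
  let ⟨N, hN⟩ := h
  eventually_atTop.2 ⟨N, fun k hk => hN k hk k hk⟩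

theorem eventually_gprod_le_of_not_eventuallyClose (hD : FourPointHyperbolic S D)
    {a b : BSeq S e} (h : ¬ ∀ R, EventuallyClose e R a.1 b.1) :
    ∃ C, 0 ≤ C ∧ ∀ᶠ k in atTop, gprod e (a.1 k) (b.1 k) ≤ C := by
  obtain ⟨R, hR⟩ := not_forall.1 h
  have hD0 := hD.nonneg e
  obtain ⟨Na, ha⟩ := EventuallyClose.refl a (|R| + 2 * D + 1)
  obtain ⟨Nb, hb⟩ := EventuallyClose.refl b (|R| + 2 * D + 1)
  refine ⟨|R| + 2 * D, by positivity, eventually_atTop.2 ⟨max Na Nb, fun k hk => ?_⟩⟩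
  unfold EventuallyClose at hR
  push Not at hR
  obtain ⟨i, hi, j, hj, hij⟩ := hR (max Na Nb)
  exact hD.gprod_le_of_le_gprod (hij.le.trans (le_abs_self R))
    (ha i (le_of_max_le_left hi) k (le_of_max_le_left hk))
    (hb j (le_of_max_le_right hj) k (le_of_max_le_right hk)) (by linarith)

theorem not_forall_eventuallyClose (h : ∀ᶠ k in atTop, gprod e (a k) (b k) ≤ C) :
    ¬ ∀ R, EventuallyClose e R a b := fun hclose =>
  let ⟨_, hk, hk'⟩ := (h.and (hclose (C + 1)).eventually_diag).exists
  absurd (hk'.trans hk) (by linarith)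

theorem eventually_gprod_le_of_eventuallyClose (hD : FourPointHyperbolic S D)
    (h : ∀ᶠ k in atTop, gprod e (a k) (b k) ≤ C) (ha : EventuallyClose e R a a')
    (hb : EventuallyClose e R b b') (hR : C + 2 * D < R) :
    ∀ᶠ k in atTop, gprod e (a' k) (b' k) ≤ C + 2 * D := by
  filter_upwards [h, ha.eventually_diag, hb.eventually_diag] with k hk hak hbk
  exact hD.gprod_le_of_le_gprod hk hak hbk hR

theorem exists_dist_eq_eventually_le_gprod (hD : FourPointHyperbolic S D) (hg : GeodesicSpace S)
    (a : BSeq S e) {ρ : ℝ} (hρ : 0 ≤ ρ) :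
    ∃ w, dist w e = ρ ∧ ∀ᶠ k in atTop, ρ - D ≤ gprod e w (a.1 k) := by
  obtain ⟨n, hn⟩ := (EventuallyClose.refl a ρ).eventually.exists
  obtain ⟨k, hk⟩ := hn.exists
  have hlen : ρ ≤ dist e (a.1 n) := hk.trans (dist_comm e _ ▸ gprod_le_dist_left _ _ _)
  obtain ⟨w, hew, hwa⟩ := hg.exists_dist_eq hρ hlen
  refine ⟨w, dist_comm w e ▸ hew, hn.mono fun k hk => hD.sub_le_gprod (y := a.1 n) ?_ hk⟩
  unfold gprod
  linarith [dist_comm w e, dist_comm (a.1 n) e]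

theorem exists_dist_eq_le_dist (hD : FourPointHyperbolic S D) (hg : GeodesicSpace S)
    {a b : BSeq S e} (hC0 : 0 ≤ C) (h : ∀ᶠ k in atTop, gprod e (a.1 k) (b.1 k) ≤ C) {ρ : ℝ}
    (hρ : C + 3 * D < ρ) :
    ∃ x y, dist x e = ρ ∧ dist y e = ρ ∧ 2 * (ρ - (C + 2 * D)) ≤ dist x y ∧
      (∀ᶠ k in atTop, ρ - D ≤ gprod e x (a.1 k)) ∧ ∀ᶠ k in atTop, ρ - D ≤ gprod e y (b.1 k) := by
  have hD0 := hD.nonneg e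
  have hρ0 : 0 ≤ ρ := by linarith
  obtain ⟨x, hxe, hxa⟩ := exists_dist_eq_eventually_le_gprod hD hg a hρ0
  obtain ⟨y, hye, hyb⟩ := exists_dist_eq_eventually_le_gprod hD hg b hρ0
  obtain ⟨k, hk, hxk, hyk⟩ := (h.and (hxa.and hyb)).exists
  have := hD.gprod_le_of_le_gprod hk (gprod_comm e x _ ▸ hxk) (gprod_comm e y _ ▸ hyk)
    (by linarith)
  unfold gprod at this
  exact ⟨x, y, hxe, hye, by linarith, hxa, hyb⟩

variable {G : Type*} [Group G] [MulAction G S] [IsIsometricSMul G S]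

-- An element sending `p`, `q` towards `u` and `r`, `s` towards `v` moves `e` by a bounded amount;
-- hence `g⁻¹ • w` lies near the geodesic from `P` to `W` for each `w` on the way to `u`.
theorem gprod_inv_smul_le (hD : FourPointHyperbolic S D) {g : G}
    (huv : ∀ᶠ k in atTop, gprod e (u k) (v k) ≤ C)
    (hw : ∀ᶠ k in atTop, dist w e - D ≤ gprod e w (u k))
    (hpq : ∀ᶠ k in atTop, gprod e (p k) (q k) ≤ c) (hrs : ∀ᶠ k in atTop, gprod e (r k) (s k) ≤ c)
    (hP : ∀ᶠ k in atTop, L ≤ gprod e P (p k)) (hW : ∀ᶠ k in atTop, L ≤ gprod e W (r k))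
    (hup : EventuallyClose e R u (g • p)) (huq : EventuallyClose e R u (g • q))
    (hvr : EventuallyClose e R v (g • r)) (hvs : EventuallyClose e R v (g • s))
    (hwR : dist w e ≤ R) (hCR : C + 2 * D < R) (hL : 2 * C + 2 * c + 10 * D + dist w e < L) :
    gprod (g⁻¹ • w) P W ≤ C + 6 * D := by
  have cross : ∀ {x z : ℕ → S}, EventuallyClose e R u (g • x) → EventuallyClose e R v (g • z) →
      ∀ᶠ k in atTop, gprod e (g • x k) (g • z k) ≤ C + 2 * D := fun hx hz =>
    eventually_gprod_le_of_eventuallyClose hD huv hx hz hCR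
  obtain ⟨k, hwk, hup', hpq, hrs, hP, hW, hpr, hps, hqr, hqs⟩ :=
    (hw.and <| hup.eventually_diag.and <| hpq.and <| hrs.and <| hP.and <| hW.and <|
      (cross hup hvr).and <| (cross hup hvs).and <| (cross huq hvr).and (cross huq hvs)).exists
  have move : ∀ w x z : S, gprod (g⁻¹ • w) x z = gprod w (g • x) (g • z) := fun w x z => by
    rw [← gprod_smul g, smul_inv_smul]
  have hbase : dist e (g⁻¹ • e) ≤ C + 2 * D + 2 * (c + D) := by
    refine hD.dist_le_of_forall_gprod_le hpq hrs ?_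
    rintro x (rfl | rfl) z (rfl | rfl) <;> rw [move] <;> assumption
  have hew : dist e (g⁻¹ • w) ≤ C + 2 * c + 4 * D + dist w e := by
    have := dist_triangle e (g⁻¹ • e) (g⁻¹ • w)
    rw [dist_smul, dist_comm e w] at this
    linarith
  have hnear : gprod (g⁻¹ • w) (p k) (r k) ≤ C + 4 * D := by
    have hgp := hD.sub_le_gprod (r := dist w e - D) hwk
      ((sub_le_self _ (hD.nonneg e)).trans (hwR.trans hup'))
    have := gprod_le_of_dist_sub_le_gprod (κ := 2 * D) hpr
      ((by linarith : dist w e - 2 * D ≤ dist w e - D - D).trans hgp)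
    rw [move]
    linarith
  have hfar : ∀ {x z}, L ≤ gprod e z x → L - dist e (g⁻¹ • w) ≤ gprod (g⁻¹ • w) x z :=
    fun {x z} h => gprod_comm _ z x ▸
      (sub_le_sub_right h _).trans (gprod_sub_dist_le_gprod_base e (g⁻¹ • w) z x)
  have := hD.gprod_le_of_le_gprod hnear (hfar hP) (hfar hW) (by linarith)
  linarith

end Sequences

section Acylindrical

variable {G : Type*} [Group G] [MulAction G S] [IsIsometricSMul G S] {e : S}

-- The elements are sorted by the integral parts of the distances of `g⁻¹ • w`, `g⁻¹ • w'` to `P`.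
theorem finite_setOf_gprod_inv_smul_le (hD : FourPointHyperbolic S D) {w w' P W : S} {c : ℝ}
    (hfin : {g : G | dist w (g • w) ≤ 2 * c + 2 * D + 1 ∧
      dist w' (g • w') ≤ 2 * c + 2 * D + 1}.Finite) :
    {g : G | gprod (g⁻¹ • w) P W ≤ c ∧ gprod (g⁻¹ • w') P W ≤ c}.Finite := by
  have dist_le : ∀ w, gprod w P W ≤ c → dist w P ≤ dist P W + 2 * c := by
    intro w hw
    unfold gprod at hw
    linarith [dist_comm P w, dist_nonneg (x := W) (y := w)]
  have smul_dist_le : ∀ {g g₀ : G} {w}, gprod (g⁻¹ • w) P W ≤ c → gprod (g₀⁻¹ • w) P W ≤ c →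
      ⌊dist (g⁻¹ • w) P⌋₊ = ⌊dist (g₀⁻¹ • w) P⌋₊ →
      dist w ((g * g₀⁻¹) • w) ≤ 2 * c + 2 * D + 1 := by
    intro g g₀ w hg hg₀ hfloor
    have habs : |dist (g⁻¹ • w) P - dist (g₀⁻¹ • w) P| ≤ 1 := by
      refine (Int.abs_sub_lt_one_of_floor_eq_floor ?_).le
      rw [← Int.natCast_floor_eq_floor dist_nonneg, ← Int.natCast_floor_eq_floor dist_nonneg,
        hfloor]
    have := hD.dist_le_of_gprod_le hg hg₀
    rw [← dist_smul g, smul_inv_smul, ← mul_smul] at this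
    linarith
  refine Set.Finite.of_finite_fibers
    (fun g => (⌊dist (g⁻¹ • w) P⌋₊, ⌊dist (g⁻¹ • w') P⌋₊)) ?_ ?_
  · refine ((Set.finite_Iic ⌊dist P W + 2 * c⌋₊).prod
      (Set.finite_Iic ⌊dist P W + 2 * c⌋₊)).subset ?_
    rintro _ ⟨g, hg, rfl⟩
    exact ⟨Nat.floor_mono (dist_le _ hg.1), Nat.floor_mono (dist_le _ hg.2)⟩
  · rintro _ ⟨g₀, hg₀, rfl⟩
    refine (hfin.image (· * g₀)).subset ?_
    rintro g ⟨hg, hgg₀⟩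
    obtain ⟨hfl, hfl'⟩ := Prod.mk.inj hgg₀
    exact ⟨g * g₀⁻¹, ⟨smul_dist_le hg.1 hg₀.1 hfl, smul_dist_le hg.2 hg₀.2 hfl'⟩, by simp⟩

theorem exists_finite_setOf_eventuallyClose (hD : FourPointHyperbolic S D) (hg : GeodesicSpace S)
    (hacyl : AcylindricalAction fun (g : G) (x : S) => g • x) {u v : BSeq S e}
    (huv : ¬ ∀ R, EventuallyClose e R u.1 v.1) :
    ∃ R, ∀ p q r s : BSeq S e, (¬ ∀ R, EventuallyClose e R p.1 q.1) →
      (¬ ∀ R, EventuallyClose e R r.1 s.1) →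
      ∃ L, {g : G | ∃ p' q' r' s' : ℕ → S,
        (EventuallyClose e L p.1 p' ∧ EventuallyClose e R u.1 (g • p')) ∧
        (EventuallyClose e L q.1 q' ∧ EventuallyClose e R u.1 (g • q')) ∧
        (EventuallyClose e L r.1 r' ∧ EventuallyClose e R v.1 (g • r')) ∧
        EventuallyClose e L s.1 s' ∧ EventuallyClose e R v.1 (g • s')}.Finite := by
  have hD0 := hD.nonneg e
  obtain ⟨C, hC0, hC⟩ := eventually_gprod_le_of_not_eventuallyClose hD huv
  obtain ⟨Ra, _, hRa, _, hfin⟩ := hacyl (2 * (C + 6 * D) + 2 * D + 1) (by positivity)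
  set ρ := C + 3 * D + 1 + Ra with _hρ
  obtain ⟨x, y, hxe, hye, hxy, hxu, hyv⟩ :=
    exists_dist_eq_le_dist hD hg hC0 hC (by linarith : C + 3 * D < ρ)
  refine ⟨ρ, fun p q r s hpq hrs => ?_⟩
  obtain ⟨c, hc0, hc⟩ := eventually_gprod_le_of_not_eventuallyClose hD hpq
  obtain ⟨c', hc'0, hc'⟩ := eventually_gprod_le_of_not_eventuallyClose hD hrs
  set L := 2 * C + 2 * (c + c' + 2 * D) + 10 * D + ρ + 1 with _hL
  obtain ⟨n, hn⟩ := (EventuallyClose.refl p (L + D)).eventually.exists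
  obtain ⟨m, hm⟩ := (EventuallyClose.refl r (L + D)).eventually.exists
  refine ⟨L + D, (finite_setOf_gprod_inv_smul_le hD (P := p.1 n) (W := r.1 m)
    (hfin x y (by linarith)).1).subset ?_⟩
  rintro g ⟨p', q', r', s', ⟨hp, hup⟩, ⟨hq, huq⟩, ⟨hr, hvr⟩, ⟨hs, hvs⟩⟩
  have hpq' := (eventually_gprod_le_of_eventuallyClose hD hc hp hq (by linarith)).mono
    fun k hk => hk.trans (by linarith : c + 2 * D ≤ c + c' + 2 * D)
  have hrs' := (eventually_gprod_le_of_eventuallyClose hD hc' hr hs (by linarith)).mono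
    fun k hk => hk.trans (by linarith : c' + 2 * D ≤ c + c' + 2 * D)
  have hP : ∀ᶠ k in atTop, L ≤ gprod e (p.1 n) (p' k) := (hn.and hp.eventually_diag).mono
    fun k hk => by linarith [hD.sub_le_gprod hk.1 hk.2]
  have hW : ∀ᶠ k in atTop, L ≤ gprod e (r.1 m) (r' k) := (hm.and hr.eventually_diag).mono
    fun k hk => by linarith [hD.sub_le_gprod hk.1 hk.2]
  constructor
  · exact gprod_inv_smul_le hD hC (hxe ▸ hxu) hpq' hrs' hP hW hup huq hvr hvs hxe.le
      (by linarith) (by linarith)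
  · rw [gprod_comm]
    exact gprod_inv_smul_le hD (hC.mono fun k hk => gprod_comm e (u.1 k) _ ▸ hk) (hye ▸ hyv)
      hrs' hpq' hW hP hvr hvs hup huq hye.le (by linarith) (by linarith)

theorem TopologicalBoundary.conditionC (hD : FourPointHyperbolic S D) (hg : GeodesicSpace S)
    (hacyl : AcylindricalAction fun (g : G) (x : S) => g • x) :
    ConditionC fun (g : G) (ξ : TopologicalBoundary hD e) => g • ξ := by
  rintro ⟨u, u'⟩ ⟨v, v'⟩ (rfl : u = u') (rfl : v = v') huv
  obtain ⟨u, rfl⟩ := SeparationQuotient.surjective_mk u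
  obtain ⟨v, rfl⟩ := SeparationQuotient.surjective_mk v
  obtain ⟨R, hR⟩ := exists_finite_setOf_eventuallyClose hD hg hacyl
    fun h => huv (congrArg (fun ξ => (ξ, ξ)) (mk_eq_mk_iff.2 h))
  obtain ⟨U, hU, huU, hU'⟩ := exists_isOpen_forall_eventuallyClose u R
  obtain ⟨V, hV, hvV, hV'⟩ := exists_isOpen_forall_eventuallyClose v R
  refine ⟨U ×ˢ U, V ×ˢ V, hU.prod hU, hV.prod hV, ⟨huU, huU⟩, ⟨hvV, hvV⟩, ?_⟩
  rintro ⟨p, q⟩ ⟨r, s⟩ hpq hrs -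
  obtain ⟨p, rfl⟩ := SeparationQuotient.surjective_mk p
  obtain ⟨q, rfl⟩ := SeparationQuotient.surjective_mk q
  obtain ⟨r, rfl⟩ := SeparationQuotient.surjective_mk r
  obtain ⟨s, rfl⟩ := SeparationQuotient.surjective_mk s
  obtain ⟨L, hL⟩ := hR p q r s (fun h => hpq (mk_eq_mk_iff.2 h)) (fun h => hrs (mk_eq_mk_iff.2 h))
  obtain ⟨A₁, hA₁, hpA, hpL⟩ := exists_isOpen_forall_eventuallyClose p L
  obtain ⟨A₂, hA₂, hqA, hqL⟩ := exists_isOpen_forall_eventuallyClose q L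
  obtain ⟨B₁, hB₁, hrB, hrL⟩ := exists_isOpen_forall_eventuallyClose r L
  obtain ⟨B₂, hB₂, hsB, hsL⟩ := exists_isOpen_forall_eventuallyClose s L
  refine ⟨A₁ ×ˢ A₂, B₁ ×ˢ B₂, hA₁.prod hA₂, hB₁.prod hB₂, ⟨hpA, hqA⟩, ⟨hrB, hsB⟩, hL.subset ?_⟩
  rintro g ⟨⟨_, ⟨⟨p', q'⟩, ⟨hp', hq'⟩, rfl⟩, hpU, hqU⟩, _, ⟨⟨r', s'⟩, ⟨hr', hs'⟩, rfl⟩, hrV, hsV⟩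
  obtain ⟨p', rfl⟩ := SeparationQuotient.surjective_mk p'
  obtain ⟨q', rfl⟩ := SeparationQuotient.surjective_mk q'
  obtain ⟨r', rfl⟩ := SeparationQuotient.surjective_mk r'
  obtain ⟨s', rfl⟩ := SeparationQuotient.surjective_mk s'
  exact ⟨p'.1, q'.1, r'.1, s'.1, ⟨hpL _ hp', hU' _ hpU⟩, ⟨hqL _ hq', hU' _ hqU⟩,
    ⟨hrL _ hr', hV' _ hrV⟩, hsL _ hs', hV' _ hsV⟩

end Acylindrical

end BoundaryConditionC
/-! ### Loxodromic elements and the dynamics on the boundary -/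

section Loxodromic

open scoped Topology
open Filter

variable {S G : Type*} [MetricSpace S] [Group G] [MulAction G S] [IsIsometricSMul G S]
  {e : S} {D : ℝ}

theorem dist_inv_smul_left (g : G) (x y : S) : dist (g⁻¹ • x) y = dist x (g • y) := by
  rw [← dist_smul g, smul_inv_smul]

theorem gprod_smul_add_gprod_inv_smul (g : G) (e x : S) :
    gprod e (g • e) (g • x) + gprod e (g⁻¹ • e) x = dist e (g • e) := by
  simp only [gprod, dist_smul, dist_inv_smul_left]
  linarith [dist_comm e (g • e), dist_comm e (g • x), dist_comm e x]

theorem dist_smul_add_two_mul_gprod (g : G) (e x : S) :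
    dist e (g • x) + 2 * gprod e (g⁻¹ • e) x = dist e (g • e) + dist e x := by
  simp only [gprod, dist_inv_smul_left]
  linarith [dist_comm e x]

/-- A numerical condition at the point `e` under which `f` acts as a loxodromic isometry of a
hyperbolic space with four-point constant `D`. -/
def IsLoxodromicAt (e : S) (D : ℝ) (f : G) : Prop :=
  2 * gprod e (f • e) (f⁻¹ • e) + 3 * D < dist e (f • e)

namespace IsLoxodromicAt

variable {f : G}

theorem inv (h : IsLoxodromicAt e D f) : IsLoxodromicAt e D f⁻¹ := by
  unfold IsLoxodromicAt at *
  rwa [inv_inv, gprod_comm, dist_comm, dist_inv_smul_left]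

theorem gprod_inv_smul_pow_smul_le (hD : FourPointHyperbolic S D) (h : IsLoxodromicAt e D f)
    (n : ℕ) : gprod e (f⁻¹ • e) (f ^ n • e) ≤ gprod e (f • e) (f⁻¹ • e) + D := by
  have hD0 := hD.nonneg e
  unfold IsLoxodromicAt at h
  induction n with
  | zero =>
    have hself := gprod_le_dist_right e (f⁻¹ • e) e
    rw [dist_self] at hself
    rw [pow_zero, one_smul]
    linarith [gprod_nonneg e (f • e) (f⁻¹ • e)]
  | succ n ih =>
    have hforward := gprod_smul_add_gprod_inv_smul f e (f ^ n • e)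
    rw [← mul_smul, ← pow_succ'] at hforward
    rcases hD.gprod_le_or_gprod_le (le_refl (gprod e (f • e) (f⁻¹ • e))) (f ^ (n + 1) • e)
      with hle | hle
    · linarith
    · rwa [gprod_comm]

theorem dist_sub_le_gprod_smul_pow_succ_smul (hD : FourPointHyperbolic S D)
    (h : IsLoxodromicAt e D f) (n : ℕ) :
    dist e (f • e) - gprod e (f • e) (f⁻¹ • e) - D ≤ gprod e (f • e) (f ^ (n + 1) • e) := by
  rw [pow_succ', mul_smul]
  linarith [gprod_smul_add_gprod_inv_smul f e (f ^ n • e), h.gprod_inv_smul_pow_smul_le hD n]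

theorem dist_add_le_dist_pow_succ_smul (hD : FourPointHyperbolic S D)
    (h : IsLoxodromicAt e D f) (n : ℕ) :
    dist e (f ^ n • e) + (dist e (f • e) - 2 * gprod e (f • e) (f⁻¹ • e) - 2 * D) ≤
      dist e (f ^ (n + 1) • e) := by
  rw [pow_succ', mul_smul]
  linarith [dist_smul_add_two_mul_gprod f e (f ^ n • e), h.gprod_inv_smul_pow_smul_le hD n]

theorem exists_pos_mul_le_gprod (hD : FourPointHyperbolic S D) (h : IsLoxodromicAt e D f) :
    ∃ c, 0 < c ∧ (∀ n : ℕ, n * c ≤ dist e (f ^ n • e)) ∧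
      ∀ m n : ℕ, m ≤ n → m * c / 2 ≤ gprod e (f ^ m • e) (f ^ n • e) := by
  have hD0 := hD.nonneg e
  have hstep := h.dist_add_le_dist_pow_succ_smul hD
  set c := dist e (f • e) - 2 * gprod e (f • e) (f⁻¹ • e) - 2 * D with _hc
  have hc0 : 0 < c := by
    unfold IsLoxodromicAt at h
    linarith
  have hmono : Monotone fun n : ℕ => dist e (f ^ n • e) :=
    monotone_nat_of_le_succ fun n => by linarith [hstep n]
  have hlin : ∀ n : ℕ, n * c ≤ dist e (f ^ n • e) := by
    intro n
    induction n with
    | zero => simp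
    | succ n ih =>
      push_cast
      linarith [hstep n]
  refine ⟨c, hc0, hlin, fun m n hmn => ?_⟩
  obtain ⟨k, rfl⟩ := Nat.exists_eq_add_of_le hmn
  have hshift : dist (f ^ m • e) (f ^ (m + k) • e) = dist e (f ^ k • e) := by
    rw [pow_add, mul_smul, dist_smul]
  have hle : dist e (f ^ k • e) ≤ dist e (f ^ (m + k) • e) := hmono (Nat.le_add_left k m)
  unfold gprod
  linarith [hlin m, dist_comm e (f ^ m • e), dist_comm e (f ^ (m + k) • e)]

theorem convToInfty (hD : FourPointHyperbolic S D) (h : IsLoxodromicAt e D f) :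
    ConvToInfty e fun n => f ^ n • e := by
  obtain ⟨c, hc, -, hle⟩ := h.exists_pos_mul_le_gprod hD
  refine convToInfty_iff_forall_eventuallyClose.2 fun R => ?_
  obtain ⟨N, hN⟩ := exists_nat_gt (2 * R / c)
  rw [div_lt_iff₀ hc] at hN
  have hfar : ∀ i j : ℕ, N ≤ i → i ≤ j → R ≤ gprod e (f ^ i • e) (f ^ j • e) := by
    intro i j hi hij
    have : (N : ℝ) * c ≤ i * c := by gcongr
    linarith [hle i j hij]
  refine ⟨N, fun i hi j hj => ?_⟩
  rcases le_total i j with hij | hij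
  · exact hfar i j hi hij
  · rw [gprod_comm]
    exact hfar j i hj hij

/-- The attracting fixed point of a loxodromic element, represented by the orbit of `e`. -/
def attractingSeq (hD : FourPointHyperbolic S D) (h : IsLoxodromicAt e D f) : BoundarySeq hD e :=
  ⟨fun n => f ^ n • e, h.convToInfty hD⟩

theorem gprod_pow_succ_smul_inv_pow_smul_le (hD : FourPointHyperbolic S D)
    (h : IsLoxodromicAt e D f) (n j : ℕ) :
    gprod e (f ^ (n + 1) • e) (f⁻¹ ^ j • e) ≤ gprod e (f • e) (f⁻¹ • e) + 2 * D := by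
  have hinv := h.inv.gprod_inv_smul_pow_smul_le hD j
  rw [inv_inv, gprod_comm e (f⁻¹ • e) (f • e)] at hinv
  have hforward := h.dist_sub_le_gprod_smul_pow_succ_smul hD n
  unfold IsLoxodromicAt at h
  rcases hD.gprod_le_or_gprod_le hinv (f ^ (n + 1) • e) with hle | hle <;> linarith

theorem exists_forall_eventuallyClose_smul (hD : FourPointHyperbolic S D)
    (h : IsLoxodromicAt e D f) (R R' : ℝ) : ∃ N : ℕ, ∀ n, N < n → ∀ b : BSeq S e,
      ¬ EventuallyClose e R (fun n => f⁻¹ ^ n • e) b.1 →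
      EventuallyClose e R' (fun n => f ^ n • e) (f ^ n • b.1) := by
  have hD0 := hD.nonneg e
  obtain ⟨c, hc, hdist, hgprod⟩ := h.exists_pos_mul_le_gprod hD
  obtain ⟨c', hc', -, hgprod'⟩ := h.inv.exists_pos_mul_le_gprod hD
  set T := 2 * (|R| + |R'| + 3 * D + 1) with _hT
  have hlarge : ∀ c > 0, ∀ᶠ n : ℕ in atTop, T < n * c := fun c hc =>
    (tendsto_natCast_atTop_atTop.atTop_mul_const hc).eventually_gt_atTop T
  obtain ⟨N, hN⟩ := eventually_atTop.1 ((hlarge c hc).and (hlarge c' hc'))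
  refine ⟨N, fun n hn b hb => ?_⟩
  obtain ⟨hnc, hnc'⟩ := hN n hn.le
  obtain ⟨J, hJ⟩ := EventuallyClose.refl b (|R| + 2 * D + 1)
  unfold EventuallyClose at hb
  push Not at hb
  obtain ⟨i', hi', j', hj', hlt⟩ := hb (n + J)
  refine ⟨n + J, fun i hi j hj => ?_⟩
  have hrepelling : gprod e (f⁻¹ ^ n • e) (b.1 j) ≤ |R| + 2 * D := by
    refine hD.gprod_le_of_le_gprod (t := |R| + 2 * D + 1) (hlt.le.trans (le_abs_self R)) ?_
      (hJ j' (by lia) j (by lia)) (by linarith)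
    rw [gprod_comm]
    linarith [hgprod' n i' (by lia), abs_nonneg R']
  have hpushed : |R'| + D ≤ gprod e (f ^ n • e) (f ^ n • b.1 j) := by
    rw [inv_pow] at hrepelling
    linarith [gprod_smul_add_gprod_inv_smul (f ^ n) e (b.1 j), hdist n, abs_nonneg R,
      abs_nonneg R']
  have hattracting : |R'| + D ≤ gprod e (f ^ i • e) (f ^ n • e) := by
    rw [gprod_comm]
    linarith [hgprod n i (by lia), abs_nonneg R]
  have hclose := hD.sub_le_gprod hattracting hpushed
  exact (le_abs_self R').trans ((add_sub_cancel_right _ D).symm.trans_le hclose)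

theorem smul_mk_attractingSeq (hD : FourPointHyperbolic S D) (h : IsLoxodromicAt e D f) :
    f • (.mk (h.attractingSeq hD) : TopologicalBoundary hD e) = .mk (h.attractingSeq hD) := by
  refine TopologicalBoundary.mk_eq_mk_iff.2 fun R => ?_
  obtain ⟨N, hN⟩ := EventuallyClose.refl (h.attractingSeq hD) R
  refine ⟨N, fun i hi j hj => ?_⟩
  have hsmul : f • f ^ i • e = f ^ (i + 1) • e := by rw [pow_succ', mul_smul]
  change R ≤ gprod e (f • f ^ i • e) (f ^ j • e)
  rw [hsmul]
  exact hN (i + 1) (by lia) j hj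

end IsLoxodromicAt

theorem northSouthAt_of_forall_exists_image_subset {M : Type*} [TopologicalSpace M] [T1Space M]
    [MulAction G M] {f : G} {x y : M} (hxy : x ≠ y) (hx : f • x = x) (hy : f • y = y)
    (h : ∀ U V : Set M, IsOpen U → IsOpen V → x ∈ U → y ∈ V →
      ∃ N : ℕ, ∀ n, N < n → (f ^ n • ·) '' Uᶜ ⊆ V) :
    NorthSouthAt (fun (g : G) (z : M) => g • z) f x y := by
  refine ⟨hxy, fun z => ⟨fun hz => ?_, by rintro (rfl | rfl) <;> assumption⟩, h⟩
  by_contra! hne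
  obtain ⟨N, hN⟩ := h {z}ᶜ {z}ᶜ isOpen_compl_singleton isOpen_compl_singleton hne.1.symm hne.2.symm
  have hpow : f ^ (N + 1) • z = z :=
    (MulAction.stabilizer G z).pow_mem (MulAction.mem_stabilizer_iff.2 hz) _
  exact hN (N + 1) N.lt_succ_self ⟨z, by simp, hpow⟩ rfl

theorem IsLoxodromicAt.northSouth (hD : FourPointHyperbolic S D) {f : G}
    (h : IsLoxodromicAt e D f) :
    NorthSouth (fun (g : G) (ξ : TopologicalBoundary hD e) => g • ξ) f := by
  refine ⟨.mk (h.inv.attractingSeq hD), .mk (h.attractingSeq hD),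
    northSouthAt_of_forall_exists_image_subset (fun heq => ?_) ?_ (h.smul_mk_attractingSeq hD) ?_⟩
  · refine not_forall_eventuallyClose (C := gprod e (f • e) (f⁻¹ • e) + 2 * D)
      (eventually_atTop.2 ⟨1, fun k hk => ?_⟩) (TopologicalBoundary.mk_eq_mk_iff.1 heq.symm)
    obtain ⟨n, rfl⟩ := Nat.exists_eq_add_of_le' hk
    exact h.gprod_pow_succ_smul_inv_pow_smul_le hD n (n + 1)
  · exact (inv_smul_eq_iff.1 (h.inv.smul_mk_attractingSeq hD)).symm
  · intro U V hU hV hxU hyV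
    obtain ⟨R, hR⟩ := TopologicalBoundary.mem_nhds_mk_iff.1 (hU.mem_nhds hxU)
    obtain ⟨R', hR'⟩ := TopologicalBoundary.mem_nhds_mk_iff.1 (hV.mem_nhds hyV)
    obtain ⟨N, hN⟩ := h.exists_forall_eventuallyClose_smul hD R R'
    refine ⟨N, fun n hn => ?_⟩
    rintro _ ⟨ξ, hξ, rfl⟩
    obtain ⟨b, rfl⟩ := SeparationQuotient.surjective_mk ξ
    exact hR' _ (hN n hn b fun hb => hξ (hR b hb))

theorem exists_isLoxodromicAt_of_gprod_le (hD : FourPointHyperbolic S D) {C : ℝ} (hC : 0 ≤ C)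
    {a b : G} (ha : 4 * C + 20 * D + 1 ≤ dist e (a • e))
    (hb : 4 * C + 20 * D + 1 ≤ dist e (b • e)) (hab : gprod e (a • e) (b • e) ≤ C) :
    ∃ f : G, IsLoxodromicAt e D f := by
  have hD0 := hD.nonneg e
  -- If `a` and `b` are not loxodromic, then `a⁻¹ * b` is.
  by_contra! hcon
  have ha' := hcon a
  have hb' := hcon b
  refine hcon (a⁻¹ * b) ?_
  unfold IsLoxodromicAt at *
  have hnorm : ∀ g : G, dist e (g⁻¹ • e) = dist e (g • e) := fun g => by
    rw [dist_comm, dist_inv_smul_left]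
  have hf := dist_smul_add_two_mul_gprod a⁻¹ e (b • e)
  have hforward := gprod_smul_add_gprod_inv_smul a⁻¹ e (b • e)
  have hbackward := gprod_smul_add_gprod_inv_smul b⁻¹ e (a • e)
  rw [mul_inv_rev, inv_inv, mul_smul, mul_smul]
  rw [inv_inv, hnorm] at hf hforward hbackward
  rw [gprod_comm e (b • e)] at hbackward
  have hinv : gprod e (a⁻¹ • e) (b⁻¹ • e) ≤ C + 2 * D :=
    hD.gprod_le_of_le_gprod (t := 2 * C + 5 * D + 1 / 2) hab (by linarith) (by linarith)
      (by linarith)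
  have hback : gprod e (a⁻¹ • b • e) (b⁻¹ • a • e) ≤ C + 2 * D + 2 * D :=
    hD.gprod_le_of_le_gprod (t := 2 * C + 5 * D + 1) hinv (by linarith) (by linarith)
      (by linarith)
  linarith

theorem exists_isLoxodromicAt_of_nonelemAction (hD : FourPointHyperbolic S D)
    (hne : NonelemAction (fun (g : G) (x : S) => g • x) e) : ∃ f : G, IsLoxodromicAt e D f := by
  obtain ⟨ξ, η, -, ⟨s, a, hs, rfl⟩, ⟨t, b, ht, rfl⟩, -, hne, -, -⟩ := hne
  obtain ⟨C, hC0, hC⟩ := eventually_gprod_le_of_not_eventuallyClose hD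
    fun h => hne (Quot.sound (bequiv_of_forall_eventuallyClose h))
  set C' := C + dist s e + dist t e with _hC'
  have horbit : ∀ (x : S) (g : ℕ → G), ConvToInfty e (fun n => g n • x) →
      ∀ᶠ n in atTop, 4 * C' + 20 * D + 1 ≤ dist e (g n • e) := by
    intro x g hx
    filter_upwards [(EventuallyClose.refl ⟨_, hx⟩
      (4 * C' + 20 * D + 1 + dist x e)).eventually_diag] with n hn
    rw [gprod_self] at hn
    have := dist_triangle (g n • x) (g n • e) e
    rw [dist_smul] at this
    linarith [dist_comm e (g n • e)]
  obtain ⟨n, hgprod, ha, hb⟩ := (hC.and ((horbit s a hs).and (horbit t b ht))).exists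
  refine exists_isLoxodromicAt_of_gprod_le hD (by positivity) ha hb ?_
  have hmove := gprod_sub_dist_le_gprod e (a n • e) (b n • e) (b n • t)
  have hmove' := gprod_sub_dist_le_gprod e (b n • t) (a n • e) (a n • s)
  rw [dist_smul, dist_comm e] at hmove hmove'
  rw [gprod_comm e (b n • t), gprod_comm e (b n • t)] at hmove'
  linarith

end Loxodromic
/-! ### The metric realization of a connected graph -/

section Geodesics

variable {S : Type*} [MetricSpace S] {x y z : S}

/-- The points `x` and `y` are the endpoints of some geodesic segment. -/
def JoinedByGeodesic (x y : S) : Prop := ∃ Γ : Set S, IsGeodesicSegment Γ x y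

namespace JoinedByGeodesic

theorem symm (h : JoinedByGeodesic x y) : JoinedByGeodesic y x :=
  h.imp fun _ hΓ => hΓ.symm

/-- It suffices that the parametrization does not increase distances: since its endpoints are at
distance `dist x y`, no distance can decrease either. -/
theorem of_dist_le (γ : ℝ → S) (h₀ : γ 0 = x) (h₁ : γ (dist x y) = y)
    (h : ∀ s t, 0 ≤ s → s ≤ t → t ≤ dist x y → dist (γ s) (γ t) ≤ t - s) :
    JoinedByGeodesic x y := by
  have dist_eq : ∀ s t, 0 ≤ s → s ≤ t → t ≤ dist x y → dist (γ s) (γ t) = |s - t| := by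
    intro s t hs hst ht
    rw [abs_sub_comm, abs_of_nonneg (sub_nonneg.2 hst)]
    refine le_antisymm (h s t hs hst ht) ?_
    have hleft := h 0 s le_rfl hs (hst.trans ht)
    have hright := h t _ (hs.trans hst) ht le_rfl
    rw [h₀] at hleft
    rw [h₁] at hright
    linarith [dist_triangle4 x (γ s) (γ t) y]
  refine ⟨_, γ, h₀, h₁, fun s hs t ht => ?_, rfl⟩
  rcases le_total s t with hst | hst
  · exact dist_eq s t hs.1 hst ht.2
  · rw [dist_comm, abs_sub_comm]
    exact dist_eq t s ht.1 hst hs.2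

theorem exists_dist_le (h : JoinedByGeodesic x y) : ∃ γ : ℝ → S, γ 0 = x ∧ γ (dist x y) = y ∧
    ∀ s t, 0 ≤ s → s ≤ t → t ≤ dist x y → dist (γ s) (γ t) ≤ t - s := by
  obtain ⟨_, γ, h₀, h₁, hγ, -⟩ := h
  refine ⟨γ, h₀, h₁, fun s t hs hst ht => ?_⟩
  rw [hγ s ⟨hs, hst.trans ht⟩ t ⟨hs.trans hst, ht⟩, abs_sub_comm,
    abs_of_nonneg (sub_nonneg.2 hst)]

theorem trans (h : JoinedByGeodesic x y) (h' : JoinedByGeodesic y z)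
    (hd : dist x y + dist y z ≤ dist x z) : JoinedByGeodesic x z := by
  obtain ⟨γ, h₀, h₁, hγ⟩ := h.exists_dist_le
  obtain ⟨γ', h₀', h₁', hγ'⟩ := h'.exists_dist_le
  have _hxy : 0 ≤ dist x y := dist_nonneg
  have hxz : dist x z = dist x y + dist y z := le_antisymm (dist_triangle x y z) hd
  refine .of_dist_le (fun s => if s ≤ dist x y then γ s else γ' (s - dist x y)) ?_ ?_ ?_
  · simp [h₀]
  · simp only [hxz]
    split_ifs with hle
    · have hyz : dist y z = 0 := le_antisymm (by linarith) dist_nonneg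
      rw [hyz, add_zero, h₁, dist_eq_zero.1 hyz]
    · rwa [add_sub_cancel_left]
  · intro s t hs hst ht
    split_ifs with hsy hty hty
    · exact hγ s t hs hst hty
    · push Not at hty
      have hleft := hγ s _ hs hsy le_rfl
      have hright := hγ' 0 (t - dist x y) le_rfl (by linarith) (by linarith)
      rw [h₁] at hleft
      rw [h₀'] at hright
      linarith [dist_triangle (γ s) y (γ' (t - dist x y))]
    · linarith
    · push Not at hsy
      linarith [hγ' (s - dist x y) (t - dist x y) (by linarith) (by linarith) (by linarith)]

end JoinedByGeodesic

end Geodesics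

section Realization

universe u

variable {V : Type u} {X : SimpleGraph V} {hX : X.Connected}

/-- A point of the metric realization of a connected graph: the point at position `pos` on the
edge oriented from `tail` to `head`. Both orientations of each edge occur, so edges are doubled,
and `tail = head` is allowed, so there is a loop at each vertex; neither changes the distances
between vertices. -/
@[ext]
structure GraphPoint (_hX : X.Connected) where
  tail : V
  head : V
  pos : unitInterval
  dist_le_one : X.dist tail head ≤ 1

namespace GraphPoint

/-- The endpoints of the edge carrying a point, indexed by `Bool`. -/
def endpoint (P : GraphPoint hX) : Bool → V
  | false => P.tail
  | true => P.head

/-- The distances along the edge from a point to the two endpoints. -/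
def distEndpoint (P : GraphPoint hX) : Bool → ℝ
  | false => P.pos
  | true => 1 - P.pos

theorem distEndpoint_nonneg (P : GraphPoint hX) : ∀ i, 0 ≤ P.distEndpoint i
  | false => P.pos.2.1
  | true => sub_nonneg.2 P.pos.2.2

theorem dist_endpoint_le (P : GraphPoint hX) (i j : Bool) :
    X.dist (P.endpoint i) (P.endpoint j) ≤ P.distEndpoint i + P.distEndpoint j := by
  have hpos := P.pos.2
  have hdist : (X.dist P.tail P.head : ℝ) ≤ 1 := by exact_mod_cast P.dist_le_one
  cases i <;> cases j <;>
    simp only [endpoint, distEndpoint, SimpleGraph.dist_self, X.dist_comm (u := P.head)] <;>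
    push_cast <;> linarith [hpos.1, hpos.2]

/-- The length of the route from `P` to `Q` through the endpoints `i` of `P` and `j` of `Q`. -/
noncomputable def via (P Q : GraphPoint hX) (i j : Bool) : ℝ :=
  P.distEndpoint i + X.dist (P.endpoint i) (Q.endpoint j) + Q.distEndpoint j

theorem via_comm (P Q : GraphPoint hX) (i j : Bool) : via P Q i j = via Q P j i := by
  unfold via
  rw [SimpleGraph.dist_comm]
  ring

theorem via_nonneg (P Q : GraphPoint hX) (i j : Bool) : 0 ≤ via P Q i j :=
  add_nonneg (add_nonneg (P.distEndpoint_nonneg i) (Nat.cast_nonneg _)) (Q.distEndpoint_nonneg j)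

/-- The two points lie on the same oriented edge. -/
def SameEdge (P Q : GraphPoint hX) : Prop := P.tail = Q.tail ∧ P.head = Q.head

theorem SameEdge.symm {P Q : GraphPoint hX} (h : SameEdge P Q) : SameEdge Q P :=
  ⟨h.1.symm, h.2.symm⟩

theorem SameEdge.trans {P Q R : GraphPoint hX} (h : SameEdge P Q) (h' : SameEdge Q R) :
    SameEdge P R :=
  ⟨h.1.trans h'.1, h.2.trans h'.2⟩

theorem SameEdge.endpoint_eq {P Q : GraphPoint hX} (h : SameEdge P Q) :
    P.endpoint = Q.endpoint := by
  funext i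
  cases i
  exacts [h.1, h.2]

theorem distEndpoint_le (P Q : GraphPoint hX) (i : Bool) :
    P.distEndpoint i ≤ |(P.pos - Q.pos : ℝ)| + Q.distEndpoint i := by
  cases i <;> simp only [distEndpoint] <;>
    linarith [le_abs_self (P.pos - Q.pos : ℝ), neg_le_abs (P.pos - Q.pos : ℝ)]

theorem SameEdge.via_le {P Q : GraphPoint hX} (h : SameEdge P Q) (R : GraphPoint hX)
    (i j : Bool) : via P R i j ≤ |(P.pos - Q.pos : ℝ)| + via Q R i j := by
  unfold via
  rw [h.endpoint_eq]
  linarith [distEndpoint_le P Q i]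

theorem via_le_add (P Q R : GraphPoint hX) (i j k l : Bool) :
    via P R i l ≤ via P Q i j + via Q R k l := by
  have htriangle : X.dist (P.endpoint i) (R.endpoint l) ≤ X.dist (P.endpoint i) (Q.endpoint j) +
      X.dist (Q.endpoint j) (Q.endpoint k) + X.dist (Q.endpoint k) (R.endpoint l) :=
    hX.dist_triangle.trans (Nat.add_le_add_right hX.dist_triangle _)
  have hcast := (Nat.cast_le (α := ℝ)).2 htriangle
  push_cast at hcast
  unfold via
  linarith [Q.dist_endpoint_le j k]

/-- The lengths of the routes from `P` to `Q`: inside a common edge, or through endpoints. -/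
def routeLengths (P Q : GraphPoint hX) : Set ℝ :=
  {r | SameEdge P Q ∧ r = |(P.pos - Q.pos : ℝ)|} ∪ Set.range fun i : Bool × Bool => via P Q i.1 i.2

theorem abs_sub_mem_routeLengths {P Q : GraphPoint hX} (h : SameEdge P Q) :
    |(P.pos - Q.pos : ℝ)| ∈ routeLengths P Q :=
  Or.inl ⟨h, rfl⟩

theorem via_mem_routeLengths (P Q : GraphPoint hX) (i j : Bool) :
    via P Q i j ∈ routeLengths P Q :=
  Or.inr ⟨(i, j), rfl⟩

theorem nonneg_of_mem_routeLengths {P Q : GraphPoint hX} {r : ℝ} (hr : r ∈ routeLengths P Q) :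
    0 ≤ r := by
  rcases hr with ⟨-, rfl⟩ | ⟨⟨i, j⟩, rfl⟩
  exacts [abs_nonneg _, via_nonneg P Q i j]

theorem sInf_routeLengths_le {P Q : GraphPoint hX} {r : ℝ} (hr : r ∈ routeLengths P Q) :
    sInf (routeLengths P Q) ≤ r :=
  csInf_le ⟨0, fun _ => nonneg_of_mem_routeLengths⟩ hr

theorem sInf_mem_routeLengths (P Q : GraphPoint hX) :
    sInf (routeLengths P Q) ∈ routeLengths P Q :=
  Set.Nonempty.csInf_mem ⟨_, via_mem_routeLengths P Q false false⟩
    (((Set.finite_singleton _).subset fun _ hr => hr.2).union (Set.finite_range _))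

theorem routeLengths_comm (P Q : GraphPoint hX) : routeLengths P Q = routeLengths Q P := by
  have hsub : ∀ P Q : GraphPoint hX, routeLengths P Q ⊆ routeLengths Q P := by
    rintro P Q _ (⟨h, rfl⟩ | ⟨⟨i, j⟩, rfl⟩)
    · rw [abs_sub_comm]
      exact abs_sub_mem_routeLengths h.symm
    · exact Or.inr ⟨(j, i), via_comm Q P j i⟩
  exact (hsub P Q).antisymm (hsub Q P)

theorem exists_mem_routeLengths_le_add {P Q R : GraphPoint hX} {r s : ℝ}
    (hr : r ∈ routeLengths P Q) (hs : s ∈ routeLengths Q R) :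
    ∃ t ∈ routeLengths P R, t ≤ r + s := by
  rcases hr with ⟨h, rfl⟩ | ⟨⟨i, j⟩, rfl⟩ <;> rcases hs with ⟨h', rfl⟩ | ⟨⟨k, l⟩, rfl⟩
  · exact ⟨_, abs_sub_mem_routeLengths (h.trans h'), abs_sub_le _ _ _⟩
  · exact ⟨_, via_mem_routeLengths P R k l, h.via_le R k l⟩
  · refine ⟨_, via_mem_routeLengths P R i j, ?_⟩
    have hle := h'.symm.via_le P j i
    rw [via_comm R, via_comm Q, abs_sub_comm] at hle
    linarith
  · exact ⟨_, via_mem_routeLengths P R i l, via_le_add P Q R i j k l⟩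

noncomputable instance : PseudoMetricSpace (GraphPoint hX) where
  dist P Q := sInf (routeLengths P Q)
  dist_self P := le_antisymm
    ((sInf_routeLengths_le (abs_sub_mem_routeLengths ⟨rfl, rfl⟩)).trans_eq (by simp))
    (nonneg_of_mem_routeLengths (sInf_mem_routeLengths P P))
  dist_comm P Q := by rw [routeLengths_comm]
  dist_triangle P Q R := by
    obtain ⟨t, ht, hle⟩ := exists_mem_routeLengths_le_add (sInf_mem_routeLengths P Q)
      (sInf_mem_routeLengths Q R)
    exact (sInf_routeLengths_le ht).trans hle

theorem dist_le_abs_sub {P Q : GraphPoint hX} (h : SameEdge P Q) :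
    dist P Q ≤ |(P.pos - Q.pos : ℝ)| :=
  sInf_routeLengths_le (abs_sub_mem_routeLengths h)

theorem dist_le_via (P Q : GraphPoint hX) (i j : Bool) : dist P Q ≤ via P Q i j :=
  sInf_routeLengths_le (via_mem_routeLengths P Q i j)

theorem dist_eq_abs_sub_or_dist_eq_via (P Q : GraphPoint hX) :
    (SameEdge P Q ∧ dist P Q = |(P.pos - Q.pos : ℝ)|) ∨ ∃ i j, dist P Q = via P Q i j := by
  rcases sInf_mem_routeLengths P Q with h | ⟨⟨i, j⟩, h⟩
  exacts [Or.inl h, Or.inr ⟨i, j, h.symm⟩]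

/-- A vertex as a point of the realization, namely the initial point of its loop. -/
def ofVertex (hX : X.Connected) (v : V) : GraphPoint hX := ⟨v, v, 0, by simp⟩

theorem dist_ofVertex (v w : V) : dist (ofVertex hX v) (ofVertex hX w) = X.dist v w := by
  refine le_antisymm ((dist_le_via _ _ false false).trans_eq ?_) ?_
  · simp [via, distEndpoint, endpoint, ofVertex]
  · have hend : ∀ (v : V) (i : Bool), (ofVertex hX v).endpoint i = v := by
      rintro v (_ | _) <;> rfl
    rcases dist_eq_abs_sub_or_dist_eq_via (ofVertex hX v) (ofVertex hX w) with
      ⟨⟨h, -⟩, -⟩ | ⟨i, j, h⟩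
    · rw [show v = w from h]
      simp
    · rw [h, via, hend, hend]
      linarith [(ofVertex hX v).distEndpoint_nonneg i, (ofVertex hX w).distEndpoint_nonneg j]

theorem dist_ofVertex_endpoint_le (P : GraphPoint hX) (i : Bool) :
    dist P (ofVertex hX (P.endpoint i)) ≤ P.distEndpoint i :=
  (dist_le_via _ _ i false).trans_eq (by simp [via, distEndpoint, endpoint, ofVertex])

/-- The point of the edge of `P` at position `t`, clamped to the unit interval. -/
noncomputable def withPos (P : GraphPoint hX) (t : ℝ) : GraphPoint hX :=
  { P with pos := Set.projIcc 0 1 zero_le_one t }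

theorem dist_withPos_le (P : GraphPoint hX) (s t : ℝ) :
    dist (P.withPos s) (P.withPos t) ≤ |s - t| :=
  (dist_le_abs_sub (P := P.withPos s) (Q := P.withPos t) ⟨rfl, rfl⟩).trans
    (Set.abs_projIcc_sub_projIcc zero_le_one)

theorem SameEdge.withPos_eq {P Q : GraphPoint hX} (h : SameEdge P Q) : P.withPos Q.pos = Q :=
  GraphPoint.ext h.1 h.2 (Set.projIcc_val zero_le_one _)

end GraphPoint

/-- An action on the vertices of a graph that preserves adjacency. -/
class IsGraphAction (G : Type*) {V : Type*} [Group G] [MulAction G V] (X : SimpleGraph V) :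
    Prop where
  adj_smul : ∀ (g : G) {u v : V}, X.Adj u v → X.Adj (g • u) (g • v)

section Action

variable {G : Type*} [Group G] [MulAction G V] [IsGraphAction G X]

theorem IsGraphAction.dist_smul (hX : X.Connected) (g : G) (u v : V) :
    X.dist (g • u) (g • v) = X.dist u v := by
  have dist_smul_le : ∀ (g : G) (u v : V), X.dist (g • u) (g • v) ≤ X.dist u v := by
    intro g u v
    obtain ⟨p, hp⟩ := hX.exists_walk_length_eq_dist u v
    let f : X →g X := ⟨(g • ·), IsGraphAction.adj_smul g⟩
    rw [← hp, ← SimpleGraph.Walk.length_map f]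
    exact SimpleGraph.dist_le _
  refine (dist_smul_le g u v).antisymm ?_
  simpa only [inv_smul_smul] using dist_smul_le g⁻¹ (g • u) (g • v)

namespace GraphPoint

instance : MulAction G (GraphPoint hX) where
  smul g P := ⟨g • P.tail, g • P.head, P.pos,
    (IsGraphAction.dist_smul hX g _ _).trans_le P.dist_le_one⟩
  one_smul P := GraphPoint.ext (one_smul G P.tail) (one_smul G P.head) rfl
  mul_smul g h P := GraphPoint.ext (mul_smul g h P.tail) (mul_smul g h P.head) rfl

theorem endpoint_smul (g : G) (P : GraphPoint hX) : ∀ i, (g • P).endpoint i = g • P.endpoint i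
  | false => rfl
  | true => rfl

theorem distEndpoint_smul (g : G) (P : GraphPoint hX) :
    ∀ i, (g • P).distEndpoint i = P.distEndpoint i
  | false => rfl
  | true => rfl

theorem sameEdge_smul_iff (g : G) (P Q : GraphPoint hX) :
    SameEdge (g • P) (g • Q) ↔ SameEdge P Q :=
  and_congr (smul_left_cancel_iff g) (smul_left_cancel_iff g)

theorem routeLengths_smul (g : G) (P Q : GraphPoint hX) :
    routeLengths (g • P) (g • Q) = routeLengths P Q := by
  simp only [routeLengths, via, endpoint_smul, distEndpoint_smul, sameEdge_smul_iff,
    IsGraphAction.dist_smul hX]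
  rfl

instance : IsIsometricSMul G (GraphPoint hX) where
  isometry_smul g := Isometry.of_dist_eq fun P Q => congrArg sInf (routeLengths_smul g P Q)

end GraphPoint

end Action

/-- The metric realization of a connected graph with doubled edges and a loop at each vertex. -/
abbrev GraphRealization (hX : X.Connected) : Type u := SeparationQuotient (GraphPoint hX)

namespace GraphRealization

/-- The embedding of the vertices. -/
noncomputable def ofVertex (hX : X.Connected) (v : V) : GraphRealization hX :=
  SeparationQuotient.mk (GraphPoint.ofVertex hX v)

theorem dist_ofVertex (v w : V) : dist (ofVertex hX v) (ofVertex hX w) = X.dist v w :=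
  GraphPoint.dist_ofVertex v w

theorem exists_dist_ofVertex_le_one (p : GraphRealization hX) :
    ∃ v, dist p (ofVertex hX v) ≤ 1 := by
  obtain ⟨P, rfl⟩ := SeparationQuotient.surjective_mk p
  exact ⟨P.tail, (P.dist_ofVertex_endpoint_le false).trans P.pos.2.2⟩

theorem joinedByGeodesic_of_dist_eq_abs_sub {P Q : GraphPoint hX} (h : P.SameEdge Q)
    (hd : dist P Q = |(P.pos - Q.pos : ℝ)|) :
    JoinedByGeodesic (.mk P : GraphRealization hX) (.mk Q) := by
  wlog hle : (P.pos : ℝ) ≤ Q.pos generalizing P Q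
  · exact (this h.symm (by rw [dist_comm, hd, abs_sub_comm]) (not_le.1 hle).le).symm
  have hd' : dist (.mk P : GraphRealization hX) (.mk Q) = Q.pos - P.pos := by
    rw [SeparationQuotient.dist_mk, hd, abs_sub_comm, abs_of_nonneg (sub_nonneg.2 hle)]
  refine .of_dist_le (fun s => .mk (P.withPos (P.pos + s))) ?_ ?_ fun s t _ hst _ => ?_
  · rw [add_zero, GraphPoint.SameEdge.withPos_eq ⟨rfl, rfl⟩]
  · rw [hd', add_sub_cancel, h.withPos_eq]
  · refine (P.dist_withPos_le _ _).trans_eq ?_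
    rw [add_sub_add_left_eq_sub, abs_sub_comm, abs_of_nonneg (sub_nonneg.2 hst)]

theorem joinedByGeodesic_ofVertex_endpoint {P : GraphPoint hX} {i : Bool}
    (hd : P.distEndpoint i ≤ dist P (.ofVertex hX (P.endpoint i))) :
    JoinedByGeodesic (.mk P : GraphRealization hX) (ofVertex hX (P.endpoint i)) := by
  set Q : GraphPoint hX := { P with pos := if i then 1 else 0 } with hQ
  have hpos := P.pos.2
  have hPQ : |(P.pos - Q.pos : ℝ)| = P.distEndpoint i := by
    cases i
    · simp [hQ, GraphPoint.distEndpoint, abs_of_nonneg hpos.1]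
    · rw [abs_sub_comm]
      simp [hQ, GraphPoint.distEndpoint, abs_of_nonneg (sub_nonneg.2 hpos.2)]
  have hend : dist Q (.ofVertex hX (P.endpoint i)) ≤ 0 := by
    refine (Q.dist_ofVertex_endpoint_le i).trans_eq ?_
    cases i <;> simp [hQ, GraphPoint.distEndpoint]
  have hmk : (.mk Q : GraphRealization hX) = ofVertex hX (P.endpoint i) := dist_le_zero.1 hend
  rw [← hmk]
  refine joinedByGeodesic_of_dist_eq_abs_sub ⟨rfl, rfl⟩
    (le_antisymm (GraphPoint.dist_le_abs_sub ⟨rfl, rfl⟩) ?_)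
  linarith [dist_triangle P Q (.ofVertex hX (P.endpoint i))]

theorem joinedByGeodesic_ofVertex_of_adj {v w : V} (h : X.Adj v w) :
    JoinedByGeodesic (ofVertex hX v) (ofVertex hX w) := by
  have hvw : X.dist v w = 1 := SimpleGraph.dist_eq_one_iff_adj.2 h
  let P : GraphPoint hX := ⟨v, w, 0, hvw.le⟩
  have hP : dist P (.ofVertex hX v) ≤ 0 := P.dist_ofVertex_endpoint_le false
  have hmk : (.mk P : GraphRealization hX) = ofVertex hX v := dist_le_zero.1 hP
  have hdist := GraphPoint.dist_ofVertex (hX := hX) v w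
  rw [hvw] at hdist
  rw [← hmk]
  refine joinedByGeodesic_ofVertex_endpoint (P := P) (i := true) ?_
  have htriangle := dist_triangle_left (.ofVertex hX v) (.ofVertex hX w) P
  simp only [GraphPoint.distEndpoint, GraphPoint.endpoint, P, Set.Icc.coe_zero, sub_zero]
  push_cast at hdist
  linarith

theorem joinedByGeodesic_ofVertex (v w : V) :
    JoinedByGeodesic (ofVertex hX v) (ofVertex hX w) := by
  have of_walk : ∀ {v w : V} (p : X.Walk v w), p.length = X.dist v w →
      JoinedByGeodesic (ofVertex hX v) (ofVertex hX w) := by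
    intro v w p
    induction p with
    | nil => exact fun _ => joinedByGeodesic_of_dist_eq_abs_sub ⟨rfl, rfl⟩ (by simp)
    | @cons v v' w h p ih =>
      intro hlength
      rw [SimpleGraph.Walk.length_cons] at hlength
      have hle := SimpleGraph.dist_le p
      have htriangle := hX.dist_triangle (u := v) (v := v') (w := w)
      have hone : X.dist v v' = 1 := SimpleGraph.dist_eq_one_iff_adj.2 h
      refine (joinedByGeodesic_ofVertex_of_adj h).trans (ih (by lia)) ?_
      simp only [dist_ofVertex]
      exact_mod_cast (by lia : X.dist v v' + X.dist v' w ≤ X.dist v w)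
  obtain ⟨p, hp⟩ := hX.exists_walk_length_eq_dist v w
  exact of_walk p hp

theorem geodesicSpace (hX : X.Connected) : GeodesicSpace (GraphRealization hX) := by
  intro x y
  obtain ⟨P, rfl⟩ := SeparationQuotient.surjective_mk x
  obtain ⟨Q, rfl⟩ := SeparationQuotient.surjective_mk y
  rcases P.dist_eq_abs_sub_or_dist_eq_via Q with ⟨hsame, hd⟩ | ⟨i, j, hd⟩
  · exact joinedByGeodesic_of_dist_eq_abs_sub hsame hd
  set p := GraphPoint.ofVertex hX (P.endpoint i)
  set q := GraphPoint.ofVertex hX (Q.endpoint j)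
  have hPp := P.dist_ofVertex_endpoint_le i
  have hQq := Q.dist_ofVertex_endpoint_le j
  have hpq : dist p q = X.dist (P.endpoint i) (Q.endpoint j) := GraphPoint.dist_ofVertex _ _
  have hPQ := dist_triangle4_right P Q p q
  have hPpq := dist_triangle P p q
  have hPqQ := dist_triangle_right P Q q
  unfold GraphPoint.via at hd
  have hPp' := joinedByGeodesic_ofVertex_endpoint (P := P) (i := i) (by linarith)
  have hQq' := joinedByGeodesic_ofVertex_endpoint (P := Q) (i := j) (by linarith)
  refine (hPp'.trans (joinedByGeodesic_ofVertex _ _) ?_).trans hQq'.symm ?_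
  · change dist P p + dist p q ≤ dist P q
    linarith
  · change dist P q + dist q Q ≤ dist P Q
    linarith [dist_comm q Q]

section Action

variable {G : Type*} [Group G] [MulAction G V] [IsGraphAction G X]

theorem smul_ofVertex (g : G) (v : V) : g • ofVertex hX v = ofVertex hX (g • v) := rfl

instance : IsIsometricSMul G (GraphRealization hX) where
  isometry_smul g := Isometry.of_dist_eq fun x y => by
    obtain ⟨P, rfl⟩ := SeparationQuotient.surjective_mk x
    obtain ⟨Q, rfl⟩ := SeparationQuotient.surjective_mk y
    simp only [← SeparationQuotient.mk_smul, SeparationQuotient.dist_mk, dist_smul]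

end Action

end GraphRealization

end Realization

/-! ### Projection systems and their strengthening -/

section ProjectionSystems

variable {V G : Type*} [Group G] [MulAction G V]

/-- A `G`-invariant family of coarse pseudometrics on `V`: `d Y X Z` is the distance between the
projections of `X` and `Z` to `Y`. The bounds `base_le` and the condition `W ≠ Y` in `triangle`
reflect that `Y` itself has no meaningful projection to `Y`. -/
structure PreProjectionSystem (G : Type*) {V : Type*} [Group G] [MulAction G V]
    (d : V → V → V → ℕ) (θ : ℕ) : Prop where
  comm : ∀ Y X Z, d Y X Z = d Y Z X
  triangle : ∀ Y X W Z, W ≠ Y → d Y X Z ≤ d Y X W + d Y W Z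
  self_le : ∀ Y X, d Y X X ≤ θ
  base_le : ∀ Y Z, d Y Y Z ≤ θ
  finite_setOf_lt : ∀ X Z, {Y | θ < d Y X Z}.Finite
  smul : ∀ (g : G) Y X Z, d (g • Y) (g • X) (g • Z) = d Y X Z

/-- The projection axioms of Bestvina, Bromberg and Fujiwara, with the Behrstock inequality in
its coarse form. -/
structure ProjectionSystem (G : Type*) {V : Type*} [Group G] [MulAction G V]
    (d : V → V → V → ℕ) (θ : ℕ) : Prop extends PreProjectionSystem G d θ where
  behrstock : ∀ {Y X Z}, θ < d Y X Z → d X Y Z ≤ θ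

/-- The strong projection axioms: if `Y` separates `X` from `Z`, then `X` and `Y` have the same
projection to `Z`. -/
structure StrongProjectionSystem (G : Type*) {V : Type*} [Group G] [MulAction G V]
    (d : V → V → V → ℕ) (θ : ℕ) : Prop extends PreProjectionSystem G d θ where
  projection_eq : ∀ {Y X Z}, θ < d Y X Z → ∀ W, d Z X W = d Z Y W

/-- Two elements of `V` one of which separates the other from `Y`. -/
def Shadowing (d : V → V → V → ℕ) (K : ℕ) (Y X Z : V) : Prop := K < d Z X Y ∨ K < d X Z Y

/-- `X` separates `Z` from `Y`, in the reflexive sense. -/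
def Dominates (d : V → V → V → ℕ) (K : ℕ) (Y X Z : V) : Prop := Z = X ∨ K < d X Z Y

/-- The equivalence relation generated by `Shadowing`; the strengthened distances do not
distinguish between the projections to `Y` of equivalent elements. -/
def Indistinguishable (d : V → V → V → ℕ) (K : ℕ) (Y : V) : V → V → Prop :=
  Relation.ReflTransGen (Shadowing d K Y)

/-- The strengthened distance between the projections of `X` and `Z` to `Y`: the largest distance
over all elements indistinguishable from `X` and `Z`. -/
noncomputable def strongDist (d : V → V → V → ℕ) (K : ℕ) (Y X Z : V) : ℕ :=
  sSup {n | ∃ X' Z', Indistinguishable d K Y X X' ∧ Indistinguishable d K Y Z Z' ∧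
    n = d Y X' Z'}

theorem exists_chain_of_reflTransGen {α : Type*} {R : α → α → Prop} {a b : α}
    (h : Relation.ReflTransGen R a b) :
    ∃ (n : ℕ) (f : ℕ → α), f 0 = a ∧ f n = b ∧ ∀ i < n, R (f i) (f (i + 1)) := by
  induction h using Relation.ReflTransGen.head_induction_on with
  | refl => exact ⟨0, fun _ => b, rfl, rfl, by simp⟩
  | @head a c hac _ ih =>
    obtain ⟨n, f, h0, hn, hf⟩ := ih
    refine ⟨n + 1, fun k => Nat.casesOn k a f, rfl, hn, fun i hi => ?_⟩
    cases i with
    | zero =>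
      change R a (f 0)
      rwa [h0]
    | succ i => exact hf i (by lia)

theorem Shadowing.symm {d : V → V → V → ℕ} {K : ℕ} {Y X Z : V} (h : Shadowing d K Y X Z) :
    Shadowing d K Y Z X :=
  Or.symm h

namespace Indistinguishable

variable {d : V → V → V → ℕ} {K : ℕ} {Y X Z W : V}

theorem refl (X : V) : Indistinguishable d K Y X X := Relation.ReflTransGen.refl

theorem symm (h : Indistinguishable d K Y X Z) : Indistinguishable d K Y Z X := by
  induction h with
  | refl => exact refl X
  | tail _ hlast ih => exact Relation.ReflTransGen.head hlast.symm ih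

theorem trans (h : Indistinguishable d K Y X Z) (h' : Indistinguishable d K Y Z W) :
    Indistinguishable d K Y X W :=
  Relation.ReflTransGen.trans h h'

end Indistinguishable

namespace PreProjectionSystem

variable {d : V → V → V → ℕ} {θ K : ℕ} {Y X Z X' Z' : V}

theorem base_le_right (h : PreProjectionSystem G d θ) (Y Z : V) : d Y Z Y ≤ θ := by
  rw [h.comm]
  exact h.base_le Y Z

theorem ne_of_shadowing (h : PreProjectionSystem G d θ) (hK : θ ≤ K)
    (hXZ : Shadowing d K Y X Z) : X ≠ Y ∧ Z ≠ Y := by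
  constructor <;> rintro rfl
  · rcases hXZ with hlt | hlt
    · exact absurd (h.self_le Z X) (by lia)
    · exact absurd (h.base_le_right X Z) (by lia)
  · rcases hXZ with hlt | hlt
    · exact absurd (h.base_le_right Z X) (by lia)
    · exact absurd (h.self_le X Z) (by lia)

theorem ne_of_indistinguishable (h : PreProjectionSystem G d θ) (hK : θ ≤ K)
    (hXZ : Indistinguishable d K Y X Z) (hX : X ≠ Y) : Z ≠ Y := by
  induction hXZ with
  | refl => exact hX
  | tail _ hlast _ => exact (h.ne_of_shadowing hK hlast).2

theorem eq_of_indistinguishable_base (h : PreProjectionSystem G d θ) (hK : θ ≤ K)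
    (hYZ : Indistinguishable d K Y Y Z) : Z = Y := by
  by_contra hne
  exact h.ne_of_indistinguishable hK hYZ.symm hne rfl

theorem indistinguishable_smul (h : PreProjectionSystem G d θ) (g : G)
    (hXZ : Indistinguishable d K Y X Z) :
    Indistinguishable d K (g • Y) (g • X) (g • Z) := by
  refine Relation.ReflTransGen.lift (r := Shadowing d K Y) (p := Shadowing d K (g • Y))
    (fun W => g • W) (fun A B hAB => ?_) _ _ hXZ
  simp only [Function.onFun]
  unfold Shadowing at *
  rwa [h.smul, h.smul]

end PreProjectionSystem

namespace ProjectionSystem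

variable {d : V → V → V → ℕ} {θ : ℕ} {Y X Z X' Z' : V}

theorem behrstock_left (h : ProjectionSystem G d θ) (hY : θ < d Y X Z) : d X Z Y ≤ θ := by
  rw [h.comm]
  exact h.behrstock hY

theorem behrstock_right (h : ProjectionSystem G d θ) (hY : θ < d Y X Z) : d Z X Y ≤ θ :=
  h.behrstock_left (by rwa [h.comm])

theorem lt_of_shadowing_of_dominates (h : ProjectionSystem G d θ) (hne : Z ≠ X)
    (hXZ : Shadowing d (10 * θ) Y X Z) (hdom : Dominates d (6 * θ) Y X Z) :
    10 * θ < d X Z Y := by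
  have hlt := hdom.resolve_left hne
  have hZ : d Z X Y ≤ θ := h.behrstock (by lia)
  rcases hXZ with hZ' | hX
  · lia
  · exact hX

theorem le_of_dominates (h : ProjectionSystem G d θ) {P C W : V} (hne : C ≠ P)
    (hPC : 6 * θ < d P C Y) (hCW : Dominates d (6 * θ) Y C W) : d P W C ≤ θ := by
  rcases hCW with rfl | hCW
  · exact h.self_le _ _
  have hC : d C Y P ≤ θ := h.behrstock_left (by lia)
  have htri := h.triangle C W P Y hne.symm
  rw [h.comm C P Y] at htri
  exact h.behrstock_right (by lia)

/-- Seen from `P`, everything dominated by `C` is at distance `θ` from `C`; so the distance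
`10 * θ` between `Q` and `Y` is inherited by `C`, and then by `Z`. -/
theorem dominates_of_dominates (h : ProjectionSystem G d θ) {P Q C : V}
    (hPQ : Shadowing d (10 * θ) Y P Q) (hP : Dominates d (6 * θ) Y P Q)
    (hPC : Dominates d (6 * θ) Y P C) (hCQ : Dominates d (6 * θ) Y C Q)
    (hCZ : Dominates d (6 * θ) Y C Z) : Dominates d (6 * θ) Y P Z := by
  rcases eq_or_ne C P with rfl | hne
  · exact hCZ
  replace hPC := hPC.resolve_left hne
  have hQP : Q ≠ P := by
    rintro rfl
    have hC := hCQ.resolve_left hne.symm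
    exact absurd (h.behrstock (show θ < d Q C Y by lia)) (by lia)
  rcases eq_or_ne Z P with rfl | hZP
  · exact Or.inl rfl
  have hQ := h.lt_of_shadowing_of_dominates hQP hPQ hP
  have hQC := h.le_of_dominates hne hPC hCQ
  have hZC := h.comm P Z C ▸ h.le_of_dominates hne hPC hCZ
  have htri := h.triangle P Q C Y hne
  have htri' := h.triangle P C Z Y hZP
  exact Or.inr (by lia)

theorem dominates_or_dominates (h : ProjectionSystem G d θ) {P Q W : V}
    (hPQ : Shadowing d (10 * θ) Y P Q) (hWZ : Shadowing d (10 * θ) Y W Z)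
    (hP : Dominates d (6 * θ) Y P Q) (hPW : Dominates d (6 * θ) Y P W)
    (hZQ : Dominates d (6 * θ) Y Z Q) (hZ : Dominates d (6 * θ) Y Z W) :
    Dominates d (6 * θ) Y P Z ∨ Dominates d (6 * θ) Y Z P := by
  by_contra! hcon
  obtain ⟨hPZ, hZP⟩ := hcon
  have hne : Z ≠ P := fun heq => hPZ (Or.inl heq)
  have hQP : Q ≠ P := fun heq => hZP (heq ▸ hZQ)
  have hWZ' : W ≠ Z := fun heq => hPZ (heq ▸ hPW)
  have hQZ : Q ≠ Z := fun heq => hPZ (heq ▸ hP)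
  have hWP : W ≠ P := fun heq => hZP (heq ▸ hZ)
  have hPZ_le : ¬ 6 * θ < d P Z Y := fun hlt => hPZ (Or.inr hlt)
  have hZP_le : ¬ 6 * θ < d Z P Y := fun hlt => hZP (Or.inr hlt)
  replace hPW := hPW.resolve_left hWP
  replace hZQ := hZQ.resolve_left hQZ
  have hPQ_lt := h.lt_of_shadowing_of_dominates hQP hPQ hP
  have hZW_lt := h.lt_of_shadowing_of_dominates hWZ' hWZ.symm hZ
  have htri_PQ := h.triangle P Q Z Y hne
  have hZQP : d Z Q P ≤ θ := h.behrstock_right (show θ < d P Q Z by lia)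
  have htri_ZQ := h.triangle Z Q P Y hne.symm
  have hPZ_small : d P Z Y ≤ θ := h.behrstock (show θ < d Z P Y by lia)
  have htri_PW := h.triangle P W Z Y hne
  have hZWP : d Z W P ≤ θ := h.behrstock_right (show θ < d P W Z by lia)
  have htri_ZW := h.triangle Z W P Y hne.symm
  lia

theorem dominates_last_or_dominates_first (h : ProjectionSystem G d θ) {n s t : ℕ} {f : ℕ → V}
    (hn : 0 < n) (hf : ∀ i < n + 1, Shadowing d (10 * θ) Y (f i) (f (i + 1)))
    (hs : s ≤ n) (hs' : ∀ r ≤ n, Dominates d (6 * θ) Y (f s) (f r))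
    (ht : 1 ≤ t) (htn : t ≤ n + 1)
    (ht' : ∀ r, 1 ≤ r → r ≤ n + 1 → Dominates d (6 * θ) Y (f t) (f r)) :
    Dominates d (6 * θ) Y (f s) (f (n + 1)) ∨ Dominates d (6 * θ) Y (f t) (f 0) := by
  have hfirst := hf 0 (by lia)
  have hlast := hf n (by lia)
  rcases Nat.eq_zero_or_pos s with rfl | hs0 <;> rcases htn.lt_or_eq with htn | rfl
  · exact Or.inl (h.dominates_of_dominates hfirst (hs' 1 hn) (hs' t (by lia))
      (ht' 1 le_rfl (by lia)) (ht' (n + 1) (by lia) le_rfl))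
  · exact h.dominates_or_dominates hfirst hlast (hs' 1 hn) (hs' n le_rfl)
      (ht' 1 le_rfl (by lia)) (ht' n hn (by lia))
  · have heq : f s = f t := by
      rcases hs' t (by lia) with heq | hst
      · exact heq.symm
      rcases ht' s hs0 (by lia) with heq | hts
      · exact heq
      exact absurd (h.behrstock (show θ < d (f s) (f t) Y by lia)) (by lia)
    rw [heq]
    exact Or.inl (ht' (n + 1) (by lia) le_rfl)
  · exact Or.inr (h.dominates_of_dominates hlast.symm (ht' n hn (by lia))
      (ht' s hs0 (by lia)) (hs' n le_rfl) (hs' 0 (by lia)))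

theorem exists_dominates_of_chain (h : ProjectionSystem G d θ) (n : ℕ) :
    ∀ f : ℕ → V, (∀ i < n, Shadowing d (10 * θ) Y (f i) (f (i + 1))) →
      ∃ s ≤ n, ∀ r ≤ n, Dominates d (6 * θ) Y (f s) (f r) := by
  induction n with
  | zero => exact fun f _ => ⟨0, le_rfl, fun r hr => Or.inl (by rw [Nat.le_zero.1 hr])⟩
  | succ n ih =>
    intro f hf
    rcases Nat.eq_zero_or_pos n with rfl | hn
    · rcases hf 0 (by lia) with hlt | hlt
      · refine ⟨1, le_rfl, fun r hr => ?_⟩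
        interval_cases r
        exacts [Or.inr (by simp only [zero_add] at hlt; lia), Or.inl rfl]
      · refine ⟨0, zero_le_one, fun r hr => ?_⟩
        interval_cases r
        exacts [Or.inl rfl, Or.inr (by simp only [zero_add] at hlt; lia)]
    obtain ⟨s, hs, hs'⟩ := ih f fun i hi => hf i (by lia)
    obtain ⟨t, ht, ht'⟩ := ih (fun i => f (i + 1)) fun i hi => hf (i + 1) (by lia)
    have ht'' : ∀ r, 1 ≤ r → r ≤ n + 1 → Dominates d (6 * θ) Y (f (t + 1)) (f r) := by
      intro r hr hrn
      simpa only [Nat.sub_add_cancel hr] using ht' (r - 1) (by lia)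
    rcases h.dominates_last_or_dominates_first hn hf hs hs' (by lia) (by lia) ht'' with hd | hd
    · refine ⟨s, by lia, fun r hr => ?_⟩
      rcases hr.lt_or_eq with hr | rfl
      exacts [hs' r (by lia), hd]
    · refine ⟨t + 1, by lia, fun r hr => ?_⟩
      rcases Nat.eq_zero_or_pos r with rfl | hr0
      exacts [hd, ht'' r hr0 hr]

theorem le_of_indistinguishable (h : ProjectionSystem G d θ)
    (hXZ : Indistinguishable d (10 * θ) Y X Z) : d Y X Z ≤ 2 * θ := by
  obtain ⟨n, f, rfl, rfl, hf⟩ := exists_chain_of_reflTransGen hXZ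
  rcases Nat.eq_zero_or_pos n with rfl | hn
  · exact (h.self_le Y (f 0)).trans (by lia)
  obtain ⟨s, hs, hdom⟩ := h.exists_dominates_of_chain n f hf
  have hsY : f s ≠ Y := by
    rcases hs.lt_or_eq with hs | rfl
    · exact (h.ne_of_shadowing (by lia) (hf s hs)).1
    · simpa only [Nat.sub_add_cancel hn] using
        (h.ne_of_shadowing (by lia) (hf (s - 1) (by lia))).2
  have hnear : ∀ r ≤ n, d Y (f r) (f s) ≤ θ := by
    intro r hr
    rcases hdom r hr with heq | hlt
    · rw [heq]
      exact h.self_le _ _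
    · exact h.behrstock_right (show θ < d (f s) (f r) Y by lia)
  have h0 := hnear 0 (by lia)
  have hn' := h.comm Y (f n) (f s) ▸ hnear n le_rfl
  exact (h.triangle Y (f 0) (f s) (f n) hsY).trans (by lia)

theorem dist_le_of_indistinguishable (h : ProjectionSystem G d θ) (hX : X ≠ Y) (hZ : Z ≠ Y)
    (hXX' : Indistinguishable d (10 * θ) Y X X') (hZZ' : Indistinguishable d (10 * θ) Y Z Z') :
    d Y X' Z' ≤ d Y X Z + 4 * θ := by
  have hX'X := h.le_of_indistinguishable hXX'.symm
  have hZZ'_le := h.le_of_indistinguishable hZZ'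
  have htri := h.triangle Y X' X Z' hX
  have htri' := h.triangle Y X Z Z' hZ
  lia

theorem strongDist_le {K n : ℕ}
    (hn : ∀ X' Z', Indistinguishable d K Y X X' → Indistinguishable d K Y Z Z' →
      d Y X' Z' ≤ n) : strongDist d K Y X Z ≤ n := by
  refine csSup_le ⟨_, X, Z, .refl X, .refl Z, rfl⟩ ?_
  rintro m ⟨X', Z', hX, hZ, rfl⟩
  exact hn X' Z' hX hZ

theorem bddAbove_dist_indistinguishable (h : ProjectionSystem G d θ) (Y X Z : V) :
    BddAbove {n | ∃ X' Z', Indistinguishable d (10 * θ) Y X X' ∧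
      Indistinguishable d (10 * θ) Y Z Z' ∧ n = d Y X' Z'} := by
  refine ⟨d Y X Z + 4 * θ + θ, ?_⟩
  rintro n ⟨X', Z', hX', hZ', rfl⟩
  rcases eq_or_ne X Y with rfl | hX
  · rw [h.eq_of_indistinguishable_base (by lia) hX']
    exact (h.base_le X Z').trans (by lia)
  rcases eq_or_ne Z Y with rfl | hZ
  · rw [h.eq_of_indistinguishable_base (by lia) hZ']
    exact (h.base_le_right Z X').trans (by lia)
  exact (h.dist_le_of_indistinguishable hX hZ hX' hZ').trans (by lia)

theorem le_strongDist (h : ProjectionSystem G d θ)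
    (hX : Indistinguishable d (10 * θ) Y X X') (hZ : Indistinguishable d (10 * θ) Y Z Z') :
    d Y X' Z' ≤ strongDist d (10 * θ) Y X Z :=
  le_csSup (h.bddAbove_dist_indistinguishable Y X Z) ⟨X', Z', hX, hZ, rfl⟩

theorem strongDist_comm_le (h : ProjectionSystem G d θ) (Y X Z : V) :
    strongDist d (10 * θ) Y X Z ≤ strongDist d (10 * θ) Y Z X :=
  strongDist_le fun X' Z' hX hZ => h.comm Y Z' X' ▸ h.le_strongDist hZ hX

theorem strongDist_base_le (h : ProjectionSystem G d θ) (Y Z : V) :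
    strongDist d (10 * θ) Y Y Z ≤ θ :=
  strongDist_le fun X' Z' hX _ => by
    rw [h.eq_of_indistinguishable_base (by lia) hX]
    exact h.base_le _ _

theorem strongDist_le_add (h : ProjectionSystem G d θ) (hlt : θ < strongDist d (10 * θ) Y X Z) :
    strongDist d (10 * θ) Y X Z ≤ d Y X Z + 4 * θ := by
  have hX : X ≠ Y := by
    rintro rfl
    exact absurd (h.strongDist_base_le X Z) (by lia)
  have hZ : Z ≠ Y := by
    rintro rfl
    exact absurd ((h.strongDist_comm_le Z X Z).trans (h.strongDist_base_le Z X)) (by lia)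
  exact strongDist_le fun X' Z' hX' hZ' => h.dist_le_of_indistinguishable hX hZ hX' hZ'

theorem strongDist_smul_le (h : ProjectionSystem G d θ) (g : G) (Y X Z : V) :
    strongDist d (10 * θ) Y X Z ≤ strongDist d (10 * θ) (g • Y) (g • X) (g • Z) :=
  strongDist_le fun X' Z' hX hZ => by
    rw [← h.smul g]
    exact h.le_strongDist (h.indistinguishable_smul g hX) (h.indistinguishable_smul g hZ)

theorem strongDist_projection_eq (h : ProjectionSystem G d θ)
    (hlt : 14 * θ < strongDist d (10 * θ) Y X Z) (W : V) :
    strongDist d (10 * θ) Z X W = strongDist d (10 * θ) Z Y W := by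
  have hadd := h.strongDist_le_add (show θ < strongDist d (10 * θ) Y X Z by lia)
  have hXY : Indistinguishable d (10 * θ) Z X Y :=
    Relation.ReflTransGen.single (Or.inl (by lia))
  exact le_antisymm
    (strongDist_le fun X' Z' hX hZ => h.le_strongDist (hXY.symm.trans hX) hZ)
    (strongDist_le fun X' Z' hX hZ => h.le_strongDist (hXY.trans hX) hZ)

theorem strongProjectionSystem (h : ProjectionSystem G d θ) :
    StrongProjectionSystem G (strongDist d (10 * θ)) (14 * θ) where
  comm Y X Z := le_antisymm (h.strongDist_comm_le _ _ _) (h.strongDist_comm_le _ _ _)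
  triangle Y X W Z hW := strongDist_le fun X' Z' hX hZ =>
    (h.triangle Y X' W Z' hW).trans
      (Nat.add_le_add (h.le_strongDist hX (.refl W)) (h.le_strongDist (.refl W) hZ))
  self_le Y X := by
    by_contra! hlt
    have hadd := h.strongDist_le_add (show θ < strongDist d (10 * θ) Y X X by lia)
    have hself := h.self_le Y X
    lia
  base_le Y Z := (h.strongDist_base_le Y Z).trans (by lia)
  finite_setOf_lt X Z := (h.finite_setOf_lt X Z).subset fun Y hY => by
    simp only [Set.mem_ofPred_eq] at hY ⊢
    have hadd := h.strongDist_le_add (show θ < strongDist d (10 * θ) Y X Z by lia)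
    lia
  smul g Y X Z := by
    refine le_antisymm ?_ (h.strongDist_smul_le g Y X Z)
    simpa only [inv_smul_smul] using h.strongDist_smul_le g⁻¹ (g • Y) (g • X) (g • Z)
  projection_eq hlt := h.strongDist_projection_eq hlt

end ProjectionSystem

end ProjectionSystems

/-! ### The projection graph -/

section ProjectionGraph

variable {V G : Type*} [Group G] [MulAction G V]

/-- The elements of `V` separating `X` from `Z`. -/
def between (d : V → V → V → ℕ) (K : ℕ) (X Z : V) : Set V := {Y | K < d Y X Z}

/-- The projection graph of Bestvina, Bromberg and Fujiwara: two distinct elements are adjacent if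
nothing separates them. For a symmetric `d`, the symmetrization built into `SimpleGraph.fromRel`
has no effect. -/
def projectionGraph (d : V → V → V → ℕ) (K : ℕ) : SimpleGraph V :=
  SimpleGraph.fromRel fun X Z => ∀ Y, d Y X Z ≤ K

variable {d : V → V → V → ℕ} {θ K : ℕ} {W X Y Z X' Z' : V}

theorem mem_between : Y ∈ between d K X Z ↔ K < d Y X Z := Iff.rfl

namespace PreProjectionSystem

theorem projectionGraph_adj (h : PreProjectionSystem G d θ) :
    (projectionGraph d K).Adj X Z ↔ X ≠ Z ∧ ∀ Y, d Y X Z ≤ K := by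
  simp only [projectionGraph, SimpleGraph.fromRel_adj, h.comm _ Z X, or_self]

theorem exists_mem_between (h : PreProjectionSystem G d θ) (hne : X ≠ Z)
    (hadj : ¬ (projectionGraph d K).Adj X Z) : ∃ Y, Y ∈ between d K X Z := by
  by_contra! hcon
  exact hadj (h.projectionGraph_adj.2 ⟨hne, fun Y => not_lt.1 (hcon Y)⟩)

theorem ne_left_of_lt (h : PreProjectionSystem G d θ) (hY : θ < d Y X Z) : X ≠ Y := by
  rintro rfl
  exact absurd (h.base_le X Z) (by lia)

theorem ne_right_of_lt (h : PreProjectionSystem G d θ) (hY : θ < d Y X Z) : Z ≠ Y :=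
  h.ne_left_of_lt (by rwa [h.comm])

theorem between_comm (h : PreProjectionSystem G d θ) (X Z : V) :
    between d K X Z = between d K Z X := by
  simp only [between, h.comm _ X Z]

theorem finite_between (h : PreProjectionSystem G d θ) (hK : θ ≤ K) (X Z : V) :
    (between d K X Z).Finite :=
  (h.finite_setOf_lt X Z).subset fun _ hY => hK.trans_lt hY

theorem isGraphAction (h : PreProjectionSystem G d θ) (K : ℕ) :
    IsGraphAction G (projectionGraph d K) where
  adj_smul g X Z hadj := by
    rw [h.projectionGraph_adj] at hadj ⊢
    refine ⟨fun heq => hadj.1 (smul_left_cancel g heq), fun Y => ?_⟩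
    have hle := hadj.2 (g⁻¹ • Y)
    rwa [← h.smul g, smul_inv_smul] at hle

theorem ncard_between_smul (h : PreProjectionSystem G d θ) (g : G) (X Z : V) :
    (between d K (g • X) (g • Z)).ncard = (between d K X Z).ncard := by
  have himage : between d K (g • X) (g • Z) = (fun Y => g • Y) '' between d K X Z := by
    ext Y
    rw [← smul_inv_smul g Y, (MulAction.injective g).mem_set_image]
    simp only [mem_between, h.smul]
  rw [himage, Set.ncard_image_of_injective _ (MulAction.injective g)]

end PreProjectionSystem

namespace StrongProjectionSystem

theorem projection_eq_left (h : StrongProjectionSystem G d θ) (hY : θ < d Y X Z) (W : V) :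
    d X Z W = d X Y W :=
  h.projection_eq (by rwa [h.comm]) W

theorem behrstock (h : StrongProjectionSystem G d θ) (hY : θ < d Y X Z) : d Z X Y ≤ θ := by
  rw [h.projection_eq hY]
  exact h.self_le _ _

theorem projection_eq_of_nested (h : StrongProjectionSystem G d θ) (hW : θ < d W X Z)
    (hY : θ < d Y X W) (U : V) : d Y Z U = d Y W U :=
  h.projection_eq_left (by rwa [h.projection_eq hY] at hW) U

theorem between_subset (h : StrongProjectionSystem G d θ) (hK : θ ≤ K) (hW : θ < d W X Z) :
    between d K X W ⊆ between d K X Z := by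
  intro Y hY
  rw [mem_between] at hY ⊢
  rwa [h.comm, h.projection_eq_of_nested hW (hK.trans_lt hY), h.comm]

theorem ncard_between_lt (h : StrongProjectionSystem G d θ) (hK : θ ≤ K)
    (hW : W ∈ between d K X Z) : (between d K X W).ncard < (between d K X Z).ncard := by
  refine Set.ncard_lt_ncard ⟨h.between_subset hK (hK.trans_lt hW), fun hsub => ?_⟩
    (h.finite_between hK X Z)
  exact h.ne_right_of_lt (hK.trans_lt (hsub hW)) rfl

theorem exists_walk_support_subset (h : StrongProjectionSystem G d θ) (hK : θ ≤ K) (X Z : V) :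
    ∃ p : (projectionGraph d K).Walk X Z,
      ∀ v ∈ p.support, v = X ∨ v = Z ∨ v ∈ between d K X Z := by
  induction hn : (between d K X Z).ncard using Nat.strong_induction_on generalizing X Z with
  | _ n ih
  rcases eq_or_ne X Z with rfl | hne
  · exact ⟨.nil, by simp⟩
  by_cases hadj : (projectionGraph d K).Adj X Z
  · exact ⟨hadj.toWalk, by simp⟩
  obtain ⟨W, hW⟩ := h.exists_mem_between hne hadj
  have hWZ : W ∈ between d K Z X := h.between_comm X Z ▸ hW
  have hltX := h.ncard_between_lt hK hW
  have hltZ := h.ncard_between_lt hK hWZ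
  have hsubX := h.between_subset hK (hK.trans_lt hW)
  have hsubZ := h.between_subset hK (hK.trans_lt hWZ)
  rw [h.between_comm Z X, h.between_comm Z W] at hltZ hsubZ
  obtain ⟨p, hp⟩ := ih _ (hn ▸ hltX) X W rfl
  obtain ⟨q, hq⟩ := ih _ (hn ▸ hltZ) W Z rfl
  refine ⟨p.append q, fun v hv => ?_⟩
  rcases (SimpleGraph.Walk.mem_support_append_iff p q).1 hv with hv | hv
  · rcases hp v hv with rfl | rfl | hv
    exacts [Or.inl rfl, Or.inr (Or.inr hW), Or.inr (Or.inr (hsubX hv))]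
  · rcases hq v hv with rfl | rfl | hv
    exacts [Or.inr (Or.inr hW), Or.inr (Or.inl rfl), Or.inr (Or.inr (hsubZ hv))]

theorem connected_projectionGraph [Nonempty V] (h : StrongProjectionSystem G d θ) (hK : θ ≤ K) :
    (projectionGraph d K).Connected :=
  { preconnected := fun X Z => (h.exists_walk_support_subset hK X Z).choose.reachable }

theorem eq_or_adj_of_adj_of_lt (h : StrongProjectionSystem G d θ) (hK : θ ≤ K)
    (hadj : (projectionGraph d K).Adj X X') (hY : θ < d Y X X') :
    X = Y ∨ (projectionGraph d K).Adj X Y := by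
  by_contra! hcon
  obtain ⟨W, hW⟩ := h.exists_mem_between hcon.1 hcon.2
  exact ((h.projectionGraph_adj.1 hadj).2 W).not_gt (h.between_subset hK hY hW)

theorem exists_mem_between_adj (h : StrongProjectionSystem G d θ) (hK : θ ≤ K) (hne : X ≠ Y)
    (hnadj : ¬ (projectionGraph d K).Adj X Y) :
    ∃ W ∈ between d K X Y, (projectionGraph d K).Adj W Y := by
  obtain ⟨W, hW, hmin⟩ := Set.exists_min_image _ (fun W => (between d K W Y).ncard)
    (h.finite_between hK X Y) (h.exists_mem_between hne hnadj)
  refine ⟨W, hW, by_contra fun hWY => ?_⟩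
  obtain ⟨Z, hZ⟩ := h.exists_mem_between (h.ne_right_of_lt (hK.trans_lt hW)).symm hWY
  rw [h.between_comm] at hW hZ
  have hlt := h.ncard_between_lt hK hZ
  have hle := hmin Z (h.between_comm X Y ▸ h.between_subset hK (hK.trans_lt hW) hZ)
  rw [h.between_comm Y Z, h.between_comm Y W] at hlt
  lia

/-- A vertex `W` separating `X` from `Y` and adjacent to `Y` is not close to the edge from `X` to
`X'`, so it also separates `X'` from `Y`. -/
theorem projection_eq_of_adj (h : StrongProjectionSystem G d θ) (hK : 2 * θ ≤ K)
    (hadj : (projectionGraph d K).Adj X X') (hY : 3 ≤ (projectionGraph d K).dist X Y) (U : V) :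
    d Y X U = d Y X' U := by
  have : Nonempty V := ⟨X⟩
  have hconn := h.connected_projectionGraph (show θ ≤ K by lia)
  obtain ⟨W, hW, hWY⟩ := h.exists_mem_between_adj (X := X) (Y := Y) (show θ ≤ K by lia)
    (by rintro rfl; simp at hY)
    (fun hXY => by rw [SimpleGraph.dist_eq_one_iff_adj.2 hXY] at hY; lia)
  rw [mem_between] at hW
  have hWY_one := SimpleGraph.dist_eq_one_iff_adj.2 hWY
  have htri := hconn.dist_triangle (u := X) (v := W) (w := Y)
  have hXW : ¬ (projectionGraph d K).Adj X W := fun hXW => by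
    rw [SimpleGraph.dist_eq_one_iff_adj.2 hXW] at htri
    lia
  have hXX' : d W X X' ≤ θ := by
    by_contra! hlt
    exact (h.eq_or_adj_of_adj_of_lt (by lia) hadj hlt).elim
      (h.ne_left_of_lt (show θ < d W X Y by lia)) hXW
  have hX'W : X' ≠ W := by
    rintro rfl
    exact hXW hadj
  have hW_tri := h.triangle W X X' Y hX'W
  rw [h.projection_eq (show θ < d W X Y by lia), h.projection_eq (show θ < d W X' Y by lia)]

theorem projection_eq_of_dist_add_three_le (h : StrongProjectionSystem G d θ) (hK : 2 * θ ≤ K)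
    (hY : (projectionGraph d K).dist X X' + 3 ≤ (projectionGraph d K).dist X Y) (U : V) :
    d Y X U = d Y X' U := by
  have : Nonempty V := ⟨X⟩
  have hconn := h.connected_projectionGraph (show θ ≤ K by lia)
  obtain ⟨p, hp⟩ := hconn.exists_walk_length_eq_dist X X'
  rw [← hp] at hY
  clear hp
  induction p with
  | nil => rfl
  | @cons A B C hadj p ih =>
    rw [SimpleGraph.Walk.length_cons] at hY
    have hAB := SimpleGraph.dist_eq_one_iff_adj.2 hadj
    have htri := hconn.dist_triangle (u := A) (v := B) (w := Y)
    rw [h.projection_eq_of_adj hK hadj (by lia), ih (by lia)]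

theorem mem_between_or_mem_between (h : StrongProjectionSystem G d θ) (hK : 2 * θ ≤ K)
    (hY : Y ∈ between d K X Z) (hW : W ∈ between d K X Z) (hne : Y ≠ W) :
    Y ∈ between d K X W ∨ W ∈ between d K X Y := by
  rw [mem_between] at hY hW
  have htri := h.triangle Y X W Z hne.symm
  rcases lt_or_ge θ (d Y W Z) with hlt | hle
  · right
    rwa [mem_between, h.comm, ← h.projection_eq_left hlt X, h.comm]
  · left
    have hWY := h.behrstock (show θ < d Y X W by lia)
    have htri' := h.triangle W X Y Z hne
    rwa [mem_between, h.comm, ← h.projection_eq_left (show θ < d W Y Z by lia) X, h.comm]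

theorem lt_or_lt_of_adj (h : StrongProjectionSystem G d θ) (hK : 2 * θ ≤ K)
    (hadj : (projectionGraph d K).Adj Z Z') (hYW : Y ∈ between d K X W)
    (hY : Y ∈ between d K X Z) (hW : W ∈ between d K X Z) :
    θ < d Y X Z' ∨ θ < d W X Z' := by
  by_contra! hcon
  obtain ⟨hYZ', hWZ'⟩ := hcon
  rw [mem_between] at hYW hY hW
  have hWZZ' := (h.projectionGraph_adj.1 hadj).2 W
  rw [h.comm] at hWZZ'
  have hWX := h.projection_eq (show θ < d Y X W by lia)
  rw [hWX] at hW hWZ'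
  have hYZ := h.projection_eq_left (show θ < d W Y Z by lia)
  have hZ'Y : Z' ≠ Y := by
    rintro rfl
    lia
  have htri := h.triangle Y X Z' Z hZ'Y
  have hlt : θ < d Y Z' W := by
    rw [h.comm, ← hYZ, h.comm]
    lia
  rw [h.projection_eq hlt] at hWZZ'
  lia

/-- Of the elements separating `X` from `Z` but not from `Z'`, at most one sees `X` and `Z'` at
distance more than `θ`, and at most one at distance at most `θ`. -/
theorem ncard_between_le_of_adj (h : StrongProjectionSystem G d θ) (hK : 2 * θ ≤ K)
    (hadj : (projectionGraph d K).Adj Z Z') :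
    (between d K X Z).ncard ≤ (between d K X Z').ncard + 2 := by
  set lost := between d K X Z \ between d K X Z'
  have hfar : (lost ∩ {Y | θ < d Y X Z'}).Subsingleton := by
    rintro Y ⟨⟨hY, hY'⟩, hYlt⟩ W ⟨⟨hW, hW'⟩, hWlt⟩
    by_contra hne
    rcases h.mem_between_or_mem_between hK hY hW hne with hYW | hWY
    · exact hY' (h.between_subset (by lia) hWlt hYW)
    · exact hW' (h.between_subset (by lia) hYlt hWY)
  have hnear : (lost \ {Y | θ < d Y X Z'}).Subsingleton := by
    rintro Y ⟨⟨hY, -⟩, hYle⟩ W ⟨⟨hW, -⟩, hWle⟩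
    by_contra hne
    rcases h.mem_between_or_mem_between hK hY hW hne with hYW | hWY
    · exact (h.lt_or_lt_of_adj hK hadj hYW hY hW).elim hYle hWle
    · exact (h.lt_or_lt_of_adj hK hadj hWY hW hY).elim hWle hYle
  have hone : ∀ s : Set V, s.Subsingleton → s.ncard ≤ 1 := fun s hs =>
    (Set.ncard_le_one hs.finite).2 fun _ hY _ hW => hs hY hW
  have hlost : lost.ncard ≤ 1 + 1 := by
    rw [← Set.inter_union_sdiff lost {Y | θ < d Y X Z'}]
    exact (Set.ncard_union_le _ _).trans
      (Nat.add_le_add (hone _ hfar) (hone _ hnear))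
  exact (Set.ncard_le_ncard_sdiff_add_ncard _ _ (h.finite_between (show θ ≤ K by lia) X Z')).trans
    (by lia)

theorem ncard_between_le_add_two_mul_dist (h : StrongProjectionSystem G d θ) (hK : 2 * θ ≤ K)
    (X Z Z' : V) :
    (between d K X Z).ncard ≤
      (between d K X Z').ncard + 2 * (projectionGraph d K).dist Z Z' := by
  have : Nonempty V := ⟨X⟩
  obtain ⟨p, hp⟩ :=
    (h.connected_projectionGraph (show θ ≤ K by lia)).exists_walk_length_eq_dist Z Z'
  rw [← hp]
  clear hp
  induction p with
  | nil => simp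
  | @cons A B C hadj p ih =>
    rw [SimpleGraph.Walk.length_cons]
    have hle := h.ncard_between_le_of_adj hK hadj (X := X)
    lia

end StrongProjectionSystem

end ProjectionGraph

/-! ### Hyperbolicity of the projection graph -/

section ProjectionGraphHyperbolic

namespace GraphRealization

variable {V : Type*} {X : SimpleGraph V} {hX : X.Connected}

theorem dist_le_of_dist_ofVertex_le_one {p q : GraphRealization hX} {v w : V}
    (hp : dist p (ofVertex hX v) ≤ 1) (hq : dist q (ofVertex hX w) ≤ 1) :
    X.dist v w ≤ dist p q + 2 := by
  have htri := dist_triangle4_left p q (ofVertex hX v) (ofVertex hX w)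
  rw [dist_ofVertex] at htri
  linarith

theorem le_dist_of_dist_ofVertex_le_one {p q : GraphRealization hX} {v w : V}
    (hp : dist p (ofVertex hX v) ≤ 1) (hq : dist q (ofVertex hX w) ≤ 1) :
    dist p q - 2 ≤ X.dist v w := by
  have htri := dist_triangle4_right p q (ofVertex hX v) (ofVertex hX w)
  rw [dist_ofVertex] at htri
  linarith

/-- A walk staying near a geodesic and passing from one side of the point `p` to the other comes
near `p`. -/
theorem exists_mem_support_dist_le {x y p : GraphRealization hX} {Γ : Set (GraphRealization hX)}
    (hΓ : IsGeodesicSegment Γ x y) (hp : p ∈ Γ) {r : ℝ} {a b : V} (w : X.Walk a b)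
    (hw : ∀ v ∈ w.support, ∃ s ∈ Γ, dist s (ofVertex hX v) ≤ r)
    (ha : ∃ s ∈ Γ, dist s (ofVertex hX a) ≤ r ∧ dist x s ≤ dist x p)
    (hb : ∃ s ∈ Γ, dist s (ofVertex hX b) ≤ r ∧ dist x p ≤ dist x s) :
    ∃ v ∈ w.support, dist p (ofVertex hX v) ≤ 3 * r + 1 := by
  have dist_le_of_between {v v' : V} {s s' : GraphRealization hX} (hs : s ∈ Γ) (hs' : s' ∈ Γ)
      (hv : dist s (ofVertex hX v) ≤ r) (hv' : dist s' (ofVertex hX v') ≤ r)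
      (hvv' : (X.dist v v' : ℝ) ≤ 1) (hsp : dist x s ≤ dist x p) (hps' : dist x p ≤ dist x s') :
      dist p (ofVertex hX v) ≤ 3 * r + 1 := by
    have htri := dist_triangle4_right s s' (ofVertex hX v) (ofVertex hX v')
    have htri' := dist_triangle p s (ofVertex hX v)
    rw [dist_ofVertex, dist_comm s s', hΓ.dist_eq_abs_sub hs' hs,
      abs_of_nonneg (by linarith)] at htri
    rw [hΓ.dist_eq_abs_sub hp hs, abs_of_nonneg (by linarith)] at htri'
    linarith
  induction w with
  | @nil a =>
    obtain ⟨s, hs, hsa, hsp⟩ := ha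
    obtain ⟨s', hs', hsa', hps'⟩ := hb
    exact ⟨a, by simp, dist_le_of_between hs hs' hsa hsa' (by simp) hsp hps'⟩
  | @cons a c b hadj w ih =>
    obtain ⟨s', hs', hsc⟩ := hw c (by simp)
    by_cases hsp' : dist x s' ≤ dist x p
    · obtain ⟨v, hv, hpv⟩ := ih (fun v hv => hw v (by simp [hv])) ⟨s', hs', hsc, hsp'⟩ hb
      exact ⟨v, by simp [hv], hpv⟩
    · obtain ⟨s, hs, hsa, hsp⟩ := ha
      refine ⟨a, by simp, dist_le_of_between hs hs' hsa hsc ?_ hsp (by linarith)⟩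
      rw [SimpleGraph.dist_eq_one_iff_adj.2 hadj, Nat.cast_one]

end GraphRealization

namespace StrongProjectionSystem

open GraphRealization

variable {V G : Type*} [Group G] [MulAction G V] {d : V → V → V → ℕ} {θ K : ℕ}
  {hX : (projectionGraph d K).Connected} {x y : GraphRealization hX} {a b Y : V}
  {Γ : Set (GraphRealization hX)}

theorem projection_eq_of_dist_le_one (h : StrongProjectionSystem G d θ) (hK : 2 * θ ≤ K)
    (ha : dist x (ofVertex hX a) ≤ 1) (hb : dist y (ofVertex hX b) ≤ 1) (hxy : dist x y ≤ 1)
    (hY : 7 ≤ dist x (ofVertex hX Y)) (U : V) : d Y a U = d Y b U := by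
  refine h.projection_eq_of_dist_add_three_le hK ?_ U
  have hab := dist_le_of_dist_ofVertex_le_one ha hb
  have haY := dist_triangle x (ofVertex hX a) (ofVertex hX Y)
  rw [dist_ofVertex] at haY
  exact_mod_cast (show ((projectionGraph d K).dist a b + 3 : ℝ) ≤ (projectionGraph d K).dist a Y by
    linarith)

theorem projection_eq_of_forall_mem_segment (h : StrongProjectionSystem G d θ) (hK : 2 * θ ≤ K)
    (ha : dist x (ofVertex hX a) ≤ 1) (hb : dist y (ofVertex hX b) ≤ 1)
    (hΓ : IsGeodesicSegment Γ x y) (hfar : ∀ s ∈ Γ, 7 ≤ dist s (ofVertex hX Y)) (U : V) :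
    d Y a U = d Y b U := by
  have projection_eq (n : ℕ) : ∀ s ∈ Γ, dist x s ≤ n → ∀ v, dist s (ofVertex hX v) ≤ 1 →
      d Y a U = d Y v U := by
    induction n with
    | zero =>
      intro s _ hsn v hv
      exact h.projection_eq_of_dist_le_one hK ha hv (by push_cast at hsn; linarith)
        (hfar x hΓ.left_mem) U
    | succ n ih =>
      intro s hs hsn v hv
      have hsxy := hΓ.dist_add_dist hs
      have hsy : 0 ≤ dist s y := dist_nonneg
      obtain ⟨s', hs', hxs', -⟩ := hΓ.exists_mem_dist_eq (le_max_left 0 (dist x s - 1))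
        (max_le dist_nonneg (by linarith))
      obtain ⟨v', hv'⟩ := exists_dist_ofVertex_le_one s'
      have hxs'n : dist x s' ≤ n := by
        rw [hxs']
        exact max_le n.cast_nonneg (by push_cast at hsn; linarith)
      have hs's : dist s' s ≤ 1 := by
        rw [hΓ.dist_eq_abs_sub hs' hs, hxs', abs_le]
        exact ⟨by linarith [le_max_right 0 (dist x s - 1)],
          by linarith [max_le dist_nonneg (sub_le_self (dist x s) zero_le_one)]⟩
      exact (ih s' hs' hxs'n v' hv').trans
        (h.projection_eq_of_dist_le_one hK hv' hv hs's (hfar s' hs') U)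
  obtain ⟨n, hn⟩ := exists_nat_ge (dist x y)
  exact projection_eq n y hΓ.right_mem hn b hb

theorem exists_mem_segment_dist_le (h : StrongProjectionSystem G d θ) (hK : 2 * θ ≤ K)
    (ha : dist x (ofVertex hX a) ≤ 1) (hb : dist y (ofVertex hX b) ≤ 1)
    (hΓ : IsGeodesicSegment Γ x y) (hY : θ < d Y a b) :
    ∃ s ∈ Γ, dist s (ofVertex hX Y) ≤ 7 := by
  by_contra! hfar
  rw [h.projection_eq_of_forall_mem_segment hK ha hb hΓ (fun s hs => (hfar s hs).le)] at hY
  exact hY.not_ge (h.self_le Y b)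

theorem exists_eq_or_mem_between_dist_le (h : StrongProjectionSystem G d θ) (hK : 2 * θ ≤ K)
    (ha : dist x (ofVertex hX a) ≤ 1) (hb : dist y (ofVertex hX b) ≤ 1)
    (hΓ : IsGeodesicSegment Γ x y) {p : GraphRealization hX} (hp : p ∈ Γ) :
    ∃ v, (v = a ∨ v = b ∨ v ∈ between d K a b) ∧ dist p (ofVertex hX v) ≤ 22 := by
  obtain ⟨w, hw⟩ := h.exists_walk_support_subset (show θ ≤ K by lia) a b
  have hxp := hΓ.dist_add_dist hp
  have hpy : 0 ≤ dist p y := dist_nonneg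
  have hnear (v : V) (hv : v ∈ w.support) : ∃ s ∈ Γ, dist s (ofVertex hX v) ≤ 7 := by
    rcases hw v hv with rfl | rfl | hv
    · exact ⟨x, hΓ.left_mem, by linarith⟩
    · exact ⟨y, hΓ.right_mem, by linarith⟩
    · rw [mem_between] at hv
      exact h.exists_mem_segment_dist_le hK ha hb hΓ (by lia)
  obtain ⟨v, hv, hpv⟩ := GraphRealization.exists_mem_support_dist_le hΓ hp w hnear
    ⟨x, hΓ.left_mem, by linarith, by rw [dist_self]; exact dist_nonneg⟩
    ⟨y, hΓ.right_mem, by linarith, by linarith⟩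
  exact ⟨v, hw v hv, by linarith⟩

/-- The bottleneck property: a vertex separating `a` from `b` is near any geodesic from `a` to
`b`, and by the triangle inequality for `d` it also separates `c` from `a` or from `b`. -/
theorem deltaHyperbolic (h : StrongProjectionSystem G d θ) (hK : 2 * θ ≤ K)
    (hX : (projectionGraph d K).Connected) : DeltaHyperbolic (GraphRealization hX) 29 := by
  intro x y z Γ₁ Γ₂ Γ₃ h₁ h₂ h₃ p hp
  suffices ∃ q ∈ Γ₂ ∪ Γ₃, dist p q ≤ 29 by
    obtain ⟨q, hq, hpq⟩ := this
    exact (Metric.infDist_le_dist_of_mem hq).trans hpq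
  obtain ⟨a, ha⟩ := exists_dist_ofVertex_le_one x
  obtain ⟨b, hb⟩ := exists_dist_ofVertex_le_one y
  obtain ⟨c, hc⟩ := exists_dist_ofVertex_le_one z
  obtain ⟨v, hv, hpv⟩ := h.exists_eq_or_mem_between_dist_le hK ha hb h₁ hp
  suffices ∃ q ∈ Γ₂ ∪ Γ₃, dist q (ofVertex hX v) ≤ 7 by
    obtain ⟨q, hq, hqv⟩ := this
    exact ⟨q, hq, (dist_triangle_right p q (ofVertex hX v)).trans (by linarith)⟩
  rcases hv with rfl | rfl | hv
  · exact ⟨x, Or.inr h₃.right_mem, by linarith⟩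
  · exact ⟨y, Or.inl h₂.left_mem, by linarith⟩
  rcases eq_or_ne c v with rfl | hcv
  · exact ⟨z, Or.inl h₂.right_mem, by linarith⟩
  have hor : θ < d v b c ∨ θ < d v c a := by
    have htri := h.triangle v a c b hcv
    rw [mem_between] at hv
    rw [h.comm v a c, h.comm v c b] at htri
    lia
  rcases hor with hlt | hlt
  · obtain ⟨s, hs, hsv⟩ := h.exists_mem_segment_dist_le hK hb hc h₂ hlt
    exact ⟨s, Or.inl hs, hsv⟩
  · obtain ⟨s, hs, hsv⟩ := h.exists_mem_segment_dist_le hK hc ha h₃ hlt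
    exact ⟨s, Or.inr hs, hsv⟩

end StrongProjectionSystem

end ProjectionGraphHyperbolic

/-! ### Acylindricity of the action on the projection graph -/

section ProjectionGraphAcylindrical

theorem encard_le_encard_image_smul_mul_encard_stabilizer {G α : Type*} [Group G]
    [MulAction G α] (x : α) (P : Set G) :
    P.encard ≤ ((fun g : G => g • x) '' P).encard * (MulAction.stabilizer G x : Set G).encard := by
  have hsection (y : α) : ∃ k : G, y ∈ MulAction.orbit G x → k • x = y := by
    by_cases hy : y ∈ MulAction.orbit G x
    exacts [⟨hy.choose, fun _ => hy.choose_spec⟩, ⟨1, fun hy' => absurd hy' hy⟩]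
  choose k hk using hsection
  have hk_smul (g : G) : k (g • x) • x = g • x := hk _ ⟨g, rfl⟩
  rw [← Set.encard_prod]
  refine Set.encard_le_encard_of_injOn (f := fun g => (g • x, (k (g • x))⁻¹ * g)) ?_ ?_
  · intro g hg
    refine ⟨⟨g, hg, rfl⟩, ?_⟩
    rw [SetLike.mem_coe, MulAction.mem_stabilizer_iff, mul_smul, inv_smul_eq_iff, hk_smul]
  · intro g _ g' _ heq
    obtain ⟨hx, hmul⟩ := Prod.mk.inj heq
    rw [hx] at hmul
    exact mul_left_cancel hmul

theorem exists_mem_support_dist_eq {V : Type*} {X : SimpleGraph V} (hX : X.Connected) {a u b : V}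
    (w : X.Walk u b) {n : ℕ} (hu : X.dist a u ≤ n) (hb : n ≤ X.dist a b) :
    ∃ v ∈ w.support, X.dist a v = n := by
  induction w with
  | nil => exact ⟨_, by simp, le_antisymm hu hb⟩
  | @cons u v b hadj w ih =>
    by_cases hv : X.dist a v ≤ n
    · obtain ⟨v', hv', hn⟩ := ih hv hb
      exact ⟨v', by simp [hv'], hn⟩
    · have huv := SimpleGraph.dist_eq_one_iff_adj.2 hadj
      have htri := hX.dist_triangle (u := a) (v := u) (w := v)
      exact ⟨u, by simp, by lia⟩

namespace StrongProjectionSystem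

variable {V G : Type*} [Group G] [MulAction G V] {d : V → V → V → ℕ} {θ K m : ℕ} {a b U W Z : V}
  {g : G}

theorem exists_mem_between_dist_eq (h : StrongProjectionSystem G d θ) (hK : θ ≤ K) {n : ℕ}
    (h₀ : 0 < n) (hn : n < (projectionGraph d K).dist a b) :
    ∃ v ∈ between d K a b, (projectionGraph d K).dist a v = n := by
  have : Nonempty V := ⟨a⟩
  obtain ⟨w, hw⟩ := h.exists_walk_support_subset hK a b
  obtain ⟨v, hv, hav⟩ := exists_mem_support_dist_eq (h.connected_projectionGraph hK) (a := a) w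
    (by simp) hn.le
  rcases hw v hv with rfl | rfl | hv
  · simp [h₀.ne] at hav
  · exact absurd hav hn.ne'
  · exact ⟨v, hv, hav⟩

theorem injOn_ncard_between (h : StrongProjectionSystem G d θ) (hK : 2 * θ ≤ K) (X Z : V) :
    Set.InjOn (fun v => (between d K X v).ncard) (between d K X Z) := by
  intro v hv w hw heq
  by_contra hne
  have hlt {v w : V} (hvw : v ∈ between d K X w) :
      (between d K X v).ncard < (between d K X w).ncard :=
    h.ncard_between_lt (show θ ≤ K by lia) hvw
  rcases h.mem_between_or_mem_between hK hv hw hne with hvw | hwv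
  exacts [(hlt hvw).ne heq, (hlt hwv).ne' heq]

theorem smul_mem_between (h : StrongProjectionSystem G d θ) (hK : 2 * θ ≤ K)
    (ha : (projectionGraph d K).dist a (g • a) ≤ m) (hb : (projectionGraph d K).dist b (g • b) ≤ m)
    (hU : U ∈ between d K a b) (haU : m + 3 ≤ (projectionGraph d K).dist a U)
    (hbU : m + 3 ≤ (projectionGraph d K).dist b U) : g • U ∈ between d K a b := by
  have : Nonempty V := ⟨a⟩
  have : IsGraphAction G (projectionGraph d K) := h.isGraphAction K
  have hX := h.connected_projectionGraph (show θ ≤ K by lia)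
  have hproj {c : V} (hc : (projectionGraph d K).dist c (g • c) ≤ m)
      (hcU : m + 3 ≤ (projectionGraph d K).dist c U) (W : V) :
      d (g • U) (g • c) W = d (g • U) c W :=
    h.projection_eq_of_dist_add_three_le hK
      (by rw [IsGraphAction.dist_smul hX, SimpleGraph.dist_comm]; lia) W
  rwa [mem_between, ← hproj ha haU, h.comm, ← hproj hb hbU, h.smul, h.comm]

theorem ncard_between_smul_mem_Icc (h : StrongProjectionSystem G d θ) (hK : 2 * θ ≤ K)
    (ha : (projectionGraph d K).dist a (g • a) ≤ m) (U : V) :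
    (between d K a (g • U)).ncard ∈
      Set.Icc ((between d K a U).ncard - 2 * m) ((between d K a U).ncard + 2 * m) := by
  have hle := h.ncard_between_le_add_two_mul_dist hK (g • U) a (g • a)
  have hge := h.ncard_between_le_add_two_mul_dist hK (g • U) (g • a) a
  rw [SimpleGraph.dist_comm] at hge
  rw [h.between_comm, h.between_comm _ (g • a), h.ncard_between_smul] at hle
  rw [h.between_comm, h.between_comm _ a, h.ncard_between_smul] at hge
  exact ⟨by lia, by lia⟩

/-- The translates of `U` by elements moving `a` and `b` by at most `m` separate `a` from `b`, and
their positions in the linear order of the separating elements vary by at most `2 * m`. -/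
theorem encard_image_smul_le (h : StrongProjectionSystem G d θ) (hK : 2 * θ ≤ K)
    (hU : U ∈ between d K a b) (haU : m + 3 ≤ (projectionGraph d K).dist a U)
    (hbU : m + 3 ≤ (projectionGraph d K).dist b U) :
    ((fun g : G => g • U) '' {g : G | (projectionGraph d K).dist a (g • a) ≤ m ∧
      (projectionGraph d K).dist b (g • b) ≤ m}).encard ≤ (4 * m + 1 : ℕ) := by
  set r := (between d K a U).ncard
  calc _ ≤ (Set.Icc (r - 2 * m) (r + 2 * m)).encard := by
        refine Set.encard_le_encard_of_injOn (f := fun v => (between d K a v).ncard) ?_ ?_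
        · rintro _ ⟨g, hg, rfl⟩
          exact h.ncard_between_smul_mem_Icc hK hg.1 U
        · refine (h.injOn_ncard_between hK a b).mono ?_
          rintro _ ⟨g, hg, rfl⟩
          exact h.smul_mem_between hK hg.1 hg.2 hU haU hbU
    _ ≤ (4 * m + 1 : ℕ) := by
        rw [← Finset.coe_Icc, Set.encard_coe_eq_coe_finsetCard, Nat.card_Icc]
        exact_mod_cast (show r + 2 * m + 1 - (r - 2 * m) ≤ 4 * m + 1 by lia)

theorem encard_setOf_dist_smul_le (h : StrongProjectionSystem G d θ) (hK : 2 * θ ≤ K) {B : ℕ}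
    (hB : ∀ W Z : V, W ≠ Z → (MulAction.stabilizer G (W, Z) : Set G).encard ≤ B)
    (hab : 2 * m + 8 ≤ (projectionGraph d K).dist a b) :
    {g : G | (projectionGraph d K).dist a (g • a) ≤ m ∧
      (projectionGraph d K).dist b (g • b) ≤ m}.encard ≤ ((4 * m + 1) ^ 2 * B : ℕ) := by
  set P := {g : G | (projectionGraph d K).dist a (g • a) ≤ m ∧
    (projectionGraph d K).dist b (g • b) ≤ m}
  have : Nonempty V := ⟨a⟩
  have hX := h.connected_projectionGraph (show θ ≤ K by lia)
  have exists_middle (n : ℕ) (hn : m + 3 ≤ n) (hn' : n ≤ m + 4) : ∃ U ∈ between d K a b,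
      (projectionGraph d K).dist a U = n ∧ m + 3 ≤ (projectionGraph d K).dist b U := by
    obtain ⟨U, hU, haU⟩ := h.exists_mem_between_dist_eq (show θ ≤ K by lia) (show 0 < n by lia)
      (show n < (projectionGraph d K).dist a b by lia)
    have htri := hX.dist_triangle (u := a) (v := U) (w := b)
    rw [SimpleGraph.dist_comm (u := U)] at htri
    exact ⟨U, hU, haU, by lia⟩
  obtain ⟨W, hW, haW, hbW⟩ := exists_middle (m + 3) (by lia) (by lia)
  obtain ⟨Z, hZ, haZ, hbZ⟩ := exists_middle (m + 4) (by lia) (by lia)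
  have himage : ((fun g : G => g • (W, Z)) '' P).encard ≤ (4 * m + 1 : ℕ) * (4 * m + 1 : ℕ) := by
    refine le_trans (Set.encard_le_encard (t := ((fun g : G => g • W) '' P) ×ˢ
      ((fun g : G => g • Z) '' P)) ?_) ?_
    · rintro _ ⟨g, hg, rfl⟩
      exact ⟨⟨g, hg, rfl⟩, ⟨g, hg, rfl⟩⟩
    · rw [Set.encard_prod]
      exact mul_le_mul' (h.encard_image_smul_le hK hW haW.ge hbW)
        (h.encard_image_smul_le hK hZ (by lia) hbZ)
  have hWZ : W ≠ Z := by
    rintro rfl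
    lia
  refine (encard_le_encard_image_smul_mul_encard_stabilizer (W, Z) P).trans
    ((mul_le_mul' himage (hB W Z hWZ)).trans_eq ?_)
  push_cast
  ring

theorem acylindricalAction (h : StrongProjectionSystem G d θ) (hK : 2 * θ ≤ K)
    [IsGraphAction G (projectionGraph d K)] (hX : (projectionGraph d K).Connected) {B : ℕ}
    (hB : ∀ W Z : V, W ≠ Z → (MulAction.stabilizer G (W, Z) : Set G).encard ≤ B) :
    AcylindricalAction fun (g : G) (x : GraphRealization hX) => g • x := by
  intro ε _
  obtain ⟨m, hm⟩ := exists_nat_ge (ε + 2)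
  refine ⟨2 * m + 10, (4 * m + 1) ^ 2 * B + 1, by positivity, by positivity, fun x y hxy => ?_⟩
  rw [← Set.encard_le_coe_iff_finite_ncard_le]
  obtain ⟨a, ha⟩ := GraphRealization.exists_dist_ofVertex_le_one x
  obtain ⟨b, hb⟩ := GraphRealization.exists_dist_ofVertex_le_one y
  have hab : 2 * m + 8 ≤ (projectionGraph d K).dist a b := by
    have hle := GraphRealization.le_dist_of_dist_ofVertex_le_one ha hb
    exact_mod_cast (show (2 * m + 8 : ℝ) ≤ (projectionGraph d K).dist a b by linarith)
  have hmove {x : GraphRealization hX} {a : V} {g : G}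
      (ha : dist x (GraphRealization.ofVertex hX a) ≤ 1) (hg : dist x (g • x) ≤ ε) :
      (projectionGraph d K).dist a (g • a) ≤ m := by
    have hga : dist (g • x) (GraphRealization.ofVertex hX (g • a)) ≤ 1 := by
      rwa [← GraphRealization.smul_ofVertex, dist_smul]
    have hle := GraphRealization.dist_le_of_dist_ofVertex_le_one ha hga
    exact_mod_cast (show ((projectionGraph d K).dist a (g • a) : ℝ) ≤ m by linarith)
  have hsub : {g : G | dist x (g • x) ≤ ε ∧ dist y (g • y) ≤ ε} ⊆
      {g : G | (projectionGraph d K).dist a (g • a) ≤ m ∧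
        (projectionGraph d K).dist b (g • b) ≤ m} :=
    fun g hg => ⟨hmove ha hg.1, hmove hb hg.2⟩
  refine (Set.encard_le_encard hsub).trans ((h.encard_setOf_dist_smul_le hK hB hab).trans ?_)
  exact_mod_cast Nat.le_succ _

end StrongProjectionSystem

end ProjectionGraphAcylindrical

/-! ### Limit points of the action on the projection graph -/

section ProjectionGraphNonelementary

open Filter

theorem FourPointHyperbolic.eventuallyClose_of_bequiv {S : Type*} [MetricSpace S] {D : ℝ} {e : S}
    (hD : FourPointHyperbolic S D) {a b : BSeq S e} (h : bequiv e a b) (R : ℝ) :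
    EventuallyClose e R a.1 b.1 := by
  obtain ⟨N, hN⟩ := eventually_atTop.1 (tendsto_atTop.1 h (R + D + D))
  obtain ⟨Na, ha⟩ := EventuallyClose.refl a (R + D + D)
  obtain ⟨Nb, hb⟩ := EventuallyClose.refl b (R + D)
  refine ⟨max N (max Na Nb), fun i hi j hj => ?_⟩
  have hi' : Na ≤ i := (le_max_left Na Nb).trans (le_of_max_le_right hi)
  have hj' : Nb ≤ j := (le_max_right Na Nb).trans (le_of_max_le_right hj)
  have hai := ha i hi' (max N (max Na Nb)) ((le_max_left Na Nb).trans (le_max_right _ _))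
  have hbj := hb (max N (max Na Nb)) ((le_max_right Na Nb).trans (le_max_right _ _)) j hj'
  have hab := hD.sub_le_gprod hai (hN _ (le_max_left _ _))
  exact (by linarith : R ≤ R + D - D).trans
    (hD.sub_le_gprod (by linarith : R + D ≤ gprod e (a.1 i) _) hbj)

theorem ConvToInfty.comp {S : Type*} [MetricSpace S] {e : S} {s : ℕ → S} (hs : ConvToInfty e s)
    {φ : ℕ → ℕ} (hφ : Tendsto φ atTop atTop) : ConvToInfty e fun n => s (φ n) := by
  unfold ConvToInfty at hs ⊢
  rw [← prod_atTop_atTop_eq] at hs ⊢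
  exact hs.comp (hφ.prodMap hφ)

theorem FourPointHyperbolic.gBoundary_mk_ne_mk {S : Type*} [MetricSpace S] {D C : ℝ} {e : S}
    (hD : FourPointHyperbolic S D) {a b : BSeq S e}
    (h : ∀ᶠ k in atTop, gprod e (a.1 k) (b.1 k) ≤ C) :
    (Quot.mk _ a : GBoundary S e) ≠ Quot.mk _ b := fun heq =>
  let toBoundary : GBoundary S e → TopologicalBoundary hD e :=
    Quot.lift (fun a => SeparationQuotient.mk a) fun _ _ hab =>
      TopologicalBoundary.mk_eq_mk_iff.2 (hD.eventuallyClose_of_bequiv hab)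
  not_forall_eventuallyClose h (TopologicalBoundary.mk_eq_mk_iff.1 (congrArg toBoundary heq))

variable {V G : Type*} [Group G] [MulAction G V] {d : V → V → V → ℕ} {θ K : ℕ}

/-- A sequence of elements of `V` each of which separates its two neighbours. -/
def IsSeparatingChain (d : V → V → V → ℕ) (K : ℕ) (f : ℕ → V) : Prop :=
  ∀ j, K < d (f (j + 1)) (f j) (f (j + 2))

namespace IsSeparatingChain

variable {f f' : ℕ → V}

theorem smul (h : StrongProjectionSystem G d θ) (hf : IsSeparatingChain d K f) (g : G) :
    IsSeparatingChain d K fun n => g • f n := fun j => by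
  rw [h.smul]
  exact hf j

theorem projection_eq_pred (hf : IsSeparatingChain d K f) (h : StrongProjectionSystem G d θ)
    (hK : θ ≤ K) (i n : ℕ) (U : V) :
    d (f (i + n + 1)) (f i) U = d (f (i + n + 1)) (f (i + n)) U := by
  induction n generalizing U with
  | zero => rfl
  | succ n ih =>
    have hsep := hf (i + n)
    rw [← ih] at hsep
    exact h.projection_eq (hK.trans_lt hsep) U

theorem projection_eq_succ (hf : IsSeparatingChain d K f) (h : StrongProjectionSystem G d θ)
    (hK : θ ≤ K) (j n : ℕ) (U : V) : d (f j) (f (j + n + 1)) U = d (f j) (f (j + 1)) U := by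
  induction n generalizing j U with
  | zero => rfl
  | succ n ih =>
    have hsep := hf j
    rw [h.comm, ← ih (j + 1) (f j), show j + 1 + n + 1 = j + (n + 1) + 1 by lia] at hsep
    exact h.projection_eq (hK.trans_lt hsep) U

theorem mem_between (hf : IsSeparatingChain d K f) (h : StrongProjectionSystem G d θ)
    (hK : θ ≤ K) {i j l : ℕ} (hij : i < j) (hjl : j < l) : f j ∈ between d K (f i) (f l) := by
  obtain ⟨n, rfl⟩ := Nat.exists_eq_add_of_lt hij
  obtain ⟨m, rfl⟩ := Nat.exists_eq_add_of_lt hjl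
  rw [_root_.mem_between, hf.projection_eq_pred h hK, h.comm, hf.projection_eq_succ h hK, h.comm]
  exact hf (i + n)

theorem le_ncard_between (hf : IsSeparatingChain d K f) (h : StrongProjectionSystem G d θ)
    (hK : θ ≤ K) (n : ℕ) : n ≤ (between d K (f 0) (f (n + 1))).ncard := by
  induction n with
  | zero => exact Nat.zero_le _
  | succ n ih =>
    exact ih.trans_lt
      (h.ncard_between_lt hK (hf.mem_between h hK n.succ_pos (Nat.lt_succ_self _)))

theorem le_two_mul_dist_add_one (hf : IsSeparatingChain d K f) (h : StrongProjectionSystem G d θ)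
    (hK : 2 * θ ≤ K) (n : ℕ) : n ≤ 2 * (projectionGraph d K).dist (f 0) (f n) + 1 := by
  cases n with
  | zero => exact Nat.zero_le _
  | succ n =>
    have hle := h.ncard_between_le_add_two_mul_dist hK (f 0) (f (n + 1)) (f 0)
    have hempty : (between d K (f 0) (f 0)).ncard = 0 := by
      rw [Set.ncard_eq_zero (h.finite_between (show θ ≤ K by lia) _ _)]
      exact Set.eq_empty_of_forall_notMem fun W hW =>
        (h.self_le W (f 0)).not_gt ((show θ ≤ K by lia).trans_lt hW)
    rw [hempty, SimpleGraph.dist_comm] at hle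
    have hn := hf.le_ncard_between h (show θ ≤ K by lia) n
    lia

end IsSeparatingChain

namespace StrongProjectionSystem

open GraphRealization

theorem dist_add_dist_ofVertex_le (h : StrongProjectionSystem G d θ) (hK : 2 * θ ≤ K)
    (hX : (projectionGraph d K).Connected) {u v w : V} (hw : θ < d w u v) :
    dist (ofVertex hX u) (ofVertex hX w) + dist (ofVertex hX w) (ofVertex hX v) ≤
      dist (ofVertex hX u) (ofVertex hX v) + 14 := by
  obtain ⟨Γ, hΓ⟩ := geodesicSpace hX (ofVertex hX u) (ofVertex hX v)
  obtain ⟨s, hs, hsw⟩ := h.exists_mem_segment_dist_le hK (a := u) (b := v) (by simp) (by simp)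
    hΓ hw
  have hsuv := hΓ.dist_add_dist hs
  have huw := dist_triangle (ofVertex hX u) s (ofVertex hX w)
  have hwv := dist_triangle_left (ofVertex hX w) (ofVertex hX v) s
  linarith

end StrongProjectionSystem

namespace IsSeparatingChain

open GraphRealization

variable {f f' : ℕ → V}

theorem dist_sub_le_gprod (hf : IsSeparatingChain d K f) (h : StrongProjectionSystem G d θ)
    (hK : 2 * θ ≤ K) (hX : (projectionGraph d K).Connected) {n m : ℕ} (hnm : n ≤ m) :
    dist (ofVertex hX (f 0)) (ofVertex hX (f n)) - 7 ≤
      gprod (ofVertex hX (f 0)) (ofVertex hX (f n)) (ofVertex hX (f m)) := by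
  have hle : dist (ofVertex hX (f 0)) (ofVertex hX (f n)) +
      dist (ofVertex hX (f n)) (ofVertex hX (f m)) ≤
        dist (ofVertex hX (f 0)) (ofVertex hX (f m)) + 14 := by
    rcases hnm.eq_or_lt with rfl | hlt
    · simp
    rcases n.eq_zero_or_pos with rfl | hn
    · simp
    exact h.dist_add_dist_ofVertex_le hK hX ((show θ ≤ K by lia).trans_lt
      (hf.mem_between h (show θ ≤ K by lia) hn hlt))
  unfold gprod
  rw [dist_comm _ (ofVertex hX (f 0)), dist_comm _ (ofVertex hX (f 0))]
  linarith

theorem convToInfty (hf : IsSeparatingChain d K f) (h : StrongProjectionSystem G d θ)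
    (hK : 2 * θ ≤ K) (hX : (projectionGraph d K).Connected) :
    ConvToInfty (ofVertex hX (f 0)) fun n => ofVertex hX (f n) := by
  rw [convToInfty_iff_forall_eventuallyClose]
  intro R
  obtain ⟨N, hN⟩ := exists_nat_ge (2 * R + 15)
  have hle {n m : ℕ} (hn : N ≤ n) (hnm : n ≤ m) :
      R ≤ gprod (ofVertex hX (f 0)) (ofVertex hX (f n)) (ofVertex hX (f m)) := by
    have hgprod := hf.dist_sub_le_gprod h hK hX hnm
    rw [dist_ofVertex] at hgprod
    have hfar : (N : ℝ) ≤ 2 * (projectionGraph d K).dist (f 0) (f n) + 1 := by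
      exact_mod_cast hn.trans (hf.le_two_mul_dist_add_one h hK n)
    linarith
  refine ⟨N, fun n hn m hm => ?_⟩
  rcases le_total n m with hnm | hmn
  · exact hle hn hnm
  · rw [gprod_comm]
    exact hle hm hmn

theorem gprod_le (hf : IsSeparatingChain d K f) (hf' : IsSeparatingChain d K f')
    (h : StrongProjectionSystem G d θ) (hK : 2 * θ ≤ K) (hX : (projectionGraph d K).Connected)
    (h₀ : f' 0 = f 0) (h₁ : K < d (f 0) (f 1) (f' 1)) {n m : ℕ} (hn : 0 < n) (hm : 0 < m) :
    gprod (ofVertex hX (f 0)) (ofVertex hX (f n)) (ofVertex hX (f' m)) ≤ 7 := by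
  obtain ⟨n, rfl⟩ := Nat.exists_eq_add_of_lt hn
  obtain ⟨m, rfl⟩ := Nat.exists_eq_add_of_lt hm
  have hproj := hf.projection_eq_succ h (show θ ≤ K by lia) 0 n (f' 1)
  have hproj' := hf'.projection_eq_succ h (show θ ≤ K by lia) 0 m (f (0 + n + 1))
  rw [h₀, h.comm, h.comm _ (f' (0 + 1))] at hproj'
  have hle := h.dist_add_dist_ofVertex_le hK hX (u := f (0 + n + 1)) (v := f' (0 + m + 1))
    (w := f 0) (by rw [hproj', hproj]; lia)
  unfold gprod
  rw [dist_comm (ofVertex hX (f' _))]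
  linarith

end IsSeparatingChain

/-- The chain `Y₀, Y₁, w • Y₀, w • Y₁, w ^ 2 • Y₀, …`. -/
def alternatingChain (w : G) (Y₀ Y₁ : V) (n : ℕ) : V :=
  w ^ (n / 2) • if Even n then Y₀ else Y₁

theorem alternatingChain_two_mul (w : G) (Y₀ Y₁ : V) (n : ℕ) :
    alternatingChain w Y₀ Y₁ (2 * n) = w ^ n • Y₀ := by
  simp [alternatingChain]

theorem alternatingChain_two_mul_add_one (w : G) (Y₀ Y₁ : V) (n : ℕ) :
    alternatingChain w Y₀ Y₁ (2 * n + 1) = w ^ n • Y₁ := by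
  simp [alternatingChain, show (2 * n + 1) / 2 = n by lia]

theorem StrongProjectionSystem.isSeparatingChain_alternatingChain
    (h : StrongProjectionSystem G d θ) {a b : G} {Y₀ Y₁ : V} (ha : a • Y₀ = Y₀)
    (hb : b • Y₁ = Y₁) (hY₀ : K < d Y₀ Y₁ (a • Y₁)) (hY₁ : K < d Y₁ Y₀ (b • Y₀)) :
    IsSeparatingChain d K (alternatingChain (b * a) Y₀ Y₁) := by
  intro j
  rcases Nat.even_or_odd' j with ⟨n, rfl | rfl⟩
  · rwa [alternatingChain_two_mul, alternatingChain_two_mul_add_one,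
      show 2 * n + 2 = 2 * (n + 1) by ring, alternatingChain_two_mul, pow_succ, mul_smul, h.smul,
      mul_smul, ha]
  · have hb' : b⁻¹ • Y₁ = Y₁ := inv_smul_eq_iff.2 hb.symm
    rw [alternatingChain_two_mul_add_one, show 2 * n + 1 + 1 = 2 * (n + 1) by ring,
      alternatingChain_two_mul, show 2 * n + 1 + 2 = 2 * (n + 1) + 1 by ring,
      alternatingChain_two_mul_add_one, pow_succ, mul_smul _ _ Y₀, mul_smul _ _ Y₁, h.smul,
      mul_smul b a Y₀, mul_smul b a Y₁, ha, ← h.smul b⁻¹]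
    simpa only [inv_smul_smul, hb'] using hY₀

theorem StrongProjectionSystem.exists_isSeparatingChain_smul
    (h : StrongProjectionSystem G d θ) {a b : G} {Y₀ Y₁ : V} (ha : a • Y₀ = Y₀)
    (hb : b • Y₁ = Y₁) (hY₀ : K < d Y₀ Y₁ (a • Y₁)) (hY₁ : K < d Y₁ Y₀ (b • Y₀)) :
    ∃ f : ℕ → ℕ → V, (∀ i, IsSeparatingChain d K (f i)) ∧ (∀ i, f i 0 = Y₀) ∧
      (∀ i, f i 1 = a ^ i • Y₁) ∧ ∀ i n, f i (2 * n) = (a ^ i * (b * a) ^ n) • Y₀ := by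
  refine ⟨fun i n => a ^ i • alternatingChain (b * a) Y₀ Y₁ n,
    fun i => (h.isSeparatingChain_alternatingChain ha hb hY₀ hY₁).smul h _,
    fun i => ?_, fun i => ?_, fun i n => by beta_reduce; rw [alternatingChain_two_mul, mul_smul]⟩
  · have hchain := alternatingChain_two_mul (b * a) Y₀ Y₁ 0
    rw [mul_zero, pow_zero, one_smul] at hchain
    beta_reduce
    rw [hchain]
    exact (MulAction.stabilizer G Y₀).pow_mem ha i
  · have hchain := alternatingChain_two_mul_add_one (b * a) Y₀ Y₁ 0
    rw [mul_zero, zero_add, pow_zero, one_smul] at hchain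
    beta_reduce
    rw [hchain]

open GraphRealization in
/-- If `a` fixes `Y₀` and `b` fixes `Y₁`, and both rotate by a large angle, then `b * a` translates
along `alternatingChain`, whose images under `1`, `a` and `a ^ 2` have distinct limit points. -/
theorem StrongProjectionSystem.nonelemAction (h : StrongProjectionSystem G d θ) (hK : 2 * θ ≤ K)
    [IsGraphAction G (projectionGraph d K)] (hX : (projectionGraph d K).Connected) {a b : G}
    {Y₀ Y₁ : V} (ha : a • Y₀ = Y₀) (hb : b • Y₁ = Y₁) (hY₀ : K < d Y₀ Y₁ (a • Y₁))
    (hY₀' : K < d Y₀ Y₁ (a • a • Y₁)) (hY₁ : K < d Y₁ Y₀ (b • Y₀)) :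
    NonelemAction (fun (g : G) (x : GraphRealization hX) => g • x)
      (ofVertex hX Y₀) := by
  have hD := (h.deltaHyperbolic hK hX).fourPointHyperbolic (by norm_num)
    (geodesicSpace hX)
  obtain ⟨f, hf, hf₀, hf₁, hf_even⟩ := h.exists_isSeparatingChain_smul ha hb hY₀ hY₁
  have hconv (i : ℕ) : ConvToInfty (ofVertex hX Y₀) fun n => ofVertex hX (f i (2 * n)) := by
    have hconv := (hf i).convToInfty h hK hX
    rw [hf₀] at hconv
    exact hconv.comp (Filter.tendsto_atTop_mono (fun n => show n ≤ 2 * n by lia) tendsto_id)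
  let β (i : ℕ) : BSeq (GraphRealization hX) (ofVertex hX Y₀) := ⟨_, hconv i⟩
  have hlim (i : ℕ) : Quot.mk _ (β i) ∈
      limitSet (fun (g : G) (x : GraphRealization hX) => g • x) _ := by
    refine ⟨ofVertex hX Y₀, fun n => a ^ i * (b * a) ^ n, ?_⟩
    simp only [smul_ofVertex, ← hf_even]
    exact ⟨hconv i, rfl⟩
  have hne (i j : ℕ) (hij : K < d Y₀ (a ^ i • Y₁) (a ^ j • Y₁)) :
      Quot.mk (bequiv _) (β i) ≠ Quot.mk (bequiv _) (β j) := by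
    refine hD.gBoundary_mk_ne_mk (C := 7) (eventually_atTop.2 ⟨1, fun k hk => ?_⟩)
    have hle := (hf i).gprod_le (hf j) h hK hX ((hf₀ j).trans (hf₀ i).symm)
      (by rwa [hf₀, hf₁, hf₁]) (n := 2 * k) (m := 2 * k) (by lia) (by lia)
    rwa [hf₀] at hle
  refine ⟨_, _, _, hlim 0, hlim 1, hlim 2, hne 0 1 ?_, hne 1 2 ?_, hne 0 2 ?_⟩
  · simpa using hY₀
  · rw [← h.smul a, ha] at hY₀
    simpa [pow_two, mul_smul] using hY₀
  · simpa [pow_two, mul_smul] using hY₀'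

theorem ProjectionSystem.acylindricallyHyperbolic {V : Type} [MulAction G V] {d : V → V → V → ℕ}
    (h : ProjectionSystem G d θ) {B : ℕ}
    (hB : ∀ W Z : V, W ≠ Z → (MulAction.stabilizer G (W, Z) : Set G).encard ≤ B) {a b : G}
    {Y₀ Y₁ : V} (ha : a • Y₀ = Y₀) (hb : b • Y₁ = Y₁) (hY₀ : 28 * θ < d Y₀ Y₁ (a • Y₁))
    (hY₀' : 28 * θ < d Y₀ Y₁ (a • a • Y₁)) (hY₁ : 28 * θ < d Y₁ Y₀ (b • Y₀)) :
    AcylindricallyHyperbolic G := by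
  have hs := h.strongProjectionSystem
  have hK : 2 * (14 * θ) ≤ 28 * θ := by lia
  have : Nonempty V := ⟨Y₀⟩
  have hX := hs.connected_projectionGraph (show 14 * θ ≤ 28 * θ by lia)
  have := hs.isGraphAction (28 * θ)
  have hle (Y X Z : V) : d Y X Z ≤ strongDist d (10 * θ) Y X Z :=
    h.le_strongDist (.refl X) (.refl Z)
  exact ⟨GraphRealization hX, inferInstance, fun g x => g • x, 29, by norm_num,
    GraphRealization.geodesicSpace hX, hs.deltaHyperbolic hK hX,
    ⟨⟨one_smul G, mul_smul⟩, isometry_smul _⟩, hs.acylindricalAction hK hX hB, _,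
    hs.nonelemAction hK hX ha hb (hY₀.trans_le (hle _ _ _)) (hY₀'.trans_le (hle _ _ _))
      (hY₁.trans_le (hle _ _ _))⟩

end ProjectionGraphNonelementary

/-! ### Systems of walls -/

section Walls

open scoped Pointwise

variable {G : Type*} {M : Type*} [Group G] [MulAction G M]

/-- Two walls, given by their pairs of sides `A`, `A'` and `B`, `B'`, do not cross: some side of one
is disjoint from some side of the other. -/
def Uncrossed (A A' B B' : Set M) : Prop :=
  Disjoint A B ∨ Disjoint A B' ∨ Disjoint A' B ∨ Disjoint A' B'

namespace Uncrossed

variable {A A' B B' : Set M}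

theorem swap_right (h : Uncrossed A A' B B') : Uncrossed A A' B' B := by
  unfold Uncrossed at h ⊢; tauto

theorem swap_left (h : Uncrossed A A' B B') : Uncrossed A' A B B' := by
  unfold Uncrossed at h ⊢; tauto

theorem mono {C C' D D' : Set M} (h : Uncrossed A A' B B') (hA : C ⊆ A)
    (hA' : C' ⊆ A') (hB : D ⊆ B) (hB' : D' ⊆ B') : Uncrossed C C' D D' :=
  Or.imp (.mono hA hB) (Or.imp (.mono hA hB') (Or.imp (.mono hA' hB) (.mono hA' hB'))) h

theorem smul (h : Uncrossed A A' B B') (g : G) :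
    Uncrossed (g • A) (g • A') (g • B) (g • B') := by
  simpa only [Uncrossed, Set.disjoint_smul_set] using h

end Uncrossed

/-- The combinatorial shadow of north–south dynamics. Every `h : G` is a wall with negative side
`h • P` and positive side `h • Q`; the walls `t ^ j` shrink to the repelling fixed point `x` of `t`
as `j → -∞` and to the attracting one `y` as `j → ∞`, no two walls cross, and nondegenerate sets are
separated by finitely many walls only. -/
structure WallSystem (t : G) (P Q : Set M) (x y : M) : Prop where
  smul_left : t • x = x
  smul_right : t • y = y
  left_mem : x ∈ P
  right_mem : y ∈ Q
  disjoint : Disjoint P Q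
  compl_eq : Qᶜ = t • P
  uncrossed : ∀ h : G, Uncrossed P Q (h • P) (h • Q)
  exists_mem_zpow_smul_left : ∀ {m : M}, m ≠ y → ∃ j : ℤ, m ∈ t ^ j • P
  exists_mem_zpow_smul_right : ∀ {m : M}, m ≠ x → ∃ j : ℤ, m ∈ t ^ j • Q
  finite_setOf_separating : ∀ {X Z : Set M}, X.Nontrivial → Z.Nontrivial →
    {h : G | X ⊆ h • P ∧ Z ⊆ h • Q}.Finite
  exists_ne : ∃ z : M, z ≠ x ∧ z ≠ y

namespace WallSystem

variable {t : G} {P Q : Set M} {x y : M}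

theorem reverse (w : WallSystem t P Q x y) : WallSystem t⁻¹ Q P y x where
  smul_left := inv_smul_eq_iff.2 w.smul_right.symm
  smul_right := inv_smul_eq_iff.2 w.smul_left.symm
  left_mem := w.right_mem
  right_mem := w.left_mem
  disjoint := w.disjoint.symm
  compl_eq := by
    rw [← compl_compl Q, w.compl_eq, Set.smul_set_compl, inv_smul_smul]
  uncrossed h := (w.uncrossed h).swap_left.swap_right
  exists_mem_zpow_smul_left hm := by
    obtain ⟨j, hj⟩ := w.exists_mem_zpow_smul_right hm
    exact ⟨-j, by rwa [inv_zpow', neg_neg]⟩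
  exists_mem_zpow_smul_right hm := by
    obtain ⟨j, hj⟩ := w.exists_mem_zpow_smul_left hm
    exact ⟨-j, by rwa [inv_zpow', neg_neg]⟩
  finite_setOf_separating hX hZ := by
    simpa only [and_comm] using w.finite_setOf_separating hZ hX
  exists_ne := w.exists_ne.imp fun _ h => h.symm

theorem ne (w : WallSystem t P Q x y) : x ≠ y :=
  fun h => w.disjoint.notMem_of_mem_left w.left_mem (h ▸ w.right_mem)

theorem zpow_smul_left (w : WallSystem t P Q x y) (j : ℤ) : t ^ j • x = x :=
  (MulAction.stabilizer G x).zpow_mem w.smul_left j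

theorem zpow_smul_right (w : WallSystem t P Q x y) (j : ℤ) : t ^ j • y = y :=
  (MulAction.stabilizer G y).zpow_mem w.smul_right j

theorem left_mem_zpow_smul (w : WallSystem t P Q x y) (j : ℤ) : x ∈ t ^ j • P := by
  rw [← w.zpow_smul_left j, Set.smul_mem_smul_set_iff]
  exact w.left_mem

theorem right_mem_zpow_smul (w : WallSystem t P Q x y) (j : ℤ) : y ∈ t ^ j • Q := by
  rw [← w.zpow_smul_right j, Set.smul_mem_smul_set_iff]
  exact w.right_mem

theorem compl_zpow_smul (w : WallSystem t P Q x y) (j : ℤ) : (t ^ j • Q)ᶜ = t ^ (j + 1) • P := by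
  rw [← Set.smul_set_compl, w.compl_eq, smul_smul, zpow_add_one]

theorem compl_smul_zpow_smul (w : WallSystem t P Q x y) (k : G) (j : ℤ) :
    (k • t ^ j • Q)ᶜ = k • t ^ (j + 1) • P := by
  rw [← Set.smul_set_compl, w.compl_zpow_smul]

theorem monotone_zpow_smul (w : WallSystem t P Q x y) : Monotone fun j : ℤ => t ^ j • P := by
  refine monotone_int_of_le_succ fun j => ?_
  rw [← w.compl_zpow_smul, Set.subset_compl_iff_disjoint_right,
    Set.disjoint_smul_set]
  exact w.disjoint

theorem antitone_zpow_smul (w : WallSystem t P Q x y) : Antitone fun j : ℤ => t ^ j • Q := by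
  intro i j hij
  rw [← Set.compl_subset_compl, w.compl_zpow_smul, w.compl_zpow_smul]
  exact w.monotone_zpow_smul (by lia)

theorem exists_notMem_notMem (w : WallSystem t P Q x y) {m : M} (hx : m ≠ x) (hy : m ≠ y) :
    ∃ j : ℤ, m ∉ t ^ j • P ∧ m ∉ t ^ j • Q := by
  obtain ⟨i, hi⟩ := w.exists_mem_zpow_smul_right hx
  have hbdd : ∀ j : ℤ, m ∈ t ^ j • P → i ≤ j := fun j hj => by
    by_contra! hlt
    have hmem : m ∈ t ^ (i + 1) • P := w.monotone_zpow_smul (by lia : j ≤ i + 1) hj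
    rw [← w.compl_zpow_smul] at hmem
    exact hmem hi
  obtain ⟨j, hj, hmin⟩ := Int.exists_least_of_bdd ⟨i, hbdd⟩ (w.exists_mem_zpow_smul_left hy)
  refine ⟨j - 1, fun hmem => ?_, fun hmem => ?_⟩
  · have := hmin _ hmem
    lia
  · rw [← sub_add_cancel j 1, ← w.compl_zpow_smul] at hj
    exact hj hmem

theorem eq_or_eq_of_zpow_smul_eq (w : WallSystem t P Q x y) {a : ℤ} (ha : a ≠ 0) {m : M}
    (hm : t ^ a • m = m) : m = x ∨ m = y := by
  by_contra! hne
  obtain ⟨j, hjP, hjQ⟩ := w.exists_notMem_notMem hne.1 hne.2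
  rw [← Set.mem_compl_iff, w.compl_zpow_smul] at hjQ
  have hfix : ∀ b : ℤ, t ^ b • m = m → ¬ b < 0 := fun b hb hneg => by
    refine hjP (w.monotone_zpow_smul (by lia : b + (j + 1) ≤ j) ?_)
    beta_reduce
    rwa [← hb, zpow_add, mul_smul, Set.smul_mem_smul_set_iff]
  have hneg : t ^ (-a) • m = m := by rw [zpow_neg, inv_smul_eq_iff, hm]
  have := hfix a hm
  have := hfix (-a) hneg
  lia

theorem zpow_injective (w : WallSystem t P Q x y) : Function.Injective fun j : ℤ => t ^ j := by
  intro i j hij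
  by_contra hne
  obtain ⟨z, hzx, hzy⟩ := w.exists_ne
  have hfix : t ^ (i - j) • z = z := by
    rw [zpow_sub, show t ^ i = t ^ j from hij, mul_inv_cancel, one_smul]
  exact (w.eq_or_eq_of_zpow_smul_eq (sub_ne_zero.2 hne) hfix).elim hzx hzy

theorem nontrivial_left (w : WallSystem t P Q x y) : P.Nontrivial := by
  obtain ⟨z, hzx, hzy⟩ := w.exists_ne
  obtain ⟨j, hj⟩ := w.exists_mem_zpow_smul_left hzy
  refine ⟨_, Set.mem_smul_set_iff_inv_smul_mem.1 hj, x, w.left_mem, fun heq => hzx ?_⟩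
  rw [inv_smul_eq_iff.1 heq, w.zpow_smul_left]

theorem nontrivial_right (w : WallSystem t P Q x y) : Q.Nontrivial :=
  w.reverse.nontrivial_left

end WallSystem

end Walls

/-! ### Axes following each other -/

section Following

open scoped Pointwise

/-- The pairs `A₀ ⊆ A₁` and `A₂ ⊆ A₃` stand for two members of an increasing family, each weakly
comparable with all members of the family `B`. -/
theorem exists_interleaved {M : Type*} {A₀ A₁ A₂ A₃ : Set M} {B : ℤ → Set M} (hB : Monotone B)
    (h₀ : ∀ j, A₀ ⊆ B (j + 1) ∨ B j ⊆ A₁) (h₂ : ∀ j, A₂ ⊆ B (j + 1) ∨ B j ⊆ A₃)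
    (hlo : ∃ m ∈ A₀, ∃ j, m ∉ B j) (hhi : ∃ m ∉ A₁, ∃ j, m ∈ B j) :
    (∃ j, A₀ ⊆ B j ∧ B (j + 1) ⊆ A₃) ∨ ∃ j, B (j - 1) ⊆ A₁ ∧ A₂ ⊆ B (j + 3) := by
  obtain ⟨m, hm, j₀, hj₀⟩ := hlo
  obtain ⟨m', hm', j₁, hj₁⟩ := hhi
  have hbdd : ∀ j, A₀ ⊆ B (j + 1) → j₀ - 1 ≤ j := fun j hj => by
    by_contra! hlt
    exact hj₀ (hB (by lia) (hj hm))
  obtain ⟨j, hj, hmin⟩ := Int.exists_least_of_bdd ⟨j₀ - 1, hbdd⟩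
    ⟨j₁, (h₀ j₁).resolve_right fun h => hm' (h hj₁)⟩
  have hpred : B (j - 1) ⊆ A₁ := (h₀ (j - 1)).resolve_left fun h => by
    have := hmin (j - 1) h
    lia
  rcases h₂ (j + 2) with h | h
  · exact Or.inr ⟨j, hpred, by rwa [show j + 2 + 1 = j + 3 by ring] at h⟩
  · exact Or.inl ⟨j + 1, hj, by rwa [show j + 1 + 1 = j + 2 by ring]⟩

namespace WallSystem

variable {G : Type*} {M : Type*} [Group G] [MulAction G M]
  {t t' : G} {P Q P' Q' : Set M} {x y x' y' : M}

theorem subset_or_subset_of_uncrossed (w' : WallSystem t' P' Q' x' y') {g k : G}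
    (hcross : ∀ h : G, Uncrossed P Q (h • P') (h • Q')) (hx : k • x' ∈ g • P)
    (hy : k • y' ∈ g • Q) (j : ℤ) :
    g • P ⊆ k • t' ^ (j + 1) • P' ∨ k • t' ^ j • P' ⊆ (g • Q)ᶜ := by
  have hx' : k • x' ∈ k • t' ^ j • P' := Set.smul_mem_smul_set (w'.left_mem_zpow_smul j)
  have hy' : k • y' ∈ k • t' ^ j • Q' := Set.smul_mem_smul_set (w'.right_mem_zpow_smul j)
  have hunc := (hcross (g⁻¹ * k * t' ^ j)).smul g
  simp only [mul_smul, smul_inv_smul] at hunc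
  rcases hunc with h | h | h | h
  · exact (h.notMem_of_mem_left hx hx').elim
  · left
    rwa [← w'.compl_smul_zpow_smul, Set.subset_compl_iff_disjoint_right]
  · right
    rw [Set.subset_compl_iff_disjoint_right]
    exact h.symm
  · exact (h.notMem_of_mem_left hy hy').elim

/-- The walls along the axis of `k * t' * k⁻¹` interleave with the walls `1` and `t ^ 2`, so that
some wall separates two nondegenerate sets which do not depend on `k`. -/
theorem exists_zpow_separating (w : WallSystem t P Q x y) (w' : WallSystem t' P' Q' x' y')
    (hcross : ∀ h : G, Uncrossed P Q (h • P') (h • Q')) {k : G}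
    (hx : k • x' ∈ P) (hy : k • y' ∈ t ^ (2 : ℤ) • Q) :
    ∃ j : ℤ, (P ⊆ (k * t' ^ j) • P' ∧ t ^ (2 : ℤ) • Q ⊆ (k * t' ^ j) • Q') ∨
      t' ^ (-1 : ℤ) • P' ⊆ ((k * t' ^ j)⁻¹ * t) • P ∧
        t' ^ (2 : ℤ) • Q' ⊆ ((k * t' ^ j)⁻¹ * t) • Q := by
  have hxt : k • x' ∈ t ^ (2 : ℤ) • P :=
    w.monotone_zpow_smul (by norm_num : (0 : ℤ) ≤ 2) (by simpa using hx)
  have hyt : k • y' ∈ Q := by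
    simpa using w.antitone_zpow_smul (by norm_num : (0 : ℤ) ≤ 2) hy
  have hmono : Monotone fun j : ℤ => k • t' ^ j • P' :=
    fun i j hij => Set.smul_set_mono (w'.monotone_zpow_smul hij)
  have hlo : ∃ m ∈ P, ∃ j : ℤ, m ∉ k • t' ^ j • P' := by
    obtain ⟨m, hm, hne⟩ := w.nontrivial_left.exists_ne (k • x')
    obtain ⟨j, hj⟩ := w'.exists_mem_zpow_smul_right (mt inv_smul_eq_iff.1 hne)
    refine ⟨m, hm, j + 1, fun hmem => ?_⟩
    rw [Set.mem_smul_set_iff_inv_smul_mem, ← w'.compl_zpow_smul] at hmem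
    exact hmem hj
  have hhi : ∃ m ∉ Qᶜ, ∃ j : ℤ, m ∈ k • t' ^ j • P' := by
    obtain ⟨m, hm, hne⟩ := w.nontrivial_right.exists_ne (k • y')
    obtain ⟨j, hj⟩ := w'.exists_mem_zpow_smul_left (mt inv_smul_eq_iff.1 hne)
    exact ⟨m, Set.notMem_compl_iff.2 hm, j, Set.mem_smul_set_iff_inv_smul_mem.2 hj⟩
  have h₀ : ∀ j : ℤ, P ⊆ k • t' ^ (j + 1) • P' ∨ k • t' ^ j • P' ⊆ Qᶜ := fun j => by
    simpa only [one_smul] using w'.subset_or_subset_of_uncrossed (g := 1) hcross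
      (by rwa [one_smul]) (by rwa [one_smul]) j
  rcases exists_interleaved hmono h₀ (w'.subset_or_subset_of_uncrossed hcross hxt hy) hlo hhi with
    ⟨j, hlow, hhigh⟩ | ⟨j, hlow, hhigh⟩
  · refine ⟨j, Or.inl ⟨by rwa [mul_smul], ?_⟩⟩
    rwa [mul_smul, ← Set.compl_subset_compl, w'.compl_smul_zpow_smul]
  · rw [w.compl_eq] at hlow
    refine ⟨j, Or.inr ⟨?_, ?_⟩⟩ <;> rw [← Set.smul_set_subset_smul_set_iff (a := k * t' ^ j)]
    · rw [smul_smul _ _ P, mul_inv_cancel_left, mul_smul, smul_smul _ _ P', ← zpow_add]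
      exact hlow
    · rw [smul_smul _ _ Q, mul_inv_cancel_left, mul_smul, smul_smul _ _ Q', ← zpow_add,
        ← Set.compl_subset_compl, w'.compl_smul_zpow_smul, ← zpow_one t, w.compl_zpow_smul,
        add_assoc]
      exact hhigh

theorem exists_finite_forall_zpow_mem (w : WallSystem t P Q x y)
    (w' : WallSystem t' P' Q' x' y') (hcross : ∀ h : G, Uncrossed P Q (h • P') (h • Q')) :
    ∃ F : Set G, F.Finite ∧
      ∀ k : G, k • x' ∈ P → k • y' ∈ t ^ (2 : ℤ) • Q → ∃ j : ℤ, k * t' ^ j ∈ F := by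
  have hfin := w'.finite_setOf_separating w.nontrivial_left
    (w.nontrivial_right.image (MulAction.injective (t ^ (2 : ℤ))))
  have hfin' := w.finite_setOf_separating
    (w'.nontrivial_left.image (MulAction.injective (t' ^ (-1 : ℤ))))
    (w'.nontrivial_right.image (MulAction.injective (t' ^ (2 : ℤ))))
  refine ⟨_, hfin.union (hfin'.image fun h => t * h⁻¹), fun k hx hy => ?_⟩
  obtain ⟨j, hj⟩ := w.exists_zpow_separating w' hcross hx hy
  exact ⟨j, hj.imp_right fun h => ⟨_, h, by group⟩⟩

end WallSystem

theorem smul_set_pair {G M : Type*} [Group G] [MulAction G M] (g : G) (x y : M) :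
    g • ({x, y} : Set M) = {g • x, g • y} := by
  rw [← Set.image_smul, Set.image_pair]

namespace WallSystem

variable {G : Type*} {M : Type*} [Group G] [MulAction G M] {t : G} {P Q : Set M} {x y : M}

theorem zpow_smul_axis (w : WallSystem t P Q x y) (j : ℤ) :
    t ^ j • ({x, y} : Set M) = {x, y} := by
  rw [smul_set_pair, w.zpow_smul_left, w.zpow_smul_right]

theorem disjoint_zpow_smul (w : WallSystem t P Q x y) {i j : ℤ} (hij : i ≤ j) :
    Disjoint (t ^ i • P) (t ^ j • Q) := by
  rw [← Set.subset_compl_iff_disjoint_right, w.compl_zpow_smul]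
  exact w.monotone_zpow_smul (by lia)

theorem exists_finite_of_inter_nonempty (w : WallSystem t P Q x y) :
    ∃ F : Set G, F.Finite ∧ ∀ k : G, (k • ({x, y} : Set M) ∩ P).Nonempty →
      (k • ({x, y} : Set M) ∩ t ^ (2 : ℤ) • Q).Nonempty → ∃ j : ℤ, k * t ^ j ∈ F := by
  obtain ⟨F, hF, hmem⟩ := w.exists_finite_forall_zpow_mem w w.uncrossed
  obtain ⟨F', hF', hmem'⟩ :=
    w.exists_finite_forall_zpow_mem w.reverse fun h => (w.uncrossed h).swap_right
  have hdisj : Disjoint P (t ^ (2 : ℤ) • Q) := by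
    simpa using w.disjoint_zpow_smul (by norm_num : (0 : ℤ) ≤ 2)
  refine ⟨F ∪ F', hF.union hF', fun k => ?_⟩
  rw [smul_set_pair]
  rintro ⟨p, rfl | rfl, hp⟩ ⟨q, rfl | rfl, hq⟩
  · exact (hdisj.notMem_of_mem_left hp hq).elim
  · exact (hmem k hp hq).imp fun j => Or.inl
  · obtain ⟨j, hj⟩ := hmem' k hp hq
    exact ⟨-j, Or.inr (by rwa [← inv_zpow'])⟩
  · exact (hdisj.notMem_of_mem_left hp hq).elim

/-- By the pigeonhole principle, `k` conjugates a nontrivial power of `t` to a power of `t`. -/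
theorem smul_axis_eq_of_zpow_mul_mul_zpow_mem (w : WallSystem t P Q x y) {F : Finset G} {k : G}
    (hk : ∀ i ≤ F.card, ∃ j : ℤ, t ^ (-(i : ℤ)) * k * t ^ j ∈ F) :
    k • ({x, y} : Set M) = {x, y} := by
  choose! J hJ using hk
  obtain ⟨i, -, i', -, hne, heq⟩ := Finset.exists_ne_map_eq_of_card_lt_of_maps_to
    (s := Finset.range (F.card + 1)) (t := F) (by simp)
    (f := fun i : ℕ => t ^ (-(i : ℤ)) * k * t ^ J i)
    fun i hi => hJ i (Finset.mem_range_succ_iff.1 hi)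
  have hconj : t ^ ((i' : ℤ) - i) * k = k * t ^ (J i' - J i) := by
    calc t ^ ((i' : ℤ) - i) * k
        = t ^ (i' : ℤ) * (t ^ (-(i : ℤ)) * k * t ^ J i) * t ^ (-J i) := by group
      _ = t ^ (i' : ℤ) * (t ^ (-(i' : ℤ)) * k * t ^ J i') * t ^ (-J i) := by rw [heq]
      _ = k * t ^ (J i' - J i) := by group
  have hmem : ∀ m : M, (∀ j : ℤ, t ^ j • m = m) → k • m = x ∨ k • m = y := fun m hm =>
    w.eq_or_eq_of_zpow_smul_eq (a := i' - i) (by lia) (by rw [smul_smul, hconj, mul_smul, hm])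
  refine Set.eq_of_subset_of_ncard_le ?_ (Set.ncard_smul_set k _).ge
  rw [smul_set_pair]
  exact Set.pair_subset (hmem x w.zpow_smul_left) (hmem y w.zpow_smul_right)

theorem exists_forall_smul_axis_eq (w : WallSystem t P Q x y) :
    ∃ L : ℕ, ∀ k : G, (k • ({x, y} : Set M) ∩ P).Nonempty →
      (k • ({x, y} : Set M) ∩ t ^ (L : ℤ) • Q).Nonempty → k • ({x, y} : Set M) = {x, y} := by
  obtain ⟨F, hF, hmem⟩ := w.exists_finite_of_inter_nonempty
  refine ⟨hF.toFinset.card + 2, fun k hP hQ => ?_⟩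
  refine w.smul_axis_eq_of_zpow_mul_mul_zpow_mem (F := hF.toFinset) fun i hi => ?_
  simp only [Set.Finite.mem_toFinset]
  refine hmem _ ?_ ?_ <;> rw [mul_smul]
  · refine (hP.smul_set (a := t ^ (-(i : ℤ)))).mono ?_
    rw [Set.smul_set_inter]
    refine Set.inter_subset_inter_right _ ?_
    simpa using w.monotone_zpow_smul (by lia : -(i : ℤ) ≤ 0)
  · refine (hQ.smul_set (a := t ^ (-(i : ℤ)))).mono ?_
    rw [Set.smul_set_inter, smul_smul (t ^ (-(i : ℤ))) _ Q, ← zpow_add]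
    refine Set.inter_subset_inter_right _ (w.antitone_zpow_smul ?_)
    push_cast
    lia

end WallSystem

end Following

/-! ### Counting separating walls -/

section Counting

open scoped Pointwise

variable {G M : Type*} [Group G] [MulAction G M]

/-- The walls along the axis `Y`, a translate of `A`, that separate `X` from `Z`. Here `h : G`
stands for the wall with sides `h • P` and `h • Q` along the axis `h • A`. -/
def separatingWalls (G : Type*) {M : Type*} [Group G] [MulAction G M] (P Q A Y X Z : Set M) :
    Set G :=
  {h | h • A = Y ∧ (X ⊆ h • P ∧ Z ⊆ h • Q ∨ Z ⊆ h • P ∧ X ⊆ h • Q)}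

/-- The walls along the axis `Y`, a translate of `A`, that have `W` on neither side. -/
def ambiguousWalls (G : Type*) {M : Type*} [Group G] [MulAction G M] (P Q A Y W : Set M) : Set G :=
  {h | h • A = Y ∧ ¬ W ⊆ h • P ∧ ¬ W ⊆ h • Q}

theorem smul_separatingWalls (P Q A Y X Z : Set M) (g : G) :
    g • separatingWalls G P Q A Y X Z = separatingWalls G P Q A (g • Y) (g • X) (g • Z) := by
  ext h
  simp only [separatingWalls, Set.mem_smul_set_iff_inv_smul_mem (a := g) (x := h),
    Set.mem_ofPred_eq, smul_eq_mul, mul_smul, inv_smul_eq_iff, Set.subset_smul_set_iff,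
    mul_inv_rev, inv_inv]

theorem smul_ambiguousWalls (P Q A Y W : Set M) (g : G) :
    g • ambiguousWalls G P Q A Y W = ambiguousWalls G P Q A (g • Y) (g • W) := by
  ext h
  simp only [ambiguousWalls, Set.mem_smul_set_iff_inv_smul_mem (a := g) (x := h),
    Set.mem_ofPred_eq, smul_eq_mul, mul_smul, inv_smul_eq_iff, Set.subset_smul_set_iff,
    mul_inv_rev, inv_inv]

theorem separatingWalls_comm (P Q A Y X Z : Set M) :
    separatingWalls G P Q A Y X Z = separatingWalls G P Q A Y Z X :=
  Set.ext fun _ => and_congr_right fun _ => Or.comm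

theorem separatingWalls_subset (P Q A Y X W Z : Set M) :
    separatingWalls G P Q A Y X Z ⊆
      separatingWalls G P Q A Y X W ∪ separatingWalls G P Q A Y W Z ∪
        ambiguousWalls G P Q A Y W := by
  intro h
  simp only [separatingWalls, ambiguousWalls, Set.mem_union, Set.mem_ofPred_eq]
  tauto

theorem encard_le_of_forall_zpow_mem {t : G} {F S : Set G} {D : ℤ}
    (hF : ∀ h ∈ S, ∃ j : ℤ, h * t ^ j ∈ F)
    (hD : ∀ (c : G) (i j : ℤ), c * t ^ i ∈ S → c * t ^ j ∈ S → j ≤ i + D) :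
    S.encard ≤ (F ×ˢ Set.Icc (-D) D).encard := by
  have hbase : ∀ c : G, ∃ b : ℤ, ∀ j : ℤ, c * t ^ j ∈ S → j - b ∈ Set.Icc (-D) D := by
    intro c
    by_cases hb : ∃ b : ℤ, c * t ^ b ∈ S
    · obtain ⟨b, hb⟩ := hb
      refine ⟨b, fun j hj => ⟨?_, ?_⟩⟩
      · linarith [hD c j b hj hb]
      · linarith [hD c b j hb hj]
    · exact ⟨0, fun j hj => (hb ⟨j, hj⟩).elim⟩
  choose b hb using hbase
  have hsub : S ⊆ (fun p : G × ℤ => p.1 * t ^ (p.2 + b p.1)) '' (F ×ˢ Set.Icc (-D) D) := by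
    intro h hh
    obtain ⟨j, hj⟩ := hF h hh
    have hcancel : h * t ^ j * t ^ (-j) = h := by group
    exact ⟨(h * t ^ j, -j - b (h * t ^ j)), ⟨hj, hb _ _ (by rwa [hcancel])⟩, by
      simpa only [sub_add_cancel] using hcancel⟩
  exact (Set.encard_le_encard hsub).trans (Set.encard_image_le _ _)

namespace WallSystem

variable {t : G} {P Q : Set M} {x y : M}

/-- Otherwise the second axis would follow the first one for a long time. -/
theorem le_add_of_mem_ambiguousWalls (w : WallSystem t P Q x y) {L : ℕ}
    (hL : ∀ k : G, (k • ({x, y} : Set M) ∩ P).Nonempty →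
      (k • ({x, y} : Set M) ∩ t ^ (L : ℤ) • Q).Nonempty → k • ({x, y} : Set M) = {x, y})
    {k : G} (hk : k • ({x, y} : Set M) ≠ {x, y}) {c : G} {i j : ℤ}
    (hi : c * t ^ i ∈ ambiguousWalls G P Q {x, y} {x, y} (k • {x, y}))
    (hj : c * t ^ j ∈ ambiguousWalls G P Q {x, y} {x, y} (k • {x, y})) :
    j ≤ i + (L + 1) := by
  by_contra! hlt
  obtain ⟨hc, -, hi⟩ := hi
  obtain ⟨a, ha, haQ⟩ := Set.not_subset.1 hi
  obtain ⟨b, hb, hbP⟩ := Set.not_subset.1 hj.2.1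
  rw [mul_smul, w.zpow_smul_axis] at hc
  have haP : (c * t ^ (i + 1))⁻¹ • a ∈ P := by
    rwa [← Set.mem_smul_set_iff_inv_smul_mem, mul_smul, ← w.compl_smul_zpow_smul,
      Set.mem_compl_iff, smul_smul]
  have hbQ : (c * t ^ (i + 1))⁻¹ • b ∈ t ^ (L : ℤ) • Q := by
    rw [mul_smul, ← sub_add_cancel j 1, ← w.compl_smul_zpow_smul, Set.notMem_compl_iff,
      Set.mem_smul_set_iff_inv_smul_mem] at hbP
    rw [← Set.mem_smul_set_iff_inv_smul_mem, smul_smul, mul_assoc, ← zpow_add, mul_smul,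
      Set.mem_smul_set_iff_inv_smul_mem]
    exact w.antitone_zpow_smul (by lia) hbP
  have haxis := hL ((c * t ^ (i + 1))⁻¹ * k)
    ⟨_, by rw [mul_smul]; exact Set.smul_mem_smul_set ha, haP⟩
    ⟨_, by rw [mul_smul]; exact Set.smul_mem_smul_set hb, hbQ⟩
  rw [mul_smul, inv_smul_eq_iff, mul_smul, w.zpow_smul_axis, hc] at haxis
  exact hk haxis

theorem exists_finite_forall_zpow_mem_of_smul_axis_eq (w : WallSystem t P Q x y) :
    ∃ F : Set G, F.Finite ∧
      ∀ k : G, k • ({x, y} : Set M) = {x, y} → ∃ j : ℤ, k * t ^ j ∈ F := by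
  obtain ⟨F, hF, hmem⟩ := w.exists_finite_of_inter_nonempty
  refine ⟨F, hF, fun k hk => hmem k ?_ ?_⟩ <;> rw [hk]
  · exact ⟨x, Set.mem_insert _ _, w.left_mem⟩
  · exact ⟨y, Set.mem_insert_of_mem _ rfl, w.right_mem_zpow_smul 2⟩

theorem exists_encard_ambiguousWalls_le (w : WallSystem t P Q x y) :
    ∃ C : ℕ, ∀ g k : G, g • ({x, y} : Set M) ≠ k • {x, y} →
      (ambiguousWalls G P Q {x, y} (g • {x, y}) (k • {x, y})).encard ≤ C := by
  obtain ⟨L, hL⟩ := w.exists_forall_smul_axis_eq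
  obtain ⟨F, hF, hmem⟩ := w.exists_finite_forall_zpow_mem_of_smul_axis_eq
  have hfin : (F ×ˢ Set.Icc (-(L + 1) : ℤ) (L + 1)).Finite := hF.prod (Set.finite_Icc _ _)
  refine ⟨(F ×ˢ Set.Icc (-(L + 1) : ℤ) (L + 1)).ncard, fun g k hne => ?_⟩
  have hk : (g⁻¹ * k) • ({x, y} : Set M) ≠ {x, y} := by
    rw [mul_smul, Ne, inv_smul_eq_iff]
    exact hne.symm
  rw [hfin.cast_ncard_eq, ← smul_inv_smul g (k • ({x, y} : Set M)), ← smul_ambiguousWalls,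
    Set.encard_smul_set, smul_smul]
  exact encard_le_of_forall_zpow_mem (fun h hh => hmem h hh.1)
    fun c i j hi hj => w.le_add_of_mem_ambiguousWalls hL hk hi hj

theorem disjoint_smul (w : WallSystem t P Q x y) (h : G) : Disjoint (h • P) (h • Q) :=
  Set.disjoint_smul_set.2 w.disjoint

theorem separatingWalls_self (w : WallSystem t P Q x y) {X : Set M} (hX : X.Nonempty)
    (A Y : Set M) : separatingWalls G P Q A Y X X = ∅ := by
  refine Set.eq_empty_of_forall_notMem fun h hh => ?_
  obtain ⟨hP, hQ⟩ := or_self_iff.1 hh.2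
  exact hX.ne_empty (Set.subset_empty_iff.1 (w.disjoint_smul h hP hQ))

theorem separatingWalls_base (w : WallSystem t P Q x y) (Y Z : Set M) :
    separatingWalls G P Q {x, y} Y Y Z = ∅ := by
  refine Set.eq_empty_of_forall_notMem ?_
  rintro h ⟨rfl, ⟨hP, -⟩ | ⟨-, hQ⟩⟩
  · exact w.disjoint.notMem_of_mem_right w.right_mem
      (Set.smul_set_subset_smul_set_iff.1 hP (Set.mem_insert_of_mem _ rfl))
  · exact w.disjoint.notMem_of_mem_left w.left_mem
      (Set.smul_set_subset_smul_set_iff.1 hQ (Set.mem_insert _ _))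

end WallSystem

theorem not_uncrossed_of_subset {S S' T T' X Y Z : Set M} (hXS : X ⊆ S) (hXT : (X ∩ T).Nonempty)
    (hXT' : (X ∩ T').Nonempty) (hYT : Y ⊆ T) (hYS' : (Y ∩ S').Nonempty) (hZS' : Z ⊆ S')
    (hZT' : Z ⊆ T') (hZ : Z.Nonempty) : ¬ Uncrossed S S' T T' := by
  simp only [Uncrossed, not_or, Set.not_disjoint_iff_nonempty_inter]
  refine ⟨hXT.mono (Set.inter_subset_inter_left _ hXS),
    hXT'.mono (Set.inter_subset_inter_left _ hXS), ?_, hZ.mono (Set.subset_inter hZS' hZT')⟩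
  rw [Set.inter_comm]
  exact hYS'.mono (Set.inter_subset_inter_left _ hYT)

namespace WallSystem

variable {t : G} {P Q : Set M} {x y : M}

theorem smul_axis_inter_nonempty (w : WallSystem t P Q x y) (h : G) :
    (h • ({x, y} : Set M) ∩ h • P).Nonempty ∧ (h • ({x, y} : Set M) ∩ h • Q).Nonempty := by
  simp only [← Set.smul_set_inter, Set.smul_set_nonempty]
  exact ⟨⟨x, Set.mem_insert _ _, w.left_mem⟩, ⟨y, Set.mem_insert_of_mem _ rfl, w.right_mem⟩⟩

/-- If a wall along `Y` separates `X` from `Z`, then a wall along `X` separating `Y` from `Z` would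
cross it. -/
theorem separatingWalls_eq_empty (w : WallSystem t P Q x y) {X Y Z : Set M} (hZ : Z.Nonempty)
    (hY : (separatingWalls G P Q {x, y} Y X Z).Nonempty) :
    separatingWalls G P Q {x, y} X Y Z = ∅ := by
  obtain ⟨h, rfl, hh⟩ := hY
  refine Set.eq_empty_of_forall_notMem ?_
  rintro k ⟨rfl, hk⟩
  have hunc : Uncrossed (h • P) (h • Q) (k • P) (k • Q) := by
    simpa only [smul_smul, mul_inv_cancel_left] using (w.uncrossed (h⁻¹ * k)).smul h
  obtain ⟨hYP, hYQ⟩ := w.smul_axis_inter_nonempty h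
  obtain ⟨hXP, hXQ⟩ := w.smul_axis_inter_nonempty k
  rcases hh with ⟨hX, hZh⟩ | ⟨hZh, hX⟩ <;> rcases hk with ⟨hY, hZk⟩ | ⟨hZk, hY⟩
  · exact not_uncrossed_of_subset hX hXP hXQ hY hYQ hZh hZk hZ hunc
  · exact not_uncrossed_of_subset hX hXQ hXP hY hYQ hZh hZk hZ hunc.swap_right
  · exact not_uncrossed_of_subset hX hXP hXQ hY hYP hZh hZk hZ hunc.swap_left
  · exact not_uncrossed_of_subset hX hXQ hXP hY hYP hZh hZk hZ hunc.swap_left.swap_right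

end WallSystem

end Counting

/-! ### The projection system of a system of walls -/

section Axes

open scoped Pointwise

namespace WallSystem

variable {G M : Type*} [Group G] [MulAction G M] {t : G} {P Q : Set M} {x y : M}

/-- Distinct axes have no endpoint in common: otherwise infinitely many walls of one of them would
be ambiguous for the other. -/
theorem left_notMem_smul_axis (w : WallSystem t P Q x y) {k : G}
    (hk : k • ({x, y} : Set M) ≠ {x, y}) : x ∉ k • ({x, y} : Set M) := by
  intro hx
  obtain ⟨C, hC⟩ := w.exists_encard_ambiguousWalls_le
  have hfin := Set.finite_of_encard_le_coe (hC 1 k (by rw [one_smul]; exact hk.symm))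
  rw [one_smul] at hfin
  have hnontriv : (k • ({x, y} : Set M)).Nontrivial :=
    (Set.nontrivial_pair w.ne).image (MulAction.injective k)
  obtain ⟨b, hb, hne⟩ := hnontriv.exists_ne x
  obtain ⟨i, hi⟩ := w.exists_mem_zpow_smul_right hne
  refine Set.infinite_of_injective_forall_mem (f := fun n : ℕ => t ^ (i - n : ℤ)) ?_ ?_ hfin
  · intro n m hnm
    have := w.zpow_injective hnm
    lia
  · intro n
    have hbQ : b ∈ t ^ (i - n : ℤ) • Q := w.antitone_zpow_smul (by lia) hi
    have hdisj := w.disjoint_smul (t ^ (i - n : ℤ))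
    exact ⟨w.zpow_smul_axis _, fun h => hdisj.notMem_of_mem_left (h hb) hbQ,
      fun h => hdisj.notMem_of_mem_left (w.left_mem_zpow_smul _) (h hx)⟩

theorem right_notMem_smul_axis (w : WallSystem t P Q x y) {k : G}
    (hk : k • ({x, y} : Set M) ≠ {x, y}) : y ∉ k • ({x, y} : Set M) := by
  rw [Set.pair_comm] at hk ⊢
  exact w.reverse.left_notMem_smul_axis hk

theorem nonempty_ambiguousWalls (w : WallSystem t P Q x y) {g k : G}
    (hne : g • ({x, y} : Set M) ≠ k • {x, y}) :
    (ambiguousWalls G P Q {x, y} (g • {x, y}) (k • {x, y})).Nonempty := by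
  have hk : (g⁻¹ * k) • ({x, y} : Set M) ≠ {x, y} := by
    rw [mul_smul, Ne, inv_smul_eq_iff]
    exact hne.symm
  rw [← smul_inv_smul g (k • ({x, y} : Set M)), ← smul_ambiguousWalls, Set.smul_set_nonempty,
    smul_smul]
  have hmem : (g⁻¹ * k) • x ∈ (g⁻¹ * k) • ({x, y} : Set M) :=
    Set.smul_mem_smul_set (Set.mem_insert _ _)
  obtain ⟨j, hjP, hjQ⟩ := w.exists_notMem_notMem
    (ne_of_mem_of_not_mem hmem (w.left_notMem_smul_axis hk))
    (ne_of_mem_of_not_mem hmem (w.right_notMem_smul_axis hk))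
  exact ⟨t ^ j, w.zpow_smul_axis j, fun h => hjP (h hmem), fun h => hjQ (h hmem)⟩

/-- The common stabilizer of two axes acts freely on the walls along one of them which are ambiguous
for the other. -/
theorem encard_stabilizer_le (w : WallSystem t P Q x y) {C : ℕ}
    (hC : ∀ g k : G, g • ({x, y} : Set M) ≠ k • {x, y} →
      (ambiguousWalls G P Q {x, y} (g • {x, y}) (k • {x, y})).encard ≤ C)
    {X Z : MulAction.orbit G ({x, y} : Set M)} (hne : X ≠ Z) :
    (MulAction.stabilizer G (X, Z) : Set G).encard ≤ C := by
  obtain ⟨_, g, rfl⟩ := X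
  obtain ⟨_, k, rfl⟩ := Z
  have hgk : g • ({x, y} : Set M) ≠ k • {x, y} := fun h => hne (Subtype.ext h)
  obtain ⟨h₀, hh₀⟩ := w.nonempty_ambiguousWalls hgk
  rw [← (mul_left_injective h₀).encard_image]
  refine (Set.encard_le_encard ?_).trans (hC g k hgk)
  rintro _ ⟨f, hf, rfl⟩
  obtain ⟨hX, hZ⟩ := Prod.ext_iff.1 (MulAction.mem_stabilizer_iff.1 hf)
  have hX' : f • g • ({x, y} : Set M) = g • {x, y} := congrArg Subtype.val hX
  have hZ' : f • k • ({x, y} : Set M) = k • {x, y} := congrArg Subtype.val hZ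
  rw [← hX', ← hZ', ← smul_ambiguousWalls]
  exact Set.smul_mem_smul_set hh₀

theorem eventually_subset_zpow_smul_right (w : WallSystem t P Q x y) {W : Set M} (hW : W.Finite)
    (hx : x ∉ W) : ∀ᶠ j : ℤ in Filter.atBot, W ⊆ t ^ j • Q := by
  refine (Filter.eventually_all_finite hW).2 fun m hm => ?_
  obtain ⟨i, hi⟩ := w.exists_mem_zpow_smul_right (ne_of_mem_of_not_mem hm hx)
  exact (Filter.eventually_le_atBot i).mono fun j hj => w.antitone_zpow_smul hj hi

theorem eventually_subset_zpow_smul_left (w : WallSystem t P Q x y) {W : Set M} (hW : W.Finite)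
    (hy : y ∉ W) : ∀ᶠ j : ℤ in Filter.atTop, W ⊆ t ^ j • P := by
  refine (Filter.eventually_all_finite hW).2 fun m hm => ?_
  obtain ⟨i, hi⟩ := w.exists_mem_zpow_smul_left (ne_of_mem_of_not_mem hm hy)
  exact (Filter.eventually_ge_atTop i).mono fun j hj => w.monotone_zpow_smul hj hi

theorem finite_setOf_separating_or (w : WallSystem t P Q x y) {X Z : Set M} (hX : X.Nontrivial)
    (hZ : Z.Nontrivial) :
    {h : G | X ⊆ h • P ∧ Z ⊆ h • Q ∨ Z ⊆ h • P ∧ X ⊆ h • Q}.Finite :=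
  (w.finite_setOf_separating hX hZ).union (w.finite_setOf_separating hZ hX)

theorem eventually_le_ncard_separatingWalls (w : WallSystem t P Q x y) {W : Set M} (hW : W.Finite)
    (hnontriv : W.Nontrivial) (hx : x ∉ W) (hy : y ∉ W) (N : ℕ) :
    ∀ᶠ n : ℕ in Filter.atTop,
      N ≤ (separatingWalls G P Q {x, y} {x, y} W (t ^ n • W)).ncard := by
  obtain ⟨lo, hlo⟩ := (w.eventually_subset_zpow_smul_right hW hx).exists
  obtain ⟨hi, hhi⟩ := (w.eventually_subset_zpow_smul_left hW hy).exists
  filter_upwards [Filter.eventually_ge_atTop (N + (hi - lo)).toNat] with n hn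
  have hfin : (separatingWalls G P Q {x, y} {x, y} W (t ^ n • W)).Finite :=
    (w.finite_setOf_separating_or hnontriv (hnontriv.image (MulAction.injective (t ^ n)))).subset
      fun h hh => hh.2
  have hsub : (fun j : ℤ => t ^ j) '' Set.Ico hi (hi + N) ⊆
      separatingWalls G P Q {x, y} {x, y} W (t ^ n • W) := by
    rintro _ ⟨j, ⟨hj, hjN⟩, rfl⟩
    refine ⟨w.zpow_smul_axis j, Or.inl ⟨hhi.trans (w.monotone_zpow_smul hj), ?_⟩⟩
    refine (Set.smul_set_mono hlo).trans ?_
    rw [← zpow_natCast, smul_smul, ← zpow_add]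
    exact w.antitone_zpow_smul (by lia)
  calc N = ((fun j : ℤ => t ^ j) '' Set.Ico hi (hi + N)).ncard := by
        rw [Set.ncard_image_of_injective _ w.zpow_injective, ← Finset.coe_Ico,
          Set.ncard_coe_finset, Int.card_Ico, add_sub_cancel_left, Int.toNat_natCast]
    _ ≤ _ := Set.ncard_le_ncard hsub hfin

end WallSystem

/-- The projection distance on the set of axes: the number of walls along `Y` that separate `X` from
`Z`, increased by a constant `C` which makes up for the walls that are ambiguous for a third axis in
the triangle inequality. -/
noncomputable def wallDistance {G M : Type*} [Group G] [MulAction G M] {A : Set M} (P Q : Set M)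
    (C : ℕ) (Y X Z : MulAction.orbit G A) : ℕ :=
  (separatingWalls G P Q A (Y : Set M) X Z).ncard + C

namespace WallSystem

variable {G M : Type*} [Group G] [MulAction G M] {t : G} {P Q : Set M} {x y : M}

theorem nontrivial_axis (w : WallSystem t P Q x y) (X : MulAction.orbit G ({x, y} : Set M)) :
    (X : Set M).Nontrivial := by
  obtain ⟨_, g, rfl⟩ := X
  exact (Set.nontrivial_pair w.ne).image (MulAction.injective g)

theorem finite_separatingWalls (w : WallSystem t P Q x y)
    (Y X Z : MulAction.orbit G ({x, y} : Set M)) :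
    (separatingWalls G P Q {x, y} (Y : Set M) X Z).Finite :=
  (w.finite_setOf_separating_or (w.nontrivial_axis X) (w.nontrivial_axis Z)).subset
    fun _ hh => hh.2

theorem wallDistance_triangle (w : WallSystem t P Q x y) {C : ℕ}
    (hC : ∀ g k : G, g • ({x, y} : Set M) ≠ k • {x, y} →
      (ambiguousWalls G P Q {x, y} (g • {x, y}) (k • {x, y})).encard ≤ C)
    (Y X W Z : MulAction.orbit G ({x, y} : Set M)) (hne : W ≠ Y) :
    wallDistance P Q C Y X Z ≤ wallDistance P Q C Y X W + wallDistance P Q C Y W Z := by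
  obtain ⟨g, hg⟩ := Y.2
  obtain ⟨k, hk⟩ := W.2
  have hamb : (ambiguousWalls G P Q {x, y} (Y : Set M) W).encard ≤ C := by
    rw [← hg, ← hk]
    exact hC g k fun h => hne (Subtype.ext (hk.symm.trans (h.symm.trans hg)))
  have hfin := Set.finite_of_encard_le_coe hamb
  rw [← hfin.cast_ncard_eq, Nat.cast_le] at hamb
  have hle := (Set.ncard_le_ncard (separatingWalls_subset P Q {x, y} (Y : Set M) X W Z)
    (((w.finite_separatingWalls Y X W).union (w.finite_separatingWalls Y W Z)).union hfin)).trans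
      ((Set.ncard_union_le _ _).trans (Nat.add_le_add_right (Set.ncard_union_le _ _) _))
  unfold wallDistance
  lia

theorem nonempty_separatingWalls_of_lt {C : ℕ} {Y X Z : MulAction.orbit G ({x, y} : Set M)}
    (h : C < wallDistance P Q C Y X Z) :
    (separatingWalls G P Q {x, y} (Y : Set M) X Z).Nonempty :=
  Set.nonempty_of_ncard_ne_zero fun h0 => by simp [wallDistance, h0] at h

theorem projectionSystem (w : WallSystem t P Q x y) {C : ℕ}
    (hC : ∀ g k : G, g • ({x, y} : Set M) ≠ k • {x, y} →
      (ambiguousWalls G P Q {x, y} (g • {x, y}) (k • {x, y})).encard ≤ C) :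
    ProjectionSystem G (V := MulAction.orbit G ({x, y} : Set M)) (wallDistance P Q C) C where
  comm Y X Z := by rw [wallDistance, separatingWalls_comm, wallDistance]
  triangle := w.wallDistance_triangle hC
  self_le Y X := by
    simp [wallDistance, w.separatingWalls_self (w.nontrivial_axis X).nonempty]
  base_le Y Z := by simp [wallDistance, w.separatingWalls_base]
  finite_setOf_lt X Z := by
    refine ((w.finite_setOf_separating_or (w.nontrivial_axis X) (w.nontrivial_axis Z)).image
      fun h => ⟨h • {x, y}, h, rfl⟩).subset fun Y hY => ?_
    obtain ⟨h, hY, hh⟩ := nonempty_separatingWalls_of_lt hY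
    exact ⟨h, hh, Subtype.ext hY⟩
  smul g Y X Z := by
    simp only [wallDistance, MulAction.orbit.coe_smul, ← smul_separatingWalls, Set.ncard_smul_set]
  behrstock hlt := by
    simp [wallDistance, w.separatingWalls_eq_empty (w.nontrivial_axis _).nonempty
      (nonempty_separatingWalls_of_lt hlt)]

theorem virtuallyCyclic_of_forall_smul_axis_eq (w : WallSystem t P Q x y)
    (h : ∀ k : G, k • ({x, y} : Set M) = {x, y}) : VirtuallyCyclic G := by
  obtain ⟨F, hF, hmem⟩ := w.exists_finite_forall_zpow_mem_of_smul_axis_eq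
  refine ⟨Subgroup.zpowers t, inferInstance, ?_⟩
  have := hF.to_subtype
  have hsurj : Function.Surjective fun f : F => (f.1 : G ⧸ Subgroup.zpowers t) := fun q => by
    induction q using QuotientGroup.induction_on with
    | H k =>
      obtain ⟨j, hj⟩ := hmem k (h k)
      exact ⟨⟨_, hj⟩, QuotientGroup.mk_mul_of_mem k ⟨j, rfl⟩⟩
  have := Finite.of_surjective _ hsurj
  exact (Subgroup.finiteIndex_of_finite_quotient (H := Subgroup.zpowers t)).index_ne_zero

/-- Large powers of `t` and of a conjugate of `t` rotate by a large amount about two distinct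
axes. -/
theorem acylindricallyHyperbolic {M : Type} [MulAction G M] {P Q : Set M} {x y : M}
    (w : WallSystem t P Q x y) (hG : ¬ VirtuallyCyclic G) : AcylindricallyHyperbolic G := by
  obtain ⟨f, hf⟩ : ∃ f : G, f • ({x, y} : Set M) ≠ {x, y} := by
    by_contra! h
    exact hG (w.virtuallyCyclic_of_forall_smul_axis_eq h)
  have hf' : f⁻¹ • ({x, y} : Set M) ≠ {x, y} := by
    rw [Ne, inv_smul_eq_iff]
    exact hf.symm
  obtain ⟨C, hC⟩ := w.exists_encard_ambiguousWalls_le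
  have hgrow : ∀ {k : G}, k • ({x, y} : Set M) ≠ {x, y} → ∀ᶠ n : ℕ in Filter.atTop,
      28 * C + 1 ≤
        (separatingWalls G P Q {x, y} {x, y} (k • {x, y}) (t ^ n • k • {x, y})).ncard :=
    fun {k} hk => w.eventually_le_ncard_separatingWalls ((Set.toFinite _).smul_set)
      ((Set.nontrivial_pair w.ne).image (MulAction.injective k))
      (w.left_notMem_smul_axis hk) (w.right_notMem_smul_axis hk) _
  have hdouble : Filter.Tendsto (fun n : ℕ => n + n) Filter.atTop Filter.atTop :=
    Filter.tendsto_id.atTop_add_atTop Filter.tendsto_id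
  obtain ⟨n, hn, hnn, hn'⟩ :=
    ((hgrow hf).and ((hdouble.eventually (hgrow hf)).and (hgrow hf'))).exists
  have hproj := w.projectionSystem hC
  let Y₀ : MulAction.orbit G ({x, y} : Set M) := ⟨{x, y}, MulAction.mem_orbit_self _⟩
  have ht : t ^ n • Y₀ = Y₀ := Subtype.ext (by simpa using w.zpow_smul_axis n)
  refine hproj.acylindricallyHyperbolic (fun X Z => w.encard_stabilizer_le hC)
    (a := t ^ n) (b := f * t ^ n * f⁻¹) (Y₀ := Y₀) (Y₁ := f • Y₀) ht ?_ ?_ ?_ ?_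
  · rw [mul_smul, mul_smul, inv_smul_smul, ht]
  · simp only [wallDistance, MulAction.orbit.coe_smul, Y₀]
    lia
  · rw [pow_add, mul_smul] at hnn
    simp only [wallDistance, MulAction.orbit.coe_smul, Y₀]
    lia
  · rw [← hproj.smul f⁻¹, inv_smul_smul, mul_assoc, mul_smul, inv_smul_smul, mul_smul]
    simp only [wallDistance, MulAction.orbit.coe_smul, Y₀]
    lia

end WallSystem

end Axes

/-! ### Walls from north–south dynamics -/

section Dynamics

open scoped Pointwise Topology

theorem CompletelyHausdorff.t2Space {M : Type*} [TopologicalSpace M] (h : CompletelyHausdorff M) :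
    T2Space M where
  t2 _ _ huv := by
    obtain ⟨U, V, hU, hV, hu, hv, hUV⟩ := h _ _ huv
    exact ⟨U, V, hU, hV, hu, hv,
      (Set.disjoint_iff_inter_eq_empty.2 hUV).mono subset_closure subset_closure⟩

theorem exists_ne_and_ne {α : Type*} (h : ∃ a b c : α, a ≠ b ∧ b ≠ c ∧ a ≠ c) (x y : α) :
    ∃ z, z ≠ x ∧ z ≠ y := by
  obtain ⟨a, b, c, hab, hbc, hac⟩ := h
  by_contra! hxy
  have (z : α) : z = x ∨ z = y := or_iff_not_imp_left.2 (hxy z)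
  grind [this a, this b, this c]

section Conditions

variable {G M : Type*} [TopologicalSpace M] {act : G → M → M} {x y : M} {U U' V V' : Set M}

theorem ConditionC.exists_isOpen_finite (hC : ConditionC act) (hxy : x ≠ y) :
    ∃ U V : Set M, IsOpen U ∧ IsOpen V ∧ x ∈ U ∧ y ∈ V ∧
      ∀ p q r s : M, p ≠ q → r ≠ s → (p, q) ≠ (r, s) →
        ∃ A B C D : Set M, (IsOpen A ∧ IsOpen B ∧ IsOpen C ∧ IsOpen D) ∧
          (p ∈ A ∧ q ∈ B ∧ r ∈ C ∧ s ∈ D) ∧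
          {g : G | (act g '' A ∩ U).Nonempty ∧ (act g '' B ∩ U).Nonempty ∧
            (act g '' C ∩ V).Nonempty ∧ (act g '' D ∩ V).Nonempty}.Finite := by
  obtain ⟨U', V', hU', hV', hxU', hyV', hUV⟩ := hC (x, x) (y, y) rfl rfl (by simp [hxy])
  obtain ⟨U, hU, hxU, hUU⟩ := exists_nhds_square (hU'.mem_nhds hxU')
  obtain ⟨V, hV, hyV, hVV⟩ := exists_nhds_square (hV'.mem_nhds hyV')
  refine ⟨U, V, hU, hV, hxU, hyV, fun p q r s hpq hrs hne => ?_⟩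
  obtain ⟨A', B', hA', hB', hpqA, hrsB, hfin⟩ := hUV (p, q) (r, s) hpq hrs hne
  obtain ⟨A, B, hA, hB, hpA, hqB, hAB⟩ := isOpen_prod_iff.1 hA' p q hpqA
  obtain ⟨C, D, hC, hD, hrC, hsD, hCD⟩ := isOpen_prod_iff.1 hB' r s hrsB
  refine ⟨A, B, C, D, ⟨hA, hB, hC, hD⟩, ⟨hpA, hqB, hrC, hsD⟩, hfin.subset ?_⟩
  rintro g ⟨⟨_, ⟨a, ha, rfl⟩, ha'⟩, ⟨_, ⟨b, hb, rfl⟩, hb'⟩, ⟨_, ⟨c, hc, rfl⟩, hc'⟩,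
    ⟨_, ⟨d, hd, rfl⟩, hd'⟩⟩
  exact ⟨⟨_, ⟨(a, b), hAB ⟨ha, hb⟩, rfl⟩, hUU ⟨ha', hb'⟩⟩,
    ⟨_, ⟨(c, d), hCD ⟨hc, hd⟩, rfl⟩, hVV ⟨hc', hd'⟩⟩⟩

theorem ConditionC.pairC1 (hC : ConditionC act) (hxy : x ≠ y) : PairC1 act x y := by
  obtain ⟨U, V, hU, hV, hxU, hyV, hfin⟩ := hC.exists_isOpen_finite hxy
  refine ⟨U, V, hU, hV, hxU, hyV, fun p q hpq => ?_⟩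
  obtain ⟨A, B, C, D, ⟨hA, hB, hC, hD⟩, ⟨hpA, hqB, hqC, hpD⟩, hfin⟩ :=
    hfin p q q p hpq hpq.symm (by simp [hpq])
  refine ⟨A ∩ D, B ∩ C, hA.inter hD, hB.inter hC, ⟨hpA, hpD⟩, ⟨hqB, hqC⟩, hfin.subset ?_⟩
  rintro g ⟨hgAU, hgDV, hgBU, hgCV⟩
  refine ⟨hgAU.mono ?_, hgBU.mono ?_, hgCV.mono ?_, hgDV.mono ?_⟩ <;> gcongr <;> simp

theorem ConditionC.pairC3 (hC : ConditionC act) (hxy : x ≠ y) : PairC3 act x y := by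
  obtain ⟨U, V, hU, hV, hxU, hyV, hfin⟩ := hC.exists_isOpen_finite hxy
  refine ⟨U, V, hU, hV, hxU, hyV, fun p q r s hpq hpr _ _ _ hrs => ?_⟩
  obtain ⟨A, B, C, D, ⟨hA, hB, hC, hD⟩, ⟨hpA, hqB, hrC, hsD⟩, hfin⟩ :=
    hfin p q r s hpq hrs (by simp [hpr])
  exact ⟨A, B, C, D, hA, hB, hC, hD, hpA, hqB, hrC, hsD, hfin⟩

theorem CondC3.mono (h : CondC3 act U V) (hU : U' ⊆ U) (hV : V' ⊆ V) : CondC3 act U' V' := by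
  intro p q r s hpq hpr hps hqr hqs hrs
  obtain ⟨A, B, C, D, hA, hB, hC, hD, hpA, hqB, hrC, hsD, hfin⟩ := h p q r s hpq hpr hps hqr hqs hrs
  refine ⟨A, B, C, D, hA, hB, hC, hD, hpA, hqB, hrC, hsD, hfin.subset ?_⟩
  rintro g ⟨hgA, hgB, hgC, hgD⟩
  refine ⟨hgA.mono ?_, hgB.mono ?_, hgC.mono ?_, hgD.mono ?_⟩ <;> gcongr

end Conditions

variable {G M : Type*} [Group G] [TopologicalSpace M] [MulAction G M] {P B : Set M} {x y : M}

theorem CondC3.finite_setOf_separating (h : CondC3 (fun (g : G) (m : M) => g • m) P B)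
    (hPB : Disjoint P B) {X Z : Set M} (hX : X.Nontrivial) (hZ : Z.Nontrivial) :
    {g : G | X ⊆ g • P ∧ Z ⊆ g • B}.Finite := by
  rcases Set.eq_empty_or_nonempty {g : G | X ⊆ g • P ∧ Z ⊆ g • B} with hempty | ⟨k, hXk, hZk⟩
  · rw [hempty]
    exact Set.finite_empty
  have hXZ : Disjoint X Z := (Set.disjoint_smul_set.2 hPB).mono hXk hZk
  obtain ⟨p, hp, q, hq, hpq⟩ := hX
  obtain ⟨r, hr, s, hs, hrs⟩ := hZ
  obtain ⟨A₁, A₂, A₃, A₄, -, -, -, -, hpA, hqA, hrA, hsA, hfin⟩ :=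
    h p q r s hpq (hXZ.ne_of_mem hp hr) (hXZ.ne_of_mem hp hs) (hXZ.ne_of_mem hq hr)
      (hXZ.ne_of_mem hq hs) hrs
  refine hfin.inv.subset fun g hg => ?_
  have hmem : ∀ {m : M} {A C : Set M}, m ∈ A → m ∈ g • C →
      ((fun m => g⁻¹ • m) '' A ∩ C).Nonempty := fun hA hC =>
    ⟨_, ⟨_, hA, rfl⟩, Set.mem_smul_set_iff_inv_smul_mem.1 hC⟩
  exact ⟨hmem hpA (hg.1 hp), hmem hqA (hg.1 hq), hmem hrA (hg.2 hr), hmem hsA (hg.2 hs)⟩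

section Uncrossed

variable [T2Space M] [ContinuousConstSMul G M]

theorem exists_mem_nhds_uncrossed (hxy : x ≠ y) (h : G) :
    ∃ A ∈ 𝓝 x, ∃ B ∈ 𝓝 y, Uncrossed A B (h • A) (h • B) := by
  by_cases hx : h • x = x
  · obtain ⟨U, V, hU, hV, hUV⟩ := t2_separation_nhds hxy
    refine ⟨h⁻¹ • U, ?_, V, hV, .inr (.inr (.inl ?_))⟩
    · rw [← inv_smul_eq_iff.2 hx.symm]
      exact smul_mem_nhds_smul _ hU
    · rw [smul_inv_smul]
      exact hUV.symm
  · obtain ⟨U, V, hU, hV, hUV⟩ := t2_separation_nhds hx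
    refine ⟨h⁻¹ • U ∩ V, Filter.inter_mem ?_ hV, Set.univ, Filter.univ_mem, .inl ?_⟩
    · rw [← inv_smul_smul h x]
      exact smul_mem_nhds_smul _ hU
    · rw [Set.smul_set_inter, smul_inv_smul]
      exact hUV.symm.mono Set.inter_subset_right Set.inter_subset_left

theorem exists_mem_nhds_forall_mem_uncrossed (hxy : x ≠ y) {F : Set G} (hF : F.Finite) :
    ∃ A ∈ 𝓝 x, ∃ B ∈ 𝓝 y, ∀ h ∈ F, Uncrossed A B (h • A) (h • B) := by
  choose A hA B hB hAB using exists_mem_nhds_uncrossed (G := G) hxy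
  refine ⟨⋂ h ∈ F, A h, (Filter.biInter_mem hF).2 fun h _ => hA h,
    ⋂ h ∈ F, B h, (Filter.biInter_mem hF).2 fun h _ => hB h, fun h hh => ?_⟩
  have hsubA := Set.biInter_subset_of_mem (t := A) hh
  have hsubB := Set.biInter_subset_of_mem (t := B) hh
  exact (hAB h).mono hsubA hsubB (Set.smul_set_mono hsubA) (Set.smul_set_mono hsubB)

/-- Condition (C₁) rules out crossings for all but finitely many translates; these are dealt with by
shrinking the neighbourhoods. -/
theorem PairC1.exists_mem_nhds_forall_uncrossed (h : PairC1 (fun (g : G) (m : M) => g • m) x y)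
    (hxy : x ≠ y) : ∃ A ∈ 𝓝 x, ∃ B ∈ 𝓝 y, ∀ h : G, Uncrossed A B (h • A) (h • B) := by
  obtain ⟨U, V, hU, hV, hxU, hyV, hUV⟩ := h
  obtain ⟨A, B, hA, hB, hxA, hyB, hfin⟩ := hUV x y hxy
  obtain ⟨A', hA', B', hB', hA'B'⟩ := exists_mem_nhds_forall_mem_uncrossed hxy hfin
  refine ⟨U ∩ A ∩ A', Filter.inter_mem ((hU.inter hA).mem_nhds ⟨hxU, hxA⟩) hA',
    V ∩ B ∩ B', Filter.inter_mem ((hV.inter hB).mem_nhds ⟨hyV, hyB⟩) hB', fun h => ?_⟩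
  have hAA' := Set.inter_subset_right (s := U ∩ A) (t := A')
  have hBB' := Set.inter_subset_right (s := V ∩ B) (t := B')
  by_cases hh : Uncrossed A' B' (h • A') (h • B')
  · exact hh.mono hAA' hBB' (Set.smul_set_mono hAA') (Set.smul_set_mono hBB')
  have hUncrossed : Uncrossed U V (h • A) (h • B) := by
    by_contra hcross
    simp only [Uncrossed, not_or, Set.not_disjoint_iff_nonempty_inter, Set.inter_comm U,
      Set.inter_comm V] at hcross
    exact hh (hA'B' h ⟨hcross.1, hcross.2.2.1, hcross.2.1, hcross.2.2.2⟩)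
  refine hUncrossed.mono ?_ ?_ (Set.smul_set_mono ?_) (Set.smul_set_mono ?_) <;> grind

end Uncrossed

namespace NorthSouthAt

theorem smul_left {g : G} (h : NorthSouthAt (fun (g : G) (m : M) => g • m) g x y) : g • x = x :=
  (h.2.1 x).2 (.inl rfl)

theorem smul_right {g : G} (h : NorthSouthAt (fun (g : G) (m : M) => g • m) g x y) : g • y = y :=
  (h.2.1 y).2 (.inr rfl)

theorem pow [T1Space M] {g : G} (h : NorthSouthAt (fun (g : G) (m : M) => g • m) g x y) {n : ℕ}
    (hn : n ≠ 0) : NorthSouthAt (fun (g : G) (m : M) => g • m) (g ^ n) x y := by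
  refine northSouthAt_of_forall_exists_image_subset h.1
    ((MulAction.stabilizer G x).pow_mem h.smul_left n)
    ((MulAction.stabilizer G y).pow_mem h.smul_right n) fun U V hU hV hxU hyV => ?_
  obtain ⟨N, hN⟩ := h.2.2 U V hU hV hxU hyV
  refine ⟨N, fun k hk => ?_⟩
  rw [← pow_mul]
  exact hN _ (hk.trans_le (Nat.le_mul_of_pos_left k (Nat.pos_of_ne_zero hn)))

theorem exists_mem_pow_smul {t : G} [T1Space M]
    (ht : NorthSouthAt (fun (g : G) (m : M) => g • m) t x y) (hP : IsOpen P) (hx : x ∈ P) {m : M}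
    (hm : m ≠ y) : ∃ n : ℕ, m ∈ t ^ n • P := by
  obtain ⟨N, hN⟩ := ht.2.2 P {m}ᶜ hP isOpen_compl_singleton hx hm.symm
  refine ⟨N + 1, Set.mem_smul_set_iff_inv_smul_mem.2 ?_⟩
  by_contra hmem
  exact hN (N + 1) N.lt_succ_self ⟨_, hmem, rfl⟩ (smul_inv_smul (t ^ (N + 1)) m)

theorem exists_pow_smul_mem {t : G} [T1Space M]
    (ht : NorthSouthAt (fun (g : G) (m : M) => g • m) t x y) (hB : IsOpen B) (hy : y ∈ B) {m : M}
    (hm : m ≠ x) : ∃ n : ℕ, t ^ n • m ∈ B := by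
  obtain ⟨N, hN⟩ := ht.2.2 {m}ᶜ B isOpen_compl_singleton hB hm.symm hy
  exact ⟨N + 1, hN (N + 1) N.lt_succ_self ⟨m, by simp, rfl⟩⟩

theorem wallSystem [T1Space M] {t : G} (ht : NorthSouthAt (fun (g : G) (m : M) => g • m) t x y)
    (hP : IsOpen P) (hB : IsOpen B) (hx : x ∈ P) (hy : y ∈ B) (hPB : Disjoint P B)
    (hsub : (t • P)ᶜ ⊆ B) (hcross : ∀ h : G, Uncrossed P B (h • P) (h • B))
    (hC3 : CondC3 (fun (g : G) (m : M) => g • m) P B) (h3 : ∃ z : M, z ≠ x ∧ z ≠ y) :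
    WallSystem t P (t • P)ᶜ x y where
  smul_left := ht.smul_left
  smul_right := ht.smul_right
  left_mem := hx
  right_mem hmem := by
    rw [← ht.smul_right, Set.smul_mem_smul_set_iff] at hmem
    exact hPB.notMem_of_mem_left hmem hy
  disjoint := hPB.mono_right hsub
  compl_eq := compl_compl _
  uncrossed h := (hcross h).mono subset_rfl hsub subset_rfl (Set.smul_set_mono hsub)
  exists_mem_zpow_smul_left hm := by
    obtain ⟨n, hn⟩ := ht.exists_mem_pow_smul hP hx hm
    exact ⟨n, by rwa [zpow_natCast]⟩
  exists_mem_zpow_smul_right hm := by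
    obtain ⟨n, hn⟩ := ht.exists_pow_smul_mem hB hy hm
    refine ⟨-n - 1, ?_⟩
    rw [← Set.smul_set_compl, smul_smul, ← zpow_add_one, sub_add_cancel, zpow_neg, zpow_natCast,
      Set.mem_inv_smul_set_iff]
    exact hPB.notMem_of_mem_right hn
  finite_setOf_separating hX hZ := (hC3.finite_setOf_separating hPB hX hZ).subset fun _ hh =>
    ⟨hh.1, hh.2.trans (Set.smul_set_mono hsub)⟩
  exists_ne := h3

theorem acylindricallyHyperbolic {M : Type} [TopologicalSpace M] [MulAction G M] [T2Space M]
    [ContinuousConstSMul G M] {x y : M} {g : G}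
    (hg : NorthSouthAt (fun (g : G) (m : M) => g • m) g x y)
    (hC1 : PairC1 (fun (g : G) (m : M) => g • m) x y)
    (hC3 : PairC3 (fun (g : G) (m : M) => g • m) x y) (h3 : ∃ z : M, z ≠ x ∧ z ≠ y)
    (hG : ¬ VirtuallyCyclic G) : AcylindricallyHyperbolic G := by
  obtain ⟨A, hA, B, hB, hcross⟩ := hC1.exists_mem_nhds_forall_uncrossed hg.1
  obtain ⟨U, V, hU, hV, hxU, hyV, hUV⟩ := hC3
  obtain ⟨U', V', hU', hV', hUV'⟩ := t2_separation_nhds hg.1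
  obtain ⟨P, hPsub, hP, hxP⟩ :=
    mem_nhds_iff.1 (Filter.inter_mem hA (Filter.inter_mem (hU.mem_nhds hxU) hU'))
  obtain ⟨Q, hQsub, hQ, hyQ⟩ :=
    mem_nhds_iff.1 (Filter.inter_mem hB (Filter.inter_mem (hV.mem_nhds hyV) hV'))
  simp only [Set.subset_inter_iff] at hPsub hQsub
  obtain ⟨N, hN⟩ := hg.2.2 P Q hP hQ hxP hyQ
  refine ((hg.pow N.succ_ne_zero).wallSystem hP hQ hxP hyQ (hUV'.mono hPsub.2.2 hQsub.2.2) ?_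
    (fun h => (hcross h).mono hPsub.1 hQsub.1 (Set.smul_set_mono hPsub.1)
      (Set.smul_set_mono hQsub.1)) (hUV.mono hPsub.2.1 hQsub.2.1) h3).acylindricallyHyperbolic hG
  rw [← Set.smul_set_compl]
  exact hN (N + 1) N.lt_succ_self

end NorthSouthAt

end Dynamics

/-- An action given as a plain function, as an instance of `MulAction`. -/
abbrev IsAction.mulAction {G M : Type*} [Group G] {act : G → M → M} (h : IsAction act) :
    MulAction G M where
  smul := act
  one_smul := h.1
  mul_smul := h.2

/-- A non-virtually-cyclic group is acylindrically hyperbolic iff it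
admits an action by homeomorphisms on a completely Hausdorff space with at least 3
points satisfying condition (C), with an element having north–south dynamics. -/
theorem statement0 {G : Type*} [Group G] (hG : ¬ VirtuallyCyclic G) :
    AcylindricallyHyperbolic G ↔
      ∃ (M : Type) (_i : TopologicalSpace M) (act : G → M → M),
        IsActionByHomeos act ∧ CompletelyHausdorff M ∧
        (∃ a b c : M, a ≠ b ∧ b ≠ c ∧ a ≠ c) ∧
        ConditionC act ∧ ∃ g : G, NorthSouth act g := by
  constructor
  · rintro ⟨S, _, act, δ, hδ, hgeo, hhyp, ⟨hact, hisom⟩, hacyl, e, hne⟩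
    let _ : MulAction G S := hact.mulAction
    have : IsIsometricSMul G S := ⟨hisom⟩
    have hD := hhyp.fourPointHyperbolic hδ hgeo
    obtain ⟨f, hf⟩ := exists_isLoxodromicAt_of_nonelemAction hD hne
    exact ⟨TopologicalBoundary hD e, inferInstance, fun g ξ => g • ξ,
      ⟨⟨one_smul G, mul_smul⟩, continuous_const_smul⟩, completelyHausdorff_of_t25Space _,
      exists_three_points_of_nonelemAction hD hne, TopologicalBoundary.conditionC hD hgeo hacyl,
      f, hf.northSouth hD⟩
  · rintro ⟨M, _, act, ⟨hact, hcont⟩, hM, h3, hC, g, x, y, hg⟩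
    let _ : MulAction G M := hact.mulAction
    have : ContinuousConstSMul G M := ⟨hcont⟩
    have := hM.t2Space
    exact NorthSouthAt.acylindricallyHyperbolic hg (hC.pairC1 hg.1) (hC.pairC3 hg.1)
      (exists_ne_and_ne h3 x y) hG
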